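/- Let h < h_star. There exists a constant c_h > 0 such that for all 0 < ε < (h_star − h)/2 and all ζ > 0, for all sufficiently large n and every x ∈ G_n with tx(B_{G_n}(x,2R_n)) = 0, one has P^{G_n}[ A_x^{G_n,h,c_h} ] ≥ η^+(h+ε) − ζ. As a consequence, liminf_{n→∞} (1/N_n)·E^{G_n}[ ∑_{x ∈ G_n} 1_{A_x^{G_n,h,c_h}} ] ≥ η^+(h) > 0. -/

import Mathlib

open MeasureTheory ProbabilityTheory Filter Set
open scoped ENNReal NNReal ENat Classical

namespace GFF

variable {V : Type*} {T : Type*}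

/-- Number of ordered adjacent pairs inside `U` (twice the number of edges of the induced
subgraph). -/
noncomputable def adjPairs (G : SimpleGraph V) (U : Set V) : ℕ :=
  Set.ncard {p : V × V | p.1 ∈ U ∧ p.2 ∈ U ∧ G.Adj p.1 p.2}

/-- `U` (assumed connected) induces a tree, i.e. has tree excess zero. -/
def TxZero (G : SimpleGraph V) (U : Set V) : Prop :=
  adjPairs G U = 2 * (Set.ncard U - 1)

/-- Closed ball of radius `R` for the graph distance. -/
def gball (G : SimpleGraph V) (x : V) (R : ℕ) : Set V := {y | G.dist x y ≤ R}

/-- Set of vertices within distance `R` of the set `A`. -/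
def sball (G : SimpleGraph V) (A : Set V) (R : ℕ) : Set V := {y | ∃ a ∈ A, G.dist a y ≤ R}

/-- Connected component containing `x` of the level set `{ω ≥ h}`. -/
def levelComp (G : SimpleGraph V) (h : ℝ) (ω : V → ℝ) (x : V) : Set V :=
  {y | ∃ p : G.Walk x y, ∀ v ∈ p.support, h ≤ ω v}

/-- `G` is `d`-regular. -/
def IsReg (G : SimpleGraph V) (d : ℕ) : Prop := ∀ v, Nat.card (G.neighborSet v) = d

/-- `G` is an infinite `d`-regular tree. -/
def IsRegTree (G : SimpleGraph V) (d : ℕ) : Prop :=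
  G.Connected ∧ G.IsAcyclic ∧ IsReg G d

/-- Transition matrix of SRW on a `d`-regular graph. -/
noncomputable def transP [Fintype V] (G : SimpleGraph V) (d : ℕ) : Matrix V V ℝ :=
  Matrix.of fun u v => if G.Adj u v then ((d : ℝ))⁻¹ else 0

/-- All non-zero eigenvalues of `I - P` are at least `β`. -/
def SpectralGapLB [Fintype V] (G : SimpleGraph V) (d : ℕ) (β : ℝ) : Prop :=
  ∀ (f : V → ℝ) (lam : ℝ),
    Matrix.mulVec ((1 : Matrix V V ℝ) - transP G d) f = lam • f → f ≠ 0 → lam = 0 ∨ β ≤ lam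

/-- `P_x[X̄_t = y]` for the continuous-time SRW with i.i.d. mean-one exponential holding
times (Poissonized jump chain). -/
noncomputable def heatK [Fintype V] (G : SimpleGraph V) (d : ℕ) (t : ℝ) (x y : V) : ℝ :=
  ∑' k : ℕ, Real.exp (-t) * t ^ k / (Nat.factorial k) * ((transP G d) ^ k) x y

/-- The zero-average Green function. -/
noncomputable def zGreen [Fintype V] (G : SimpleGraph V) (d Nn : ℕ) (x y : V) : ℝ :=
  ∫ t in Set.Ioi (0 : ℝ), (heatK G d t x y - 1 / (Nn : ℝ))

/-- Green function of SRW on the `d`-regular tree. -/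
noncomputable def treeGreen (G : SimpleGraph V) (d : ℕ) (x y : V) : ℝ :=
  (((d : ℝ) - 1) / ((d : ℝ) - 2)) * (((d : ℝ) - 1)⁻¹) ^ (G.dist x y)

/-- `μ` is the law of the centred Gaussian field with covariance `K`. -/
def IsGaussianField {I : Type*} (μ : Measure (I → ℝ)) (K : I → I → ℝ) : Prop :=
  IsProbabilityMeasure μ ∧
    ∀ c : I →₀ ℝ,
      μ.map (fun ω => ∑ i ∈ c.support, c i * ω i) =
        gaussianReal 0 (Real.toNNReal (∑ i ∈ c.support, ∑ j ∈ c.support, c i * c j * K i j))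

/-- One-step transition probability of SRW. -/
noncomputable def srwStep (G : SimpleGraph V) (d : ℕ) (u v : V) : ℝ≥0∞ :=
  if G.Adj u v then (d : ℝ≥0∞)⁻¹ else 0

/-- `W x` is the law of discrete-time SRW on `G` started at `x`. -/
def IsSRW [MeasurableSpace V] (G : SimpleGraph V) (d : ℕ) (W : V → Measure (ℕ → V)) : Prop :=
  (∀ x, IsProbabilityMeasure (W x)) ∧
    ∀ (x : V) (k : ℕ) (p : ℕ → V),
      W x {ω | ∀ i ≤ k, ω i = p i} =
        (if p 0 = x then 1 else 0) * ∏ i ∈ Finset.range k, srwStep G d (p i) (p (i + 1))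

/-- Entrance time of the set `A` (`⊤` if never entered). -/
noncomputable def hitTime (A : Set V) (ω : ℕ → V) : ℕ∞ :=
  sInf ((Nat.cast : ℕ → ℕ∞) '' {k | ω k ∈ A})

/-- Exit time of the set `U`. -/
noncomputable def exitTime (U : Set V) (ω : ℕ → V) : ℕ∞ := hitTime Uᶜ ω

/-- Position of the walk at the entrance time of `A`. -/
noncomputable def stopAt (A : Set V) (ω : ℕ → V) : V := ω (hitTime A ω).toNat

/-- `π` is a cover tree of `G` at `x`. -/
def IsCoverMap (Gt : SimpleGraph T) (G : SimpleGraph V) (o : T) (x : V) (π : T → V) : Prop :=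
  π o = x ∧ Function.Surjective π ∧ ∀ y : T, π '' (Gt.neighborSet y) = G.neighborSet (π y)

/-- `T_d^+`: the vertices of the tree whose geodesic to `o` avoids the fixed neighbour
`obar` of `o`. -/
def treePlus (Gt : SimpleGraph T) (o obar : T) : Set T :=
  {z | Gt.dist z obar = Gt.dist z o + 1}

/-- `S^+_{T_d}(o,R)`. -/
def spherePlus (Gt : SimpleGraph T) (o obar : T) (R : ℕ) : Set T :=
  {z | z ∈ treePlus Gt o obar ∧ Gt.dist o z = R}

/-- The critical value for level-set percolation on the tree (w.r.t. the law `μT`). -/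
noncomputable def hstar (Gt : SimpleGraph T) (o : T) (μT : Measure (T → ℝ)) : ℝ :=
  sInf {h : ℝ | μT {ω | (levelComp Gt h ω o).Infinite} = 0}

/-- The forward percolation probability `η⁺(h)`. -/
noncomputable def etaPlus (Gt : SimpleGraph T) (o obar : T) (μT : Measure (T → ℝ)) (h : ℝ) :
    ℝ :=
  (μT {ω | (levelComp Gt h ω o ∩ treePlus Gt o obar).Infinite}).toReal

/-- `s_n`. -/
noncomputable def sn (d Nn : ℕ) : ℕ :=
  max 1 ⌊(8 : ℝ) * Real.logb ((d : ℝ) - 1) (Real.logb ((d : ℝ) - 1) (Nn : ℝ))⌋₊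

/-- `c₀ = αβ/(d-1)`. -/
noncomputable def c0 (d : ℕ) (α β : ℝ) : ℝ := α * β / ((d : ℝ) - 1)

/-- `r_n`. -/
noncomputable def rn (d : ℕ) (α β : ℝ) (Nn : ℕ) : ℕ :=
  max 1 ⌊(c0 d α β / 18) * Real.logb ((d : ℝ) - 1) (Nn : ℝ)⌋₊

/-- `R_n`. -/
noncomputable def Rn (d : ℕ) (α β : ℝ) (Nn : ℕ) : ℕ :=
  max 1 ⌊(c0 d α β / 6) * Real.logb ((d : ℝ) - 1) (Nn : ℝ)⌋₊

/-- `F_A(x,s)`: the vertices of `B(A,s) ∖ A` connected to `x` within `B(A,s) ∖ A`. -/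
def Fset (G : SimpleGraph V) (A : Set V) (s : ℕ) (x : V) : Set V :=
  {z | ∃ p : G.Walk x z, ∀ v ∈ p.support, v ∈ sball G A s ∧ v ∉ A}

/-- Good vertex at the boundary of `A`. -/
def GoodVertex (G : SimpleGraph V) (A : Set V) (s : ℕ) (x : V) : Prop :=
  x ∉ A ∧ (∃! y, y ∈ A ∧ G.Adj x y) ∧
    TxZero G (Fset G A s x) ∧
    ∀ y : V, y ∉ A → (∃ a ∈ A, G.Adj y a) → y ≠ x →
      ∀ p : G.Walk y x, (∀ v ∈ p.support, v ∉ A) → ∃ v ∈ p.support, v ∉ sball G A s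

end GFF

set_option linter.all false
namespace GFFP
open GFF

/-! ### Analytic branching recursion -/

noncomputable def bop (n : ℕ) (ν : Measure ℝ) (h : ℝ) (v : ℝ → ℝ) : ℝ → ℝ :=
  fun a => if h ≤ a then 1 - (1 - ∫ x, v (a / n + x) ∂ν) ^ n else 0

noncomputable def vit (n : ℕ) (ν : Measure ℝ) (h t : ℝ) : ℕ → ℝ → ℝ
  | 0 => fun a => if h ≤ a then t else 0
  | l + 1 => bop n ν h (vit n ν h t l)

structure Nice (v : ℝ → ℝ) : Prop where
  mono : Monotone v
  nonneg : ∀ a, 0 ≤ v a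
  le_one : ∀ a, v a ≤ 1

section
variable {n : ℕ} {ν : Measure ℝ} [IsProbabilityMeasure ν]

lemma Nice.integrable {v : ℝ → ℝ} (hv : Nice v) (b : ℝ) :
    Integrable (fun x => v (b + x)) ν := by
  refine Integrable.of_bound (C := 1) ?_ ?_
  · exact (hv.mono.measurable.comp (measurable_const.add measurable_id)).aestronglyMeasurable
  · refine Eventually.of_forall fun x => ?_
    rw [Real.norm_eq_abs, abs_of_nonneg (hv.nonneg _)]; exact hv.le_one _

lemma Nice.int_nonneg {v : ℝ → ℝ} (hv : Nice v) (b : ℝ) : 0 ≤ ∫ x, v (b + x) ∂ν :=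
  integral_nonneg fun x => hv.nonneg _

lemma Nice.int_le_one {v : ℝ → ℝ} (hv : Nice v) (b : ℝ) : ∫ x, v (b + x) ∂ν ≤ 1 := by
  calc ∫ x, v (b + x) ∂ν ≤ ∫ x, (1 : ℝ) ∂ν :=
        integral_mono (hv.integrable b) (integrable_const _) (fun x => hv.le_one _)
    _ = 1 := by simp

lemma Nice.int_mono {v w : ℝ → ℝ} (hv : Nice v) (hw : Nice w) (hvw : ∀ a, v a ≤ w a)
    {b c : ℝ} (hbc : b ≤ c) : ∫ x, v (b + x) ∂ν ≤ ∫ x, w (c + x) ∂ν :=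
  integral_mono (hv.integrable b) (hw.integrable c)
    (fun x => (hvw _).trans (hw.mono (by linarith)))

lemma bop_le {v w : ℝ → ℝ} (hv : Nice v) (hw : Nice w) (hvw : ∀ a, v a ≤ w a)
    {h h' : ℝ} (hh : h' ≤ h) {a b : ℝ} (hab : a ≤ b) :
    bop n ν h v a ≤ bop n ν h' w b := by
  unfold bop
  have hd : a / n ≤ b / n := by gcongr
  have h1 := hv.int_mono (ν := ν) hw hvw hd
  have h2 := hw.int_le_one (ν := ν) (b / n)
  have h3 := hw.int_nonneg (ν := ν) (b / n)
  by_cases ha : h ≤ a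
  · rw [if_pos ha, if_pos (by linarith)]
    have : (1 - ∫ x, w (b / n + x) ∂ν) ^ n ≤ (1 - ∫ x, v (a / n + x) ∂ν) ^ n :=
      pow_le_pow_left₀ (by linarith) (by linarith) _
    linarith
  · rw [if_neg ha]
    split_ifs
    · have : (1 - ∫ x, w (b / n + x) ∂ν) ^ n ≤ 1 := pow_le_one₀ (by linarith) (by linarith)
      linarith
    · exact le_rfl

lemma Nice.bop {v : ℝ → ℝ} (hv : Nice v) (h : ℝ) : Nice (bop n ν h v) := by
  refine ⟨fun a b hab => bop_le hv hv (fun _ => le_rfl) le_rfl hab, fun a => ?_, fun a => ?_⟩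
  all_goals
    unfold GFFP.bop
    have h2 := hv.int_le_one (ν := ν) (a / n)
    have h3 := hv.int_nonneg (ν := ν) (a / n)
    split_ifs
  · have : (1 - ∫ x, v (a / n + x) ∂ν) ^ n ≤ 1 := pow_le_one₀ (by linarith) (by linarith)
    linarith
  · exact le_rfl
  · have : 0 ≤ (1 - ∫ x, v (a / n + x) ∂ν) ^ n := pow_nonneg (by linarith) _
    linarith
  · exact zero_le_one

lemma vit_nice (h : ℝ) {t : ℝ} (ht0 : 0 ≤ t) (ht1 : t ≤ 1) (l : ℕ) : Nice (vit n ν h t l) := by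
  induction l with
  | zero =>
    refine ⟨fun a b hab => ?_, fun a => ?_, fun a => ?_⟩
    · simp only [vit]; split_ifs <;> linarith
    · simp only [vit]; split_ifs <;> linarith
    · simp only [vit]; split_ifs <;> linarith
  | succ l ih => exact ih.bop h

lemma vit_level {h h' : ℝ} (hh : h' ≤ h) {t : ℝ} (ht0 : 0 ≤ t) (ht1 : t ≤ 1) (l : ℕ) (a : ℝ) :
    vit n ν h t l a ≤ vit n ν h' t l a := by
  induction l generalizing a with
  | zero => simp only [vit]; split_ifs <;> linarith
  | succ l ih => exact bop_le (vit_nice h ht0 ht1 l) (vit_nice h' ht0 ht1 l) ih hh le_rfl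

lemma vit_anti_one (h : ℝ) (l : ℕ) (a : ℝ) :
    vit n ν h 1 (l + 1) a ≤ vit n ν h 1 l a := by
  induction l generalizing a with
  | zero =>
    have := (vit_nice (n := n) (ν := ν) h zero_le_one le_rfl 1).le_one a
    simp only [vit] at this ⊢
    by_cases ha : h ≤ a
    · rw [if_pos ha]; exact this
    · simp [GFFP.bop, ha]
  | succ l ih =>
    exact bop_le (vit_nice h zero_le_one le_rfl _) (vit_nice h zero_le_one le_rfl _) ih le_rfl le_rfl

lemma pow_ineq {c x : ℝ} (hc0 : 0 ≤ c) (hc1 : c ≤ 1) (hx0 : 0 ≤ x) (hx1 : x ≤ 1) (k : ℕ) :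
    c * (1 - (1 - x) ^ (k + 2)) + c * (1 - c) * x ^ 2 ≤ 1 - (1 - c * x) ^ (k + 2) := by
  induction k with
  | zero => exact le_of_eq (by ring)
  | succ k ih =>
    have h1 : (1 - x) ^ (k + 2) ≤ (1 - c * x) ^ (k + 2) :=
      pow_le_pow_left₀ (by linarith) (by nlinarith) _
    have e1 : (1 - x) ^ (k + 1 + 2) = (1 - x) ^ (k + 2) * (1 - x) := by rw [← pow_succ]
    have e2 : (1 - c * x) ^ (k + 1 + 2) = (1 - c * x) ^ (k + 2) * (1 - c * x) := by
      rw [← pow_succ]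
    rw [e1, e2]
    have : 0 ≤ c * x := by positivity
    nlinarith

/-- one step of the comparison -/
lemma bop_step (hn : 2 ≤ n) {h : ℝ} {v p : ℝ → ℝ} (hv : Nice v) (hp : Nice p) {c δ : ℝ}
    (hc0 : 0 ≤ c) (hc1 : c ≤ 1) (hδ : 0 ≤ δ)
    (hδp : ∀ a, h ≤ a → δ ≤ ∫ x, p (a / n + x) ∂ν)
    (hcp : ∀ a, c * p a ≤ v a) (a : ℝ) :
    (c + δ ^ 2 * c * (1 - c)) * bop n ν h p a ≤ bop n ν h v a := by
  obtain ⟨k, rfl⟩ : ∃ k, n = k + 2 := ⟨n - 2, by omega⟩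
  unfold bop
  by_cases ha : h ≤ a
  swap
  · simp [ha]
  rw [if_pos ha, if_pos ha]
  set A := ∫ x, p (a / (k + 2 : ℕ) + x) ∂ν
  have hA0 : 0 ≤ A := hp.int_nonneg _
  have hA1 : A ≤ 1 := hp.int_le_one _
  have hAδ : δ ≤ A := hδp a ha
  have h1 : c * A ≤ ∫ x, v (a / (k + 2 : ℕ) + x) ∂ν := by
    rw [← integral_const_mul]
    exact integral_mono ((hp.integrable _).const_mul c) (hv.integrable _) (fun x => hcp _)
  have h2 := hv.int_le_one (ν := ν) (a / (k + 2 : ℕ))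
  have h3 : (1 - ∫ x, v (a / (k + 2 : ℕ) + x) ∂ν) ^ (k + 2) ≤ (1 - c * A) ^ (k + 2) :=
    pow_le_pow_left₀ (by linarith) (by linarith) _
  have h4 := pow_ineq hc0 hc1 hA0 hA1 k
  have h5 : 0 ≤ (1 - A) ^ (k + 2) := pow_nonneg (by linarith) _
  have h5' : (1 - A) ^ (k + 2) ≤ 1 := pow_le_one₀ (by linarith) (by linarith)
  have h6 : δ ^ 2 ≤ A ^ 2 := pow_le_pow_left₀ hδ hAδ 2
  have h7 : 0 ≤ c * (1 - c) := mul_nonneg hc0 (by linarith)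
  have h8 : δ ^ 2 * (c * (1 - c)) * (1 - (1 - A) ^ (k + 2)) ≤ A ^ 2 * (c * (1 - c)) := by
    calc _ ≤ δ ^ 2 * (c * (1 - c)) * 1 := by gcongr; linarith
      _ ≤ _ := by rw [mul_one]; gcongr
  nlinarith

/-- iterated comparison: if `v₀ ≥ t p₀` then `v_r ≥ (1 - 1/(t λ^r)) p_r`. -/
lemma iter_compare (hn : 2 ≤ n) {h : ℝ} (v p : ℕ → ℝ → ℝ) (hv : ∀ k, Nice (v k))
    (hp : ∀ k, Nice (p k)) (hv' : ∀ k, v (k + 1) = bop n ν h (v k))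
    (hp' : ∀ k, p (k + 1) = bop n ν h (p k)) {δ t : ℝ} (hδ : 0 ≤ δ) (hδ1 : δ ≤ 1) (ht0 : 0 < t)
    (ht1 : t ≤ 1) (hδp : ∀ k a, h ≤ a → δ ≤ ∫ x, p k (a / n + x) ∂ν)
    (h0 : ∀ a, t * p 0 a ≤ v 0 a) (r : ℕ) (a : ℝ) :
    (1 - 1 / (t * (1 + δ ^ 2) ^ r)) * p r a ≤ v r a := by
  have key : ∀ r, ∃ c, 0 < c ∧ c ≤ 1 ∧ (1 - c) * (t * (1 + δ ^ 2) ^ r) ≤ c * (1 - t) ∧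
      ∀ a, c * p r a ≤ v r a := by
    intro r
    induction r with
    | zero => exact ⟨t, ht0, ht1, by simp; linarith, h0⟩
    | succ r ih =>
      obtain ⟨c, hc0, hc1, hc, hcp⟩ := ih
      have hk0 : 0 ≤ δ ^ 2 := by positivity
      have hk1 : δ ^ 2 ≤ 1 := pow_le_one₀ hδ hδ1
      have hcc : 0 ≤ c * (1 - c) := mul_nonneg hc0.le (by linarith)
      refine ⟨c + δ ^ 2 * c * (1 - c), by nlinarith, by nlinarith, ?_, ?_⟩
      · set κ := δ ^ 2
        set X := t * (1 + κ) ^ r with hX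
        have hX0 : 0 < X := by positivity
        have e : t * (1 + κ) ^ (r + 1) = X * (1 + κ) := by rw [hX, pow_succ]; ring
        rw [e]
        have e2 : (1 - (c + κ * c * (1 - c))) = (1 - c) * (1 - κ * c) := by ring
        rw [e2]
        have hkc : 0 ≤ 1 - κ * c := by nlinarith
        calc (1 - c) * (1 - κ * c) * (X * (1 + κ))
            = ((1 - c) * X) * ((1 - κ * c) * (1 + κ)) := by ring
          _ ≤ (c * (1 - t)) * ((1 - κ * c) * (1 + κ)) := by gcongr
          _ ≤ (c * (1 - t)) * (1 + κ * (1 - c)) := by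
              have : 0 ≤ 1 - t := by linarith
              gcongr
              nlinarith [mul_nonneg (mul_nonneg hk0 hk0) hc0.le]
          _ = (c + κ * c * (1 - c)) * (1 - t) := by ring
      · intro a
        rw [hv', hp']
        exact bop_step hn (hv r) (hp r) hc0.le hc1 hδ (hδp r) hcp a
  obtain ⟨c, hc0, hc1, hc, hcp⟩ := key r
  refine le_trans ?_ (hcp a)
  have hX : 0 < t * (1 + δ ^ 2) ^ r := by positivity
  have : 1 - 1 / (t * (1 + δ ^ 2) ^ r) ≤ c := by
    have : (1 - c) ≤ 1 / (t * (1 + δ ^ 2) ^ r) := by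
      rw [le_div_iff₀ hX]; nlinarith
    linarith
  exact mul_le_mul_of_nonneg_right this ((hp r).nonneg a)

end
end GFFP

namespace GFFP
open GFF

/-! ### Generic finite Gaussian vectors -/

/-- characteristic function description of a centred Gaussian vector -/
structure IsG {I : Type} [Fintype I] (P : Measure (I → ℝ)) (q : (I → ℝ) → ℝ) : Prop where
  prob : IsProbabilityMeasure P
  cf : ∀ c : I → ℝ, ∫ f, Complex.exp (((∑ j, c j * f j : ℝ) : ℂ) * Complex.I) ∂P =
    Complex.exp (-((q c : ℝ) : ℂ) / 2)

section
variable {I : Type} [Fintype I]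

lemma dual_apply (L : StrongDual ℝ (I → ℝ)) (f : I → ℝ) :
    L f = ∑ j, L (Pi.single j 1) * f j := by
  have : f = ∑ j, f j • (Pi.single j (1 : ℝ) : I → ℝ) := by
    ext i; simp [Finset.sum_apply, Pi.single_apply]
  conv_lhs => rw [this]
  rw [map_sum]
  exact Finset.sum_congr rfl fun j _ => by rw [map_smul, smul_eq_mul, mul_comm]

lemma IsG.ext {P P' : Measure (I → ℝ)} {q q' : (I → ℝ) → ℝ} (h : IsG P q) (h' : IsG P' q')
    (hq : ∀ c, q c = q' c) : P = P' := by
  haveI := h.prob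
  haveI := h'.prob
  apply Measure.ext_of_charFunDual
  ext L
  rw [charFunDual_apply, charFunDual_apply]
  have e1 := h.cf (fun j => L (Pi.single j 1))
  have e2 := h'.cf (fun j => L (Pi.single j 1))
  simp_rw [← dual_apply] at e1 e2
  rw [e1, e2, hq]

lemma IsG.conv {P P' : Measure (I → ℝ)} {q q' : (I → ℝ) → ℝ} (h : IsG P q) (h' : IsG P' q') :
    IsG (P.conv P') (fun c => q c + q' c) := by
  haveI := h.prob
  haveI := h'.prob
  refine ⟨inferInstance, fun c => ?_⟩
  let L : StrongDual ℝ (I → ℝ) := ∑ j, c j • ContinuousLinearMap.proj j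
  have hL : ∀ f, L f = ∑ j, c j * f j := by intro f; simp [L, ContinuousLinearMap.sum_apply]
  have := charFunDual_conv (μ := P) (ν := P') L
  rw [charFunDual_apply, charFunDual_apply, charFunDual_apply] at this
  simp_rw [hL] at this
  rw [this, h.cf, h'.cf, ← Complex.exp_add]
  congr 1; push_cast; ring

lemma charFun_gauss_one (v : ℝ≥0) : ∫ x : ℝ, Complex.exp ((x : ℂ) * Complex.I) ∂(gaussianReal 0 v)
    = Complex.exp (-((v : ℝ) : ℂ) / 2) := by
  have := charFun_gaussianReal (μ := 0) (v := v) 1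
  rw [charFun_apply_real] at this
  simp only [Complex.ofReal_one, one_mul, Complex.ofReal_zero, mul_zero, zero_mul, zero_sub, one_pow,
    mul_one] at this
  rw [this]; congr 1; push_cast; ring

lemma charFun_gauss (v : ℝ≥0) (s : ℝ) :
    ∫ x : ℝ, Complex.exp (((s * x : ℝ) : ℂ) * Complex.I) ∂(gaussianReal 0 v)
    = Complex.exp (-((v * s ^ 2 : ℝ) : ℂ) / 2) := by
  have := charFun_gaussianReal (μ := 0) (v := v) s
  rw [charFun_apply_real] at this
  simp only [Complex.ofReal_one, one_mul, Complex.ofReal_zero, mul_zero, zero_mul, zero_sub, one_pow,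
    mul_one] at this
  push_cast
  rw [this]; congr 1; push_cast; ring

lemma isG_of_map {P : Measure (I → ℝ)} [IsProbabilityMeasure P] {q : (I → ℝ) → ℝ}
    (hq : ∀ c, 0 ≤ q c)
    (h : ∀ c : I → ℝ, P.map (fun f => ∑ j, c j * f j) = gaussianReal 0 (Real.toNNReal (q c))) :
    IsG P q := by
  refine ⟨inferInstance, fun c => ?_⟩
  have := charFun_gauss_one (Real.toNNReal (q c))
  rw [← h c, integral_map (Measurable.aemeasurable (by fun_prop)) (Continuous.aestronglyMeasurable (by fun_prop)), Real.coe_toNNReal _ (hq c)] at this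
  exact this

lemma IsG.map_eval {P : Measure (I → ℝ)} {q : (I → ℝ) → ℝ} (h : IsG P q) (j : I) {v : ℝ}
    (hv : 0 ≤ v) (hq : ∀ s : ℝ, q (Pi.single j s) = v * s ^ 2) :
    P.map (fun f => f j) = gaussianReal 0 (Real.toNNReal v) := by
  haveI := h.prob
  haveI : IsProbabilityMeasure (P.map (fun f : I → ℝ => f j)) :=
    Measure.isProbabilityMeasure_map (Measurable.aemeasurable (by fun_prop))
  apply Measure.ext_of_charFun
  ext s
  rw [charFun_apply_real, integral_map (Measurable.aemeasurable (by fun_prop)) (Continuous.aestronglyMeasurable (by fun_prop))]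
  have := h.cf (Pi.single j s)
  have e : ∀ f : I → ℝ, ∑ i, (Pi.single j s : I → ℝ) i * f i = s * f j := by
    intro f; simp [Pi.single_apply]
  simp_rw [e] at this
  push_cast at this
  rw [this, hq]
  have := charFun_gauss (Real.toNNReal v) s
  push_cast at this
  rw [charFun_apply_real, this, Real.coe_toNNReal _ hv]
  push_cast; rfl

lemma IsG.tail {P : Measure (I → ℝ)} {q : (I → ℝ) → ℝ} (h : IsG P q) (j : I) {v : ℝ}
    (hv : 0 ≤ v) (hq : ∀ s : ℝ, q (Pi.single j s) = v * s ^ 2) {ε : ℝ} (hε : 0 < ε) :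
    P {f | ε ≤ |f j|} ≤ ENNReal.ofReal (v / ε ^ 2) := by
  haveI := h.prob
  have hm := h.map_eval j hv hq
  have : P {f | ε ≤ |f j|} = (gaussianReal 0 (Real.toNNReal v)) {x | ε ≤ |x|} := by
    rw [← hm, Measure.map_apply (by fun_prop) (measurableSet_le (by fun_prop) (by fun_prop))]; rfl
  rw [this]
  have hc := meas_ge_le_variance_div_sq (μ := gaussianReal 0 (Real.toNNReal v)) (X := id)
    (memLp_id_gaussianReal 2) hε
  simp only [id, integral_id_gaussianReal, sub_zero] at hc
  have hvar := variance_id_gaussianReal (μ := 0) (v := Real.toNNReal v)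
  have hvar' : Var[fun x : ℝ => x; gaussianReal 0 v.toNNReal] = v := by
    rw [show (fun x : ℝ => x) = id from rfl, hvar, Real.coe_toNNReal _ hv]
  first
  | rw [hvar'] at hc; exact hc
  | (rw [hvar, Real.coe_toNNReal _ hv] at hc; exact hc)

lemma IsG.union_tail {P : Measure (I → ℝ)} {q : (I → ℝ) → ℝ} (h : IsG P q) {v : I → ℝ} {w : ℝ}
    (hv : ∀ j, 0 ≤ v j) (hw : ∀ j, v j ≤ w)
    (hq : ∀ j, ∀ s : ℝ, q (Pi.single j s) = v j * s ^ 2) {ε : ℝ} (hε : 0 < ε) :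
    P {f | ∃ j, ε ≤ |f j|} ≤ ENNReal.ofReal (Fintype.card I * (w / ε ^ 2)) := by
  have : {f : I → ℝ | ∃ j, ε ≤ |f j|} = ⋃ j ∈ (Finset.univ : Finset I), {f | ε ≤ |f j|} := by
    ext f; simp
  rw [this]
  refine (measure_biUnion_finset_le _ _).trans ?_
  calc ∑ j, P {f | ε ≤ |f j|} ≤ ∑ j : I, ENNReal.ofReal (w / ε ^ 2) := by
        refine Finset.sum_le_sum fun j _ => (h.tail j (hv j) (hq j) hε).trans ?_
        exact ENNReal.ofReal_le_ofReal (by have := hw j; gcongr)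
    _ = _ := by
        rw [Finset.sum_const, Finset.card_univ, nsmul_eq_mul,
          ENNReal.ofReal_mul (by positivity), ENNReal.ofReal_natCast]

end

/-- transport of a Gaussian field along a finite index map -/
lemma isG_of_field {I J : Type} [Fintype I] {μ : Measure (J → ℝ)} {K : J → J → ℝ}
    (hμ : IsGaussianField μ K) (τ : I → J)
    (hpos : ∀ c : I → ℝ, 0 ≤ ∑ i, ∑ j, c i * c j * K (τ i) (τ j)) :
    IsG (μ.map (fun ω i => ω (τ i))) (fun c => ∑ i, ∑ j, c i * c j * K (τ i) (τ j)) := by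
  haveI := hμ.1
  have hmeas : Measurable (fun (ω : J → ℝ) (i : I) => ω (τ i)) := by fun_prop
  haveI : IsProbabilityMeasure (μ.map (fun (ω : J → ℝ) (i : I) => ω (τ i))) :=
    Measure.isProbabilityMeasure_map hmeas.aemeasurable
  refine isG_of_map hpos fun c => ?_
  rw [Measure.map_map (by fun_prop) hmeas]
  let c' : J →₀ ℝ := ∑ i, Finsupp.single (τ i) (c i)
  have key : ∀ g : J → ℝ, ∑ i ∈ c'.support, c' i * g i = ∑ i, c i * g (τ i) := by
    intro g
    have : ∑ i ∈ c'.support, c' i * g i = c'.sum (fun i a => a * g i) := rfl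
    rw [this, ← Finsupp.sum_finset_sum_index (by simp) (by intros; ring)]
    exact Finset.sum_congr rfl fun i _ => by rw [Finsupp.sum_single_index]; simp
  have h := hμ.2 c'
  have e1 : (fun ω : J → ℝ => ∑ i ∈ c'.support, c' i * ω i) =
      (fun f : I → ℝ => ∑ j, c j * f j) ∘ (fun ω i => ω (τ i)) := by
    funext ω; exact key ω
  have e2 : ∑ i ∈ c'.support, ∑ j ∈ c'.support, c' i * c' j * K i j =
      ∑ i, ∑ j, c i * c j * K (τ i) (τ j) := by
    have : ∀ i, ∑ j ∈ c'.support, c' i * c' j * K i j = c' i * ∑ j, c j * K i (τ j) := by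
      intro i
      rw [← key, Finset.mul_sum]
      exact Finset.sum_congr rfl fun j _ => by ring
    simp_rw [this]
    rw [key]
    refine Finset.sum_congr rfl fun i _ => ?_
    rw [Finset.mul_sum]
    exact Finset.sum_congr rfl fun j _ => by ring
  rw [e1, e2] at h
  exact h

/-- Gaussian vector with prescribed positive semidefinite covariance -/
lemma exists_isG {I : Type} [Fintype I] (S : Matrix I I ℝ) (hS : S.PosSemidef) :
    ∃ P : Measure (I → ℝ), IsG P (fun c => ∑ i, ∑ j, c i * c j * S i j) := by
  let M := multivariateGaussian (0 : EuclideanSpace ℝ I) S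
  have hm : Measurable (fun x : EuclideanSpace ℝ I => (fun j => x j : I → ℝ)) := by fun_prop
  refine ⟨M.map (fun x j => x j), Measure.isProbabilityMeasure_map hm.aemeasurable, fun c => ?_⟩
  rw [integral_map hm.aemeasurable (Continuous.aestronglyMeasurable (by fun_prop))]
  have := charFun_multivariateGaussian (μ := (0 : EuclideanSpace ℝ I)) hS (WithLp.toLp 2 c)
  rw [charFun_apply] at this
  have e : ∀ x : EuclideanSpace ℝ I, inner ℝ x (WithLp.toLp 2 c) = ∑ j, c j * x j := by
    intro x
    simp [PiLp.inner_apply]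
  simp_rw [e] at this
  rw [this]
  congr 1
  simp only [Matrix.mulVec, dotProduct, Finset.mul_sum, Finset.sum_div]
  rw [inner_zero_right]
  have e2 : ∑ x, ∑ i, c x * (S x i * c i) = ∑ i, ∑ j, c i * c j * S i j :=
    Finset.sum_congr rfl fun i _ => Finset.sum_congr rfl fun j _ => by ring
  rw [e2]
  push_cast
  ring

end GFFP

namespace GFFP
open GFF

/-! ### The branching model -/

def Idx (n : ℕ) : ℕ → Type
  | 0 => Unit
  | l + 1 => Option (Fin n × Idx n l)

noncomputable def Idx.fint (n : ℕ) : ∀ l, Fintype (Idx n l)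
  | 0 => inferInstanceAs (Fintype Unit)
  | l + 1 => by
      haveI := Idx.fint n l
      exact inferInstanceAs (Fintype (Option (Fin n × Idx n l)))

noncomputable instance (n l : ℕ) : Fintype (Idx n l) := Idx.fint n l

def Om (n : ℕ) : ℕ → Type
  | 0 => Unit
  | l + 1 => Fin n → ℝ × Om n l

def Om.ms (n : ℕ) : ∀ l, MeasurableSpace (Om n l)
  | 0 => inferInstanceAs (MeasurableSpace Unit)
  | l + 1 => by
      haveI := Om.ms n l
      exact inferInstanceAs (MeasurableSpace (Fin n → ℝ × Om n l))

instance (n l : ℕ) : MeasurableSpace (Om n l) := Om.ms n l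

noncomputable def QQ (n : ℕ) (ν : Measure ℝ) : ∀ l, Measure (Om n l)
  | 0 => (Measure.dirac () : Measure Unit)
  | l + 1 => (Measure.pi (fun _ : Fin n => ν.prod (QQ n ν l)) : Measure (Fin n → ℝ × Om n l))

lemma QQ_prob (n : ℕ) (ν : Measure ℝ) [IsProbabilityMeasure ν] :
    ∀ l, IsProbabilityMeasure (QQ n ν l)
  | 0 => by
      have : IsProbabilityMeasure (Measure.dirac () : Measure Unit) := inferInstance
      exact this
  | l + 1 => by
      haveI := QQ_prob n ν l
      have : IsProbabilityMeasure
        (Measure.pi (fun _ : Fin n => ν.prod (QQ n ν l)) : Measure (Fin n → ℝ × Om n l)) :=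
        inferInstance
      exact this

instance (n l : ℕ) (ν : Measure ℝ) [IsProbabilityMeasure ν] : IsProbabilityMeasure (QQ n ν l) :=
  QQ_prob n ν l

noncomputable def fld (n : ℕ) : ∀ l, ℝ → Om n l → Idx n l → ℝ
  | 0, a, _, _ => a
  | _ + 1, a, _, none => a
  | l + 1, a, ω, some (i, j) => fld n l (a / n + (ω i).1) (ω i).2 j

/-- subfield -/
def sub {n l : ℕ} {X : Type} (f : Idx n (l + 1) → X) (i : Fin n) : Idx n l → X :=
  fun j => f (some (i, j))

noncomputable def Z {n : ℕ} (h : ℝ) : ∀ l, (Idx n l → ℝ) → ℕ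
  | 0, f => if h ≤ f () then 1 else 0
  | l + 1, f => if h ≤ f none then ∑ i, Z h l (sub f i) else 0

def Alv {n : ℕ} (h : ℝ) : ∀ l, (Idx n l → ℝ) → Idx n l → Prop
  | 0, f, _ => h ≤ f ()
  | _ + 1, _, none => False
  | l + 1, f, some (i, j) => h ≤ f none ∧ Alv h l (sub f i) j

lemma sum_idx_zero {n : ℕ} {X : Type} [AddCommMonoid X] (f : Idx n 0 → X) : ∑ j, f j = f () := by
  have : ∀ g : Unit → X, ∑ j, g j = g () := fun g => by simp
  exact this f

lemma sum_idx_succ {n l : ℕ} {X : Type} [AddCommMonoid X] (f : Idx n (l + 1) → X) :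
    ∑ j, f j = f none + ∑ i : Fin n, ∑ j, f (some (i, j)) := by
  have : ∀ g : Option (Fin n × Idx n l) → X,
      ∑ j, g j = g none + ∑ i : Fin n, ∑ j, g (some (i, j)) := fun g => by
    rw [Fintype.sum_option, Fintype.sum_prod_type]
  exact this f

lemma Z_eq {n : ℕ} (h : ℝ) : ∀ l (f : Idx n l → ℝ), Z h l f = ∑ j, if Alv h l f j then 1 else 0
  | 0, f => by rw [sum_idx_zero]; rfl
  | l + 1, f => by
      rw [sum_idx_succ]
      by_cases hf : h ≤ f none
      · have e : ∀ i : Fin n, ∀ j, (if Alv h (l+1) f (some (i, j)) then 1 else 0) =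
            if Alv h l (sub f i) j then 1 else 0 := by
          intro i j
          exact if_congr (by change (_ ∧ _) ↔ _; simp [hf]) rfl rfl
        have e0 : (if Alv h (l+1) f none then 1 else 0) = 0 := if_neg (fun h => h)
        rw [e0, zero_add]
        simp_rw [e, ← Z_eq h l]
        change (if h ≤ f none then ∑ i, Z h l (sub f i) else 0) = _
        rw [if_pos hf]
      · have e : ∀ i : Fin n, ∀ j, (if Alv h (l+1) f (some (i, j)) then 1 else 0) = 0 := by
          intro i j
          exact if_neg (fun hh => hf hh.1)
        have e0 : (if Alv h (l+1) f none then 1 else 0) = 0 := if_neg (fun h => h)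
        rw [e0, zero_add]
        simp_rw [e]
        change (if h ≤ f none then ∑ i, Z h l (sub f i) else 0) = _
        rw [if_neg hf]; simp

lemma Z_card {n : ℕ} (h : ℝ) (l) (f : Idx n l → ℝ) :
    Z h l f = {j | Alv h l f j}.ncard := by
  rw [Z_eq, Set.ncard_eq_toFinset_card']
  simp

lemma Alv_mono {n : ℕ} {h h' : ℝ} : ∀ l (f g : Idx n l → ℝ), (∀ j, h ≤ f j → h' ≤ g j) →
    ∀ j, Alv h l f j → Alv h' l g j
  | 0, f, g, hfg, _ => hfg ()
  | l + 1, f, g, hfg, none => fun h => h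
  | l + 1, f, g, hfg, some (i, j) => fun hh =>
      ⟨hfg none hh.1, Alv_mono l _ _ (fun j => hfg (some (i, j))) j hh.2⟩

lemma Z_mono {n : ℕ} {h h' : ℝ} (l) (f g : Idx n l → ℝ) (hfg : ∀ j, h ≤ f j → h' ≤ g j) :
    Z h l f ≤ Z h' l g := by
  rw [Z_card, Z_card]
  exact Set.ncard_le_ncard (fun j hj => Alv_mono l f g hfg j hj) (Set.toFinite _)

lemma Z_pos_iff {n : ℕ} (h : ℝ) (l) (f : Idx n l → ℝ) : 1 ≤ Z h l f ↔ ∃ j, Alv h l f j := by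
  rw [Z_card, Nat.one_le_iff_ne_zero, ← Nat.pos_iff_ne_zero, Set.ncard_pos (Set.toFinite _)]
  rfl

lemma measurable_Z {n : ℕ} (h : ℝ) : ∀ l, Measurable (Z (n := n) h l)
  | 0 => by
      change Measurable (fun f : Idx n 0 → ℝ => if h ≤ f () then 1 else 0)
      exact Measurable.ite (measurableSet_le measurable_const (measurable_pi_apply _))
        measurable_const measurable_const
  | l + 1 => by
      change Measurable (fun f : Idx n (l+1) → ℝ => if h ≤ f none then ∑ i, Z h l (sub f i) else 0)
      refine Measurable.ite (measurableSet_le measurable_const (measurable_pi_apply _)) ?_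
        measurable_const
      refine Finset.measurable_sum _ fun i _ => (measurable_Z h l).comp ?_
      exact measurable_pi_lambda _ fun j => measurable_pi_apply _

lemma measurable_fld (n : ℕ) : ∀ l, Measurable (fun p : ℝ × Om n l => fld n l p.1 p.2)
  | 0 => by
      refine measurable_pi_lambda _ fun j => ?_
      exact measurable_fst
  | l + 1 => by
      refine measurable_pi_lambda _ fun j => ?_
      match j with
      | none => exact measurable_fst
      | some (i, j) =>
        have h1 : Measurable (fun p : ℝ × (Fin n → ℝ × Om n l) => (p.1 / n + (p.2 i).1, (p.2 i).2)) := by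
          fun_prop
        exact (measurable_pi_apply j).comp ((measurable_fld n l).comp h1)

lemma measurable_fld' (n l : ℕ) (a : ℝ) : Measurable (fun ω : Om n l => fld n l a ω) :=
  (measurable_fld n l).comp (measurable_const.prodMk measurable_id)

/-! generating function -/
lemma gen_fun {n : ℕ} (hn : 1 ≤ n) (ν : Measure ℝ) [IsProbabilityMeasure ν] (h : ℝ) {t : ℝ}
    (ht0 : 0 ≤ t) (ht1 : t ≤ 1) : ∀ l (a : ℝ),
    ∫ ω, (1 - t) ^ (Z h l (fld n l a ω)) ∂(QQ n ν l) = 1 - vit n ν h t l a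
  | 0, a => by
      have : ∀ ω : Om n 0, (1 - t) ^ (Z h 0 (fld n 0 a ω)) = 1 - vit n ν h t 0 a := by
        intro ω
        change (1 - t) ^ (if h ≤ a then 1 else 0) = 1 - (if h ≤ a then t else 0)
        split_ifs <;> simp
      simp_rw [this]
      simp
  | l + 1, a => by
      have hb : ∀ m : ℕ, |(1 - t) ^ m| ≤ 1 := by
        intro m
        rw [abs_of_nonneg (pow_nonneg (by linarith) _)]
        exact pow_le_one₀ (by linarith) (by linarith)
      by_cases ha : h ≤ a
      swap
      · have : ∀ ω : Om n (l+1), (1 - t) ^ (Z h (l+1) (fld n (l+1) a ω)) = 1 := by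
          intro ω
          have : Z h (l+1) (fld n (l+1) a ω) = 0 := if_neg ha
          rw [this, pow_zero]
        simp_rw [this]
        simp [vit, bop, ha]
      have hv := vit_nice (n := n) (ν := ν) h ht0 ht1 l
      let F : ℝ × Om n l → ℝ := fun p => (1 - t) ^ (Z h l (fld n l (a / n + p.1) p.2))
      have e : ∀ ω : Om n (l+1), (1 - t) ^ (Z h (l+1) (fld n (l+1) a ω)) = ∏ i : Fin n, F (ω i) := by
        intro ω
        have : Z h (l+1) (fld n (l+1) a ω) = ∑ i : Fin n, Z h l (fld n l (a / n + (ω i).1) (ω i).2) :=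
          if_pos ha
        rw [this, ← Finset.prod_pow_eq_pow_sum]
      simp_rw [e]
      have hF : Measurable F := by
        have h1 : Measurable (fun p : ℝ × Om n l => (a / n + p.1, p.2)) := by fun_prop
        have h2 := (measurable_Z h l).comp ((measurable_fld n l).comp h1)
        exact (measurable_of_countable (fun m : ℕ => (1 - t) ^ m)).comp h2
      have hFi : Integrable F (ν.prod (QQ n ν l)) :=
        Integrable.of_bound hF.aestronglyMeasurable 1 (Eventually.of_forall fun p => hb _)
      have := integral_fintype_prod_eq_pow (𝕜 := ℝ) (ι := Fin n) (μ := ν.prod (QQ n ν l)) F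
      refine (Eq.trans ?_ this).trans ?_
      · rfl
      rw [integral_prod F hFi]
      simp only [F]
      simp_rw [gen_fun hn ν h ht0 ht1 l]
      rw [integral_sub (integrable_const _) (hv.integrable _)]
      simp [vit, bop, ha]

/-! characteristic function -/
noncomputable def SS {n : ℕ} : ∀ l, (Idx n l → ℝ) → ℝ
  | 0, c => c ()
  | l + 1, c => c none + ∑ i, SS l (sub c i) / n

noncomputable def VV {n : ℕ} (s : ℝ) : ∀ l, (Idx n l → ℝ) → ℝ
  | 0, _ => 0
  | l + 1, c => ∑ i, (VV s l (sub c i) + s * SS l (sub c i) ^ 2)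

lemma VV_nonneg {n : ℕ} {s : ℝ} (hs : 0 ≤ s) : ∀ l (c : Idx n l → ℝ), 0 ≤ VV s l c
  | 0, c => le_rfl
  | l + 1, c => Finset.sum_nonneg fun i _ => add_nonneg (VV_nonneg hs l _) (by positivity)

lemma fld_cf {n : ℕ} (s : ℝ≥0) : ∀ l (a : ℝ) (c : Idx n l → ℝ),
    ∫ ω, Complex.exp (((∑ j, c j * fld n l a ω j : ℝ) : ℂ) * Complex.I) ∂(QQ n (gaussianReal 0 s) l)
      = Complex.exp (((a * SS l c : ℝ) : ℂ) * Complex.I) * Complex.exp (-((VV s l c : ℝ) : ℂ) / 2)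
  | 0, a, c => by
      have : ∀ ω : Om n 0, ∑ j, c j * fld n 0 a ω j = a * SS 0 c := by
        intro ω
        rw [sum_idx_zero, mul_comm]; rfl
      simp_rw [this]
      simp [VV]
  | l + 1, a, c => by
      let F : Fin n → ℝ × Om n l → ℂ := fun i p =>
        Complex.exp (((∑ j, sub c i j * fld n l (a / n + p.1) p.2 j : ℝ) : ℂ) * Complex.I)
      have e : ∀ ω : Om n (l+1),
          Complex.exp (((∑ j, c j * fld n (l+1) a ω j : ℝ) : ℂ) * Complex.I) =
          Complex.exp (((c none * a : ℝ) : ℂ) * Complex.I) * ∏ i : Fin n, F i (ω i) := by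
        intro ω
        rw [sum_idx_succ, ← Complex.exp_sum, ← Complex.exp_add]
        congr 1
        rw [← Finset.sum_mul, ← add_mul]
        push_cast
        rfl
      simp_rw [e]
      rw [integral_const_mul]
      have hF : ∀ i, Measurable (F i) := by
        intro i
        have h1 : Measurable (fun p : ℝ × Om n l => (a / n + p.1, p.2)) := by fun_prop
        have h2 := (measurable_fld n l).comp h1
        have h3 : Measurable (fun f : Idx n l → ℝ =>
          Complex.exp (((∑ j, sub c i j * f j : ℝ) : ℂ) * Complex.I)) :=
          Continuous.measurable (by fun_prop)
        exact h3.comp h2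
      have hFi : ∀ i, Integrable (F i) ((gaussianReal 0 s).prod (QQ n (gaussianReal 0 s) l)) := by
        intro i
        refine Integrable.of_bound (hF i).aestronglyMeasurable 1 (Eventually.of_forall fun p => ?_)
        exact (Complex.norm_exp_ofReal_mul_I _).le
      have hpi := integral_fintype_prod_eq_prod (𝕜 := ℂ) (ι := Fin n)
        (μ := fun _ => (gaussianReal 0 s).prod (QQ n (gaussianReal 0 s) l)) F
      have hpi' : ∫ ω : Om n (l+1), ∏ i : Fin n, F i (ω i) ∂(QQ n (gaussianReal 0 s) (l+1)) =
        ∏ i, ∫ x, F i x ∂((gaussianReal 0 s).prod (QQ n (gaussianReal 0 s) l)) := hpi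
      rw [hpi']
      have hi : ∀ i, ∫ x, F i x ∂((gaussianReal 0 s).prod (QQ n (gaussianReal 0 s) l)) =
          Complex.exp (((a * (SS l (sub c i) / n) : ℝ) : ℂ) * Complex.I
            + -(((VV s l (sub c i) + s * SS l (sub c i) ^ 2 : ℝ)) : ℂ) / 2) := by
        intro i
        rw [integral_prod _ (hFi i)]
        simp only [F]
        simp_rw [fld_cf s l]
        have e3 : ∀ x : ℝ, Complex.exp ((((a / n + x) * SS l (sub c i) : ℝ) : ℂ) * Complex.I) *
            Complex.exp (-((VV s l (sub c i) : ℝ) : ℂ) / 2) =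
            (Complex.exp (((a * (SS l (sub c i) / n) : ℝ) : ℂ) * Complex.I) *
            Complex.exp (-((VV s l (sub c i) : ℝ) : ℂ) / 2)) *
            Complex.exp (((SS l (sub c i) * x : ℝ) : ℂ) * Complex.I) := by
          intro x
          rw [← Complex.exp_add, ← Complex.exp_add, ← Complex.exp_add]
          congr 1; push_cast; ring
        simp_rw [e3]
        rw [integral_const_mul, charFun_gauss, ← Complex.exp_add, ← Complex.exp_add]
        congr 1; push_cast; ring
      simp_rw [hi]
      rw [← Complex.exp_sum, ← Complex.exp_add, ← Complex.exp_add]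
      congr 1
      simp only [SS, VV]
      rw [Finset.sum_add_distrib, ← Finset.sum_mul, ← Finset.sum_div, Finset.sum_neg_distrib,
        ← Complex.ofReal_sum, ← Complex.ofReal_sum, ← Finset.mul_sum]
      push_cast; ring

/-- the law of the branching field with Gaussian root value -/
noncomputable def law (n : ℕ) (σ2 s : ℝ≥0) (l : ℕ) : Measure (Idx n l → ℝ) :=
  ((gaussianReal 0 σ2).prod (QQ n (gaussianReal 0 s) l)).map (fun p => fld n l p.1 p.2)

lemma law_isG (n : ℕ) (σ2 s : ℝ≥0) (l : ℕ) :
    IsG (law n σ2 s l) (fun c => σ2 * SS l c ^ 2 + VV s l c) := by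
  refine ⟨Measure.isProbabilityMeasure_map (measurable_fld n l).aemeasurable, fun c => ?_⟩
  unfold law
  have hc : Continuous (fun f : Idx n l → ℝ =>
          Complex.exp (((∑ j, c j * f j : ℝ) : ℂ) * Complex.I)) := by fun_prop
  rw [integral_map (measurable_fld n l).aemeasurable hc.aestronglyMeasurable, integral_prod]
  · simp only
    simp_rw [fld_cf s l]
    rw [integral_mul_const]
    have := charFun_gauss σ2 (SS l c)
    simp_rw [mul_comm (SS l c)] at this
    rw [this, ← Complex.exp_add]
    congr 1; push_cast; ring
  · refine Integrable.of_bound (hc.measurable.comp (measurable_fld n l)).aestronglyMeasurable 1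
      (Eventually.of_forall fun p => ?_)
    exact (Complex.norm_exp_ofReal_mul_I _).le

/-! word distance -/
def dep {n : ℕ} : ∀ l, Idx n l → ℕ
  | 0, _ => 0
  | _ + 1, none => 0
  | l + 1, some (_, j) => dep l j + 1

def wd {n : ℕ} : ∀ l, Idx n l → Idx n l → ℕ
  | 0, _, _ => 0
  | _ + 1, none, none => 0
  | l + 1, none, some (_, j) => dep l j + 1
  | l + 1, some (_, j), none => dep l j + 1
  | l + 1, some (i, j), some (i', j') => if i = i' then wd l j j' else (dep l j + 1) + (dep l j' + 1)

lemma SS_eq {n : ℕ} : ∀ l (c : Idx n l → ℝ), SS l c = ∑ j, c j * ((n : ℝ)⁻¹) ^ (dep l j)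
  | 0, c => by rw [sum_idx_zero]; simp [SS, dep]
  | l + 1, c => by
      rw [sum_idx_succ]
      simp only [SS, dep, pow_zero, mul_one]
      congr 1
      refine Finset.sum_congr rfl fun i _ => ?_
      rw [SS_eq l, Finset.sum_div]
      refine Finset.sum_congr rfl fun j _ => ?_
      rw [pow_succ, sub]; ring

lemma quad_eq {n : ℕ} (σ2 s : ℝ) (hs : s = σ2 * (1 - ((n : ℝ)⁻¹) ^ 2)) :
    ∀ l (c : Idx n l → ℝ), ∑ j, ∑ j', c j * c j' * (σ2 * ((n : ℝ)⁻¹) ^ (wd l j j')) =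
      σ2 * SS l c ^ 2 + VV s l c
  | 0, c => by
      rw [sum_idx_zero, sum_idx_zero]
      simp only [wd, SS, VV]; ring
  | l + 1, c => by
      set b : ℝ := (n : ℝ)⁻¹ with hb
      rw [sum_idx_succ]
      have e0 : ∑ j', c none * c j' * (σ2 * b ^ (wd (l+1) none j')) =
          σ2 * c none * (c none + ∑ i, b * SS l (sub c i)) := by
        rw [sum_idx_succ, mul_add, Finset.mul_sum]
        congr 1
        · simp only [wd, pow_zero]; ring
        · refine Finset.sum_congr rfl fun i _ => ?_
          rw [SS_eq, Finset.mul_sum, Finset.mul_sum]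
          refine Finset.sum_congr rfl fun j _ => ?_
          simp only [wd, sub]
          rw [pow_succ]; ring
      have e1 : ∀ i : Fin n, ∑ j, ∑ j', c (some (i, j)) * c j' * (σ2 * b ^ (wd (l+1) (some (i, j)) j')) =
          σ2 * b * c none * SS l (sub c i) + ∑ i', if i = i' then
              (σ2 * SS l (sub c i) ^ 2 + VV s l (sub c i)) else
              σ2 * b ^ 2 * SS l (sub c i) * SS l (sub c i') := by
        intro i
        simp_rw [sum_idx_succ]
        rw [Finset.sum_add_distrib]
        congr 1
        · rw [SS_eq, Finset.mul_sum]
          refine Finset.sum_congr rfl fun j _ => ?_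
          simp only [wd, sub]
          rw [pow_succ]; ring
        · rw [Finset.sum_comm]
          refine Finset.sum_congr rfl fun i' _ => ?_
          by_cases h : i = i'
          · subst h
            rw [if_pos rfl, ← quad_eq σ2 s hs l]
            refine Finset.sum_congr rfl fun j _ => Finset.sum_congr rfl fun j' _ => ?_
            simp [wd, sub, hb]
          · rw [if_neg h, mul_assoc (σ2 * b ^ 2), SS_eq, SS_eq, Finset.sum_mul_sum, Finset.mul_sum]
            refine Finset.sum_congr rfl fun j _ => ?_
            rw [Finset.mul_sum]
            refine Finset.sum_congr rfl fun j' _ => ?_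
            simp only [wd, sub, if_neg h]
            rw [pow_add, pow_succ, pow_succ]; ring
      rw [e0]
      simp_rw [e1]
      have e2 : ∀ i : Fin n, (∑ i', if i = i' then
              (σ2 * SS l (sub c i) ^ 2 + VV s l (sub c i)) else
              σ2 * b ^ 2 * SS l (sub c i) * SS l (sub c i')) =
          σ2 * b ^ 2 * SS l (sub c i) * (∑ i', SS l (sub c i')) +
            (VV s l (sub c i) + s * SS l (sub c i) ^ 2) := by
        intro i
        have : ∀ i', (if i = i' then
              (σ2 * SS l (sub c i) ^ 2 + VV s l (sub c i)) else
              σ2 * b ^ 2 * SS l (sub c i) * SS l (sub c i')) =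
              σ2 * b ^ 2 * SS l (sub c i) * SS l (sub c i') + if i = i' then
              (VV s l (sub c i) + s * SS l (sub c i) ^ 2) else 0 := by
          intro i'
          by_cases h : i = i'
          · subst h; rw [if_pos rfl, if_pos rfl, hs]; ring
          · rw [if_neg h, if_neg h, add_zero]
        simp_rw [this]
        rw [Finset.sum_add_distrib, ← Finset.mul_sum]
        simp
      simp_rw [e2]
      simp only [SS, VV, Finset.sum_add_distrib, ← Finset.mul_sum, ← Finset.sum_mul, ← Finset.sum_div]
      rw [div_eq_mul_inv, ← hb]
      ring

lemma law_gen {n : ℕ} (hn : 1 ≤ n) (σ2 s : ℝ≥0) (h : ℝ) {t : ℝ}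
    (ht0 : 0 ≤ t) (ht1 : t ≤ 1) (l : ℕ) :
    ∫ f, (1 - t) ^ (Z h l f) ∂(law n σ2 s l) =
      1 - ∫ a, vit n (gaussianReal 0 s) h t l a ∂(gaussianReal 0 σ2) := by
  have hm : Measurable (fun f : Idx n l → ℝ => (1 - t) ^ (Z h l f)) :=
    (measurable_of_countable (fun m : ℕ => (1 - t) ^ m)).comp (measurable_Z h l)
  unfold law
  have hv := vit_nice (n := n) (ν := gaussianReal 0 s) h ht0 ht1 l
  rw [integral_map (measurable_fld n l).aemeasurable hm.aestronglyMeasurable, integral_prod]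
  · simp only
    simp_rw [gen_fun hn _ h ht0 ht1]
    have := hv.integrable (ν := gaussianReal 0 σ2) 0
    simp only [zero_add] at this
    rw [integral_sub (integrable_const _) this]
    simp
  · refine Integrable.of_bound (hm.comp (measurable_fld n l)).aestronglyMeasurable 1
      (Eventually.of_forall fun p => ?_)
    simp only [Function.comp, Real.norm_eq_abs]
    rw [abs_of_nonneg (pow_nonneg (by linarith) _)]
    exact pow_le_one₀ (by linarith) (by linarith)

lemma card_idx_le {n : ℕ} (hn : 2 ≤ n) : ∀ l, Fintype.card (Idx n l) + 1 ≤ 2 * n ^ l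
  | 0 => by
      have : Fintype.card (Idx n 0) = 1 := by
        have : Fintype.card Unit = 1 := rfl
        exact this
      rw [this]; simp
  | l + 1 => by
      have e : Fintype.card (Idx n (l+1)) = n * Fintype.card (Idx n l) + 1 := by
        have : Fintype.card (Option (Fin n × Idx n l)) = n * Fintype.card (Idx n l) + 1 := by
          simp
        exact this
      have ih := card_idx_le hn l
      rw [e, pow_succ]
      nlinarith
end GFFP

namespace GFFP
open GFF

/-! ### Trees -/
section tree
variable {T : Type} {Gt : SimpleGraph T}

lemma tree_dist (hG : Gt.IsTree) (u : T) {q w v : T} (hq : Gt.Adj w q) (hv : Gt.Adj w v) (hne : v ≠ q)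
    (h : Gt.dist u w = Gt.dist u q + 1) : Gt.dist u v = Gt.dist u w + 1 := by
  rcases hG.dist_eq_dist_add_one_of_adj u hv with h1 | h1
  swap
  · exact h1
  exfalso
  apply hne
  obtain ⟨p, hp⟩ := hG.connected.exists_walk_length_eq_dist u q
  obtain ⟨p', hp'⟩ := hG.connected.exists_walk_length_eq_dist u v
  have e1 : (p.concat hq.symm).IsPath := by
    apply SimpleGraph.Walk.isPath_of_length_eq_dist
    rw [SimpleGraph.Walk.length_concat, hp, h]
  have e2 : (p'.concat hv.symm).IsPath := by
    apply SimpleGraph.Walk.isPath_of_length_eq_dist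
    rw [SimpleGraph.Walk.length_concat, hp', h1]
  have e3 := hG.isAcyclic.path_unique ⟨_, e1⟩ ⟨_, e2⟩
  have e4 : p.concat hq.symm = p'.concat hv.symm := congrArg Subtype.val e3
  have e5 := congrArg SimpleGraph.Walk.penultimate e4
  rw [SimpleGraph.Walk.penultimate_concat, SimpleGraph.Walk.penultimate_concat] at e5
  exact e5.symm

lemma path_length (hG : Gt.IsTree) {u v : T} (p : Gt.Walk u v) (hp : p.IsPath) :
    p.length = Gt.dist u v := by
  obtain ⟨p', hp'⟩ := hG.connected.exists_walk_length_eq_dist u v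
  have := hG.isAcyclic.path_unique ⟨_, hp⟩ ⟨_, p'.isPath_of_length_eq_dist hp'⟩
  rw [← hp']
  exact congrArg (fun x => x.1.length) this

structure Chd {n : ℕ} (Gt : SimpleGraph T) (ch : T → T → Fin n → T) : Prop where
  inj : ∀ q w, Gt.Adj w q → Function.Injective (ch q w)
  adj : ∀ q w, Gt.Adj w q → ∀ i, Gt.Adj w (ch q w i)
  ne : ∀ q w, Gt.Adj w q → ∀ i, ch q w i ≠ q
  surj : ∀ q w, Gt.Adj w q → ∀ v, Gt.Adj w v → v ≠ q → ∃ i, ch q w i = v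

lemma exists_chd {n : ℕ} (hreg : IsReg Gt (n + 1)) : ∃ ch : T → T → Fin n → T, Chd Gt ch := by
  have key : ∀ q w : T, ∃ c : Fin n → T, Gt.Adj w q → (Function.Injective c ∧
      (∀ i, Gt.Adj w (c i)) ∧ (∀ i, c i ≠ q) ∧ ∀ v, Gt.Adj w v → v ≠ q → ∃ i, c i = v) := by
    intro q w
    by_cases hq : Gt.Adj w q
    swap
    · exact ⟨fun _ => w, fun h => absurd h hq⟩
    have hc : (Gt.neighborSet w).ncard = n + 1 := hreg w
    have hfin : (Gt.neighborSet w).Finite := Set.finite_of_ncard_pos (by omega)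
    have hc2 : (Gt.neighborSet w \ {q}).ncard = n := by
      rw [Set.ncard_sdiff_singleton_of_mem (by exact hq), hc]; rfl
    haveI : Finite ↑(Gt.neighborSet w \ {q}) := (hfin.subset Set.diff_subset).to_subtype
    have e : Nat.card ↑(Gt.neighborSet w \ {q}) = n := hc2
    let φ := (Finite.equivFinOfCardEq e).symm
    refine ⟨fun i => (φ i).1, fun _ => ⟨fun i j hij => φ.injective (Subtype.ext hij),
      fun i => (φ i).2.1, fun i => (φ i).2.2, fun v hv hne => ?_⟩⟩
    obtain ⟨i, hi⟩ := φ.surjective ⟨v, hv, hne⟩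
    exact ⟨i, by simp [hi]⟩
  choose ch hch using key
  exact ⟨ch, fun q w h => (hch q w h).1, fun q w h => (hch q w h).2.1,
    fun q w h => (hch q w h).2.2.1, fun q w h => (hch q w h).2.2.2⟩

def emb {n : ℕ} (ch : T → T → Fin n → T) : ∀ l, T → T → Idx n l → T
  | 0, _, w, _ => w
  | _ + 1, _, w, none => w
  | l + 1, q, w, some (i, j) => emb ch l w (ch q w i) j

variable {n : ℕ} {ch : T → T → Fin n → T}

lemma emb_D (hG : Gt.IsTree) (hch : Chd Gt ch) : ∀ l (q w u : T), Gt.Adj w q →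
    Gt.dist u w = Gt.dist u q + 1 → ∀ j, Gt.dist u (emb ch l q w j) = Gt.dist u w + dep l j
  | 0, q, w, u, hq, h, _ => rfl
  | l + 1, q, w, u, hq, h, none => rfl
  | l + 1, q, w, u, hq, h, some (i, j) => by
      have h1 := tree_dist hG u hq (hch.adj q w hq i) (hch.ne q w hq i) h
      have := emb_D hG hch l w (ch q w i) u (hch.adj q w hq i).symm h1 j
      simp only [emb, dep]
      omega

lemma emb_D0 (hG : Gt.IsTree) (hch : Chd Gt ch) : ∀ l (q w : T), Gt.Adj w q →
    ∀ j, Gt.dist w (emb ch l q w j) = dep l j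
  | 0, q, w, hq, _ => by simp [emb, dep]
  | l + 1, q, w, hq, none => by simp [emb, dep]
  | l + 1, q, w, hq, some (i, j) => by
      have h0 : Gt.dist w (ch q w i) = 1 := SimpleGraph.dist_eq_one_iff_adj.2 (hch.adj q w hq i)
      have := emb_D hG hch l w (ch q w i) w (hch.adj q w hq i).symm (by rw [h0]; simp) j
      simp only [emb, dep]
      omega

lemma emb_D1 (hG : Gt.IsTree) (hch : Chd Gt ch) (l) (q w : T) (hq : Gt.Adj w q) (j) :
    Gt.dist q (emb ch l q w j) = dep l j + 1 := by
  have h0 : Gt.dist q w = 1 := SimpleGraph.dist_eq_one_iff_adj.2 hq.symm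
  have := emb_D hG hch l q w q hq (by rw [h0]; simp) j
  omega

lemma emb_dist (hG : Gt.IsTree) (hch : Chd Gt ch) : ∀ l (q w : T), Gt.Adj w q →
    ∀ j j', Gt.dist (emb ch l q w j) (emb ch l q w j') = wd l j j'
  | 0, q, w, hq, _, _ => by simp [emb, wd]
  | l + 1, q, w, hq, none, none => by simp [emb, wd]
  | l + 1, q, w, hq, none, some (i, j) => by
      have := emb_D0 hG hch (l+1) q w hq (some (i, j))
      simpa [emb, wd, dep] using this
  | l + 1, q, w, hq, some (i, j), none => by
      have := emb_D0 hG hch (l+1) q w hq (some (i, j))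
      rw [SimpleGraph.dist_comm] at this
      simpa [emb, wd, dep] using this
  | l + 1, q, w, hq, some (i, j), some (i', j') => by
      simp only [emb, wd]
      have ha := hch.adj q w hq i
      have ha' := hch.adj q w hq i'
      by_cases h : i = i'
      · subst h
        rw [if_pos rfl]
        exact emb_dist hG hch l _ _ ha.symm j j'
      · rw [if_neg h]
        set u := emb ch l w (ch q w i) j with hu
        have h1 : Gt.dist u w = dep l j + 1 := by
          rw [SimpleGraph.dist_comm]; exact emb_D1 hG hch l w _ ha.symm j
        have h2 : Gt.dist u (ch q w i) = dep l j := by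
          rw [SimpleGraph.dist_comm]; exact emb_D0 hG hch l w _ ha.symm j
        have hne : ch q w i' ≠ ch q w i := fun e => h (hch.inj q w hq e).symm
        have h3 := tree_dist hG u ha ha' hne (by omega)
        have h4 := emb_D hG hch l w (ch q w i') u ha'.symm h3 j'
        omega

lemma wd_zero : ∀ l (j j' : Idx n l), wd l j j' = 0 → j = j'
  | 0, _, _, _ => rfl
  | l + 1, none, none, _ => rfl
  | l + 1, none, some (i, j), h => by simp [wd] at h
  | l + 1, some (i, j), none, h => by simp [wd] at h
  | l + 1, some (i, j), some (i', j'), h => by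
      simp only [wd] at h
      by_cases hi : i = i'
      · subst hi
        rw [if_pos rfl] at h
        rw [wd_zero l j j' h]
      · rw [if_neg hi] at h; omega

lemma emb_inj (hG : Gt.IsTree) (hch : Chd Gt ch) (l) (q w : T) (hq : Gt.Adj w q) :
    Function.Injective (emb ch l q w) := by
  intro j j' h
  apply wd_zero
  rw [← emb_dist hG hch l q w hq, h, SimpleGraph.dist_self]

lemma levelComp_cons {G : SimpleGraph T} {h : ℝ} {ω : T → ℝ} {x y z : T} (hxy : G.Adj x y)
    (hx : h ≤ ω x) (hz : z ∈ levelComp G h ω y) : z ∈ levelComp G h ω x := by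
  obtain ⟨p, hp⟩ := hz
  refine ⟨SimpleGraph.Walk.cons hxy p, fun v hv => ?_⟩
  rw [SimpleGraph.Walk.support_cons, List.mem_cons] at hv
  rcases hv with rfl | hv
  · exact hx
  · exact hp v hv

lemma alv_levelComp (hch : Chd Gt ch) {h : ℝ} {ω : T → ℝ} : ∀ l (q w : T), Gt.Adj w q →
    ∀ j, Alv h l (fun j => ω (emb ch l q w j)) j → emb ch l q w j ∈ levelComp Gt h ω w ∧ dep l j = l
  | 0, q, w, hq, _, hj => ⟨⟨SimpleGraph.Walk.nil, fun v hv => by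
      have hv' : v ∈ (SimpleGraph.Walk.nil : Gt.Walk w w).support := hv
      rw [SimpleGraph.Walk.support_nil, List.mem_singleton] at hv'; subst hv'; exact hj⟩, rfl⟩
  | l + 1, q, w, hq, none, hj => hj.elim
  | l + 1, q, w, hq, some (i, j), hj => by
      have ha := hch.adj q w hq i
      have := alv_levelComp hch l w (ch q w i) ha.symm j hj.2
      exact ⟨levelComp_cons ha hj.1 this.1, by simp only [dep]; rw [this.2]⟩

lemma levelComp_alv (hG : Gt.IsTree) (hch : Chd Gt ch) {h : ℝ} {ω : T → ℝ} : ∀ l (q w z : T),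
    Gt.Adj w q → Gt.dist z q = Gt.dist z w + 1 → l ≤ Gt.dist w z → z ∈ levelComp Gt h ω w →
    ∃ j, Alv h l (fun j => ω (emb ch l q w j)) j
  | 0, q, w, z, hq, h1, h2, ⟨p, hp⟩ => ⟨(), hp w p.start_mem_support⟩
  | l + 1, q, w, z, hq, h1, h2, ⟨p, hp⟩ => by
      have hw : h ≤ ω w := hp w p.start_mem_support
      have hb := p.bypass_isPath
      have hs : ∀ v ∈ p.bypass.support, h ≤ ω v := fun v hv => hp v (p.support_bypass_subset hv)
      have hlen := path_length hG p.bypass hb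
      revert hb hs hlen
      generalize p.bypass = p'
      intro hb hs hlen
      cases p' with
      | nil => simp at h2
      | @cons _ v _ hadj p'' =>
        have hb' : p''.IsPath := hb.of_cons
        have hlen' := path_length hG p'' hb'
        rw [SimpleGraph.Walk.length_cons] at hlen
        have hne : v ≠ q := by
          rintro rfl
          rw [SimpleGraph.dist_comm (u := z), SimpleGraph.dist_comm (u := z)] at h1
          omega
        obtain ⟨i, hi⟩ := hch.surj q w hq v hadj hne
        have := levelComp_alv hG hch l w v z hadj.symm (by
          rw [SimpleGraph.dist_comm (u := z), SimpleGraph.dist_comm (u := z)]; omega) (by omega)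
          ⟨p'', fun u hu => hs u (by rw [SimpleGraph.Walk.support_cons]; exact List.mem_cons_of_mem _ hu)⟩
        obtain ⟨j, hj⟩ := this
        subst hi
        exact ⟨some (i, j), hw, hj⟩

end tree

lemma ball_finite {V : Type} {G : SimpleGraph V} (hc : G.Connected) {d : ℕ} (hd : 1 ≤ d)
    (hreg : IsReg G d) (x : V) (r : ℕ) : (gball G x r).Finite := by
  induction r with
  | zero =>
    refine (Set.finite_singleton x).subset fun y hy => ?_
    have : G.dist x y = 0 := Nat.le_zero.1 hy
    rw [hc.dist_eq_zero_iff] at this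
    exact this.symm
  | succ r ih =>
    refine (ih.union (ih.biUnion (t := fun v => G.neighborSet v) fun v _ => ?_)).subset fun y hy => ?_
    · exact Set.finite_of_ncard_pos (by rw [show (G.neighborSet v).ncard = d from hreg v]; omega)
    · obtain ⟨p, hp⟩ := hc.exists_walk_length_eq_dist y x
      cases p with
      | nil => left; simp [gball]
      | @cons _ v _ hadj p =>
        right
        have h1 : G.dist x y ≤ r + 1 := hy
        rw [SimpleGraph.Walk.length_cons, SimpleGraph.dist_comm (u := y)] at hp
        have h2 := SimpleGraph.dist_le p
        rw [SimpleGraph.dist_comm] at h2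
        simp only [mem_iUnion]
        exact ⟨v, show G.dist x v ≤ r by omega, hadj.symm⟩

/-! ### events on the tree -/
noncomputable def sig (n : ℕ) : ℝ≥0 := Real.toNNReal ((n : ℝ) / ((n : ℝ) - 1))
noncomputable def sxi (n : ℕ) : ℝ≥0 := Real.toNNReal ((n : ℝ) / ((n : ℝ) - 1) * (1 - ((n : ℝ)⁻¹) ^ 2))

lemma sig_coe {n : ℕ} (hn : 2 ≤ n) : ((sig n : ℝ≥0) : ℝ) = (n : ℝ) / ((n : ℝ) - 1) := by
  have : (2 : ℝ) ≤ n := by exact_mod_cast hn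
  exact Real.coe_toNNReal _ (div_nonneg (by linarith) (by linarith))

lemma sxi_coe {n : ℕ} (hn : 2 ≤ n) :
    ((sxi n : ℝ≥0) : ℝ) = (n : ℝ) / ((n : ℝ) - 1) * (1 - ((n : ℝ)⁻¹) ^ 2) := by
  have : (2 : ℝ) ≤ n := by exact_mod_cast hn
  have h1 : ((n : ℝ)⁻¹) ≤ 1 := inv_le_one_of_one_le₀ (by linarith)
  have h2 : 0 ≤ ((n : ℝ)⁻¹) := by positivity
  exact Real.coe_toNNReal _ (mul_nonneg (div_nonneg (by linarith) (by linarith)) (by nlinarith))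

lemma sxi_pos {n : ℕ} (hn : 2 ≤ n) : sxi n ≠ 0 := by
  have : (2 : ℝ) ≤ n := by exact_mod_cast hn
  have h1 : ((n : ℝ)⁻¹) < 1 := inv_lt_one_of_one_lt₀ (by linarith)
  have h2 : 0 ≤ ((n : ℝ)⁻¹) := by positivity
  have : (0 : ℝ) < sxi n := by
    rw [sxi_coe hn]
    exact mul_pos (div_pos (by linarith) (by linarith)) (by nlinarith)
  intro h
  rw [h] at this
  simp at this

lemma sig_pos {n : ℕ} (hn : 2 ≤ n) : sig n ≠ 0 := by
  have h2 : (2 : ℝ) ≤ n := by exact_mod_cast hn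
  have : (0 : ℝ) < sig n := by
    rw [sig_coe hn]
    exact div_pos (by linarith) (by linarith)
  intro h
  rw [h] at this
  simp at this

noncomputable def Pr (n : ℕ) (t : ℝ) (r : ℕ) (h : ℝ) : ℝ :=
  ∫ a, vit n (gaussianReal 0 (sxi n)) h t r a ∂(gaussianReal 0 (sig n))

section meas
variable {T : Type} {Gt : SimpleGraph T} {n : ℕ} {ch : T → T → Fin n → T}

lemma quad_emb (hn : 2 ≤ n) (hG : Gt.IsTree) (hch : Chd Gt ch) (l) (q w : T) (hq : Gt.Adj w q)
    (c : Idx n l → ℝ) : ∑ i, ∑ j, c i * c j * treeGreen Gt (n+1) (emb ch l q w i) (emb ch l q w j)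
      = sig n * SS l c ^ 2 + VV (sxi n) l c := by
  rw [sxi_coe hn, sig_coe hn, ← quad_eq _ _ rfl]
  refine Finset.sum_congr rfl fun i _ => Finset.sum_congr rfl fun j _ => ?_
  rw [treeGreen, emb_dist hG hch l q w hq]
  push_cast
  rw [show (n : ℝ) + 1 - 1 = n by ring, show (n : ℝ) + 1 - 2 = n - 1 by ring]

lemma law_emb (hn : 2 ≤ n) (hG : Gt.IsTree) (hch : Chd Gt ch) (l) (q w : T) (hq : Gt.Adj w q)
    {μT : Measure (T → ℝ)} (hμT : IsGaussianField μT (treeGreen Gt (n+1))) :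
    μT.map (fun ω j => ω (emb ch l q w j)) = law n (sig n) (sxi n) l := by
  refine IsG.ext (isG_of_field hμT (emb ch l q w) ?_) (law_isG n (sig n) (sxi n) l) ?_
  · intro c
    rw [quad_emb hn hG hch l q w hq]
    exact add_nonneg (by positivity) (VV_nonneg (NNReal.coe_nonneg _) l c)
  · intro c
    exact quad_emb hn hG hch l q w hq c

lemma law_alive (hn : 2 ≤ n) (h : ℝ) (l : ℕ) :
    ((law n (sig n) (sxi n) l) {f | 1 ≤ Z h l f}).toReal = Pr n 1 l h := by
  haveI := (law_isG n (sig n) (sxi n) l).prob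
  have hm : MeasurableSet {f : Idx n l → ℝ | 1 ≤ Z h l f} :=
    measurableSet_le measurable_const (measurable_Z h l)
  have h1 := law_gen (n := n) (by omega) (sig n) (sxi n) h zero_le_one le_rfl l
  have e : ∀ f : Idx n l → ℝ, (1 - (1:ℝ)) ^ (Z h l f) =
      1 - ({f | 1 ≤ Z h l f} : Set (Idx n l → ℝ)).indicator (fun _ => (1:ℝ)) f := by
    intro f
    by_cases hf : 1 ≤ Z h l f
    · rw [Set.indicator_of_mem (by exact hf), sub_self, zero_pow (by omega)]
    · rw [Set.indicator_of_notMem (by exact hf), show Z h l f = 0 by omega]; simp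
  simp_rw [e] at h1
  rw [integral_sub (integrable_const _) ((integrable_const _).indicator hm),
    integral_indicator_const _ hm] at h1
  simp [Measure.real] at h1
  rw [h1]; rfl

def tEv (Gt : SimpleGraph T) (q w : T) (h : ℝ) (r : ℕ) : Set (T → ℝ) :=
  {ω | ∃ z ∈ levelComp Gt h ω w ∩ treePlus Gt w q, r ≤ Gt.dist w z}

lemma tEv_eq (hG : Gt.IsTree) (hch : Chd Gt ch) {q w : T} (hq : Gt.Adj w q) (h : ℝ) (r : ℕ) :
    tEv Gt q w h r = (fun ω j => ω (emb ch r q w j)) ⁻¹' {f | 1 ≤ Z h r f} := by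
  ext ω
  simp only [mem_preimage, mem_setOf_eq, Z_pos_iff]
  constructor
  · rintro ⟨z, ⟨hz1, hz2⟩, hz3⟩
    exact levelComp_alv hG hch r q w z hq hz2 hz3 hz1
  · rintro ⟨j, hj⟩
    obtain ⟨h1, h2⟩ := alv_levelComp hch r q w hq j hj
    refine ⟨_, ⟨h1, ?_⟩, ?_⟩
    · change Gt.dist _ _ = Gt.dist _ _ + 1
      rw [SimpleGraph.dist_comm, emb_D1 hG hch r q w hq, SimpleGraph.dist_comm, emb_D0 hG hch r q w hq]
    · rw [emb_D0 hG hch r q w hq, h2]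

lemma tEv_meas (hG : Gt.IsTree) (hch : Chd Gt ch) {q w : T} (hq : Gt.Adj w q) (h : ℝ) (r : ℕ) :
    MeasurableSet (tEv Gt q w h r) := by
  rw [tEv_eq hG hch hq]
  exact (measurableSet_le measurable_const (measurable_Z h r)).preimage (by fun_prop)

lemma tEv_prob (hn : 2 ≤ n) (hG : Gt.IsTree) (hch : Chd Gt ch) {q w : T} (hq : Gt.Adj w q) (h : ℝ)
    (r : ℕ) {μT : Measure (T → ℝ)} (hμT : IsGaussianField μT (treeGreen Gt (n+1))) :
    (μT (tEv Gt q w h r)).toReal = Pr n 1 r h := by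
  rw [tEv_eq hG hch hq, ← law_alive hn, ← law_emb hn hG hch r q w hq hμT, Measure.map_apply]
  · fun_prop
  · exact measurableSet_le measurable_const (measurable_Z h r)

lemma inf_eq (hG : Gt.IsTree) (hreg : IsReg Gt (n+1)) {q w : T} (h : ℝ) :
    {ω | (levelComp Gt h ω w ∩ treePlus Gt w q).Infinite} = ⋂ r, tEv Gt q w h r := by
  ext ω
  simp only [mem_iInter, mem_setOf_eq]
  constructor
  · intro hi r
    have hf := ball_finite hG.connected (by omega) hreg w r
    obtain ⟨z, hz, hz'⟩ := (hi.diff hf).nonempty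
    exact ⟨z, hz, by
      have : ¬ Gt.dist w z ≤ r := hz'
      omega⟩
  · intro hr hfin
    obtain ⟨M, hM⟩ := (hfin.image (fun z => Gt.dist w z)).bddAbove
    obtain ⟨z, hz, hz'⟩ := hr (M + 1)
    have := hM ⟨z, hz, rfl⟩
    simp only at this
    omega

lemma eta_tendsto (hn : 2 ≤ n) (ht : IsRegTree Gt (n+1)) {q w : T} (hq : Gt.Adj w q) (h : ℝ)
    {μT : Measure (T → ℝ)} (hμT : IsGaussianField μT (treeGreen Gt (n+1))) :
    Tendsto (fun r => Pr n 1 r h) atTop (nhds (etaPlus Gt w q μT h)) := by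
  haveI := hμT.1
  have hG : Gt.IsTree := ⟨ht.1, ht.2.1⟩
  obtain ⟨ch, hch⟩ := exists_chd ht.2.2
  unfold etaPlus
  rw [inf_eq hG ht.2.2]
  have := tendsto_measure_iInter_atTop (μ := μT) (s := tEv Gt q w h)
    (fun r => (tEv_meas hG hch hq h r).nullMeasurableSet)
    (fun r s hrs ω ⟨z, hz, hz'⟩ => ⟨z, hz, hrs.trans hz'⟩) ⟨0, measure_ne_top _ _⟩
  have h2 := (ENNReal.tendsto_toReal (measure_ne_top _ _)).comp this
  refine h2.congr fun r => ?_
  exact tEv_prob hn hG hch hq h r hμT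

lemma zero_iff (hn : 2 ≤ n) (ht : IsRegTree Gt (n+1)) {q w : T} (hq : Gt.Adj w q) (h : ℝ)
    {μT : Measure (T → ℝ)} (hμT : IsGaussianField μT (treeGreen Gt (n+1))) :
    μT {ω | (levelComp Gt h ω w).Infinite} = 0 ↔ etaPlus Gt w q μT h = 0 := by
  haveI := hμT.1
  have hG : Gt.IsTree := ⟨ht.1, ht.2.1⟩
  obtain ⟨ch, hch⟩ := exists_chd ht.2.2
  have key : ∀ q', Gt.Adj w q' → etaPlus Gt w q' μT h = etaPlus Gt w q μT h := fun q' hq' =>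
    tendsto_nhds_unique (eta_tendsto hn ht hq' h hμT) (eta_tendsto hn ht hq h hμT)
  constructor
  · intro h0
    unfold etaPlus
    rw [measure_mono_null _ h0]; rfl
    intro ω hω
    exact Set.Infinite.mono Set.inter_subset_left hω
  · intro h0
    let q' := ch q w ⟨0, by omega⟩
    have hq' : Gt.Adj w q' := hch.adj q w hq _
    have hne : q' ≠ q := hch.ne q w hq _
    have h0' := (key q' hq').trans h0
    have z1 : ∀ q'', etaPlus Gt w q'' μT h = 0 →
        μT {ω | (levelComp Gt h ω w ∩ treePlus Gt w q'').Infinite} = 0 := by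
      intro q'' hh
      rcases (ENNReal.toReal_eq_zero_iff _).1 hh with h | h
      · exact h
      · exact absurd h (measure_ne_top _ _)
    refine measure_mono_null ?_ (measure_union_null (z1 q h0) (z1 q' h0'))
    intro ω hω
    have : levelComp Gt h ω w = (levelComp Gt h ω w ∩ treePlus Gt w q) ∪
        (levelComp Gt h ω w ∩ treePlus Gt w q') := by
      rw [← Set.inter_union_distrib_left]
      symm
      rw [Set.inter_eq_left]
      intro z _
      rcases hG.dist_eq_dist_add_one_of_adj z hq with h1 | h1
      · right
        exact tree_dist hG z hq hq' hne h1
      · left; exact h1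
    have hω' : (levelComp Gt h ω w).Infinite := hω
    rw [this, Set.infinite_union] at hω'
    exact hω'

end meas
end GFFP

namespace GFFP
open GFF

section
variable {n : ℕ} {ν : Measure ℝ} [IsProbabilityMeasure ν]

lemma Nice.integrable0 {v : ℝ → ℝ} (hv : Nice v) : Integrable v ν := by
  have := hv.integrable (ν := ν) 0
  simpa using this

lemma Nice.int_ge {v : ℝ → ℝ} (hv : Nice v) {M c : ℝ} (hM : c ≤ v M) (b : ℝ) :
    c * ν.real (Ici (M - b)) ≤ ∫ x, v (b + x) ∂ν := by
  have : ∫ x, (Ici (M - b)).indicator (fun _ => c) x ∂ν = c * ν.real (Ici (M - b)) := by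
    rw [integral_indicator_const _ measurableSet_Ici, smul_eq_mul, mul_comm]
  rw [← this]
  refine integral_mono ((integrable_const _).indicator measurableSet_Ici) (hv.integrable b) ?_
  intro x
  simp only
  by_cases hx : x ∈ Ici (M - b)
  · rw [Set.indicator_of_mem hx]
    have : M - b ≤ x := hx
    exact hM.trans (hv.mono (by linarith))
  · rw [Set.indicator_of_notMem hx]; exact hv.nonneg _

lemma Nice.int_le {v : ℝ → ℝ} (hv : Nice v) (M : ℝ) :
    ∫ x, v x ∂ν ≤ v M + (1 - ν.real (Iic M)) := by
  have e : 1 - ν.real (Iic M) = ν.real (Ioi M) := by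
    rw [← compl_Iic, probReal_compl_eq_one_sub measurableSet_Iic]
  have : ∫ x, (v M + (Ioi M).indicator (fun _ => (1:ℝ)) x) ∂ν = v M + ν.real (Ioi M) := by
    rw [integral_add (integrable_const _) ((integrable_const _).indicator measurableSet_Ioi),
      integral_indicator_const _ measurableSet_Ioi]
    simp
  rw [e, ← this]
  refine integral_mono hv.integrable0 ?_ ?_
  · exact (integrable_const _).add ((integrable_const _).indicator measurableSet_Ioi)
  intro x
  simp only
  by_cases hx : x ∈ Ioi M
  · rw [Set.indicator_of_mem hx]
    linarith [hv.le_one x, hv.nonneg M]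
  · rw [Set.indicator_of_notMem hx, add_zero]; exact hv.mono (not_lt.1 hx)

lemma exists_Ici (ν : Measure ℝ) [IsProbabilityMeasure ν] : ∃ b : ℝ, b < 0 ∧ 3/4 ≤ ν.real (Ici b) := by
  have h := (ENNReal.tendsto_toReal (measure_ne_top ν univ)).comp (tendsto_measure_Ici_atBot ν)
  rw [measure_univ] at h
  have := (h.eventually_const_le (u := 3/4) (by norm_num)).and (eventually_lt_atBot 0)
  obtain ⟨b, hb, hb'⟩ := this.exists
  exact ⟨b, hb', hb⟩

lemma exists_Iic (ν : Measure ℝ) [IsProbabilityMeasure ν] {e : ℝ} (he : 0 < e) :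
    ∃ M : ℝ, 1 - e ≤ ν.real (Iic M) := by
  have h := (ENNReal.tendsto_toReal (measure_ne_top ν univ)).comp (tendsto_measure_Iic_atTop ν)
  rw [measure_univ] at h
  obtain ⟨b, hb⟩ := (h.eventually_const_le (u := 1 - e) (by simp; linarith)).exists
  exact ⟨b, hb⟩

lemma gauss_Ici_pos {v : ℝ≥0} (hv : v ≠ 0) (b : ℝ) : 0 < (gaussianReal 0 v).real (Ici b) := by
  rw [measureReal_def, ENNReal.toReal_pos_iff]
  refine ⟨?_, measure_lt_top _ _⟩
  rw [pos_iff_ne_zero]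
  intro h
  have := gaussianReal_absolutelyContinuous' 0 hv h
  simp at this

end

section
variable {n : ℕ}

lemma Pr_level {h h' : ℝ} (hh : h' ≤ h) {t : ℝ} (ht0 : 0 ≤ t) (ht1 : t ≤ 1) (r : ℕ) :
    Pr n t r h ≤ Pr n t r h' :=
  integral_mono (vit_nice h ht0 ht1 r).integrable0 (vit_nice h' ht0 ht1 r).integrable0
    (fun a => vit_level hh ht0 ht1 r a)

lemma Pr_nonneg {h : ℝ} {t : ℝ} (ht0 : 0 ≤ t) (ht1 : t ≤ 1) (r : ℕ) :
    0 ≤ Pr n t r h := integral_nonneg fun a => (vit_nice h ht0 ht1 r).nonneg a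

lemma Pr_le_one {h : ℝ} {t : ℝ} (ht0 : 0 ≤ t) (ht1 : t ≤ 1) (r : ℕ) :
    Pr n t r h ≤ 1 := by
  have := (vit_nice (n := n) (ν := gaussianReal 0 (sxi n)) h ht0 ht1 r).int_le_one
    (ν := gaussianReal 0 (sig n)) 0
  simpa [Pr] using this

lemma Pr_anti (h : ℝ) : Antitone (fun r => Pr n 1 r h) :=
  antitone_nat_of_succ_le fun r =>
    integral_mono (vit_nice h zero_le_one le_rfl _).integrable0
      (vit_nice h zero_le_one le_rfl _).integrable0 (fun a => vit_anti_one h r a)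

lemma Pr_low (hn : 2 ≤ n) : ∃ h0 c : ℝ, 0 < c ∧ ∀ r, c ≤ Pr n 1 r h0 := by
  set ν := gaussianReal 0 (sxi n) with hν
  obtain ⟨b, hb0, hb⟩ := exists_Ici ν
  have hn' : (2 : ℝ) ≤ n := by exact_mod_cast hn
  -- h0 (1 - 1/n) = b
  set h0 : ℝ := b * (n / (n - 1)) with hh0
  have e : h0 - h0 / n = b := by
    rw [hh0]; field_simp [show (n : ℝ) - 1 ≠ 0 by linarith]
  have key : ∀ r a, h0 ≤ a → 1/2 ≤ vit n ν h0 1 r a := by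
    intro r
    induction r with
    | zero => intro a ha; simp only [vit]; rw [if_pos ha]; norm_num
    | succ r ih =>
      intro a ha
      have hv := vit_nice (n := n) (ν := ν) h0 zero_le_one le_rfl r
      simp only [vit, bop]
      rw [if_pos ha]
      have h1 := hv.int_ge (ν := ν) (ih h0 le_rfl) (a / n)
      have h2 : 3/4 ≤ ν.real (Ici (h0 - a / n)) := by
        refine hb.trans (measureReal_mono (Ici_subset_Ici.2 ?_))
        rw [← e]
        have : h0 / n ≤ a / n := by gcongr
        linarith
      have h3 := hv.int_le_one (ν := ν) (a / n)
      have h4 : (1 - ∫ x, vit n ν h0 1 r (a / n + x) ∂ν) ^ n ≤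
          (1 - ∫ x, vit n ν h0 1 r (a / n + x) ∂ν) ^ 2 :=
        pow_le_pow_of_le_one (by linarith) (by linarith) hn
      nlinarith
  refine ⟨h0, 1/2 * (gaussianReal 0 (sig n)).real (Ici h0),
    mul_pos (by norm_num) (gauss_Ici_pos (sig_pos hn) _), fun r => ?_⟩
  have hv := vit_nice (n := n) (ν := ν) h0 zero_le_one le_rfl r
  have := hv.int_ge (ν := gaussianReal 0 (sig n)) (key r h0 le_rfl) 0
  simpa [Pr] using this

variable {T : Type} {Gt : SimpleGraph T}

lemma eta_le_Pr (hn : 2 ≤ n) (ht : IsRegTree Gt (n+1)) {q w : T} (hq : Gt.Adj w q) (h : ℝ)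
    {μT : Measure (T → ℝ)} (hμT : IsGaussianField μT (treeGreen Gt (n+1))) (r : ℕ) :
    etaPlus Gt w q μT h ≤ Pr n 1 r h :=
  (Pr_anti h).le_of_tendsto (eta_tendsto hn ht hq h hμT) r

lemma eta_pos (hn : 2 ≤ n) (ht : IsRegTree Gt (n+1)) {q w : T} (hq : Gt.Adj w q) {h : ℝ}
    {μT : Measure (T → ℝ)} (hμT : IsGaussianField μT (treeGreen Gt (n+1)))
    (hh : h < hstar Gt w μT) : 0 < etaPlus Gt w q μT h := by
  have h0 : 0 ≤ etaPlus Gt w q μT h := ENNReal.toReal_nonneg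
  rcases h0.lt_or_eq with h1 | h1
  · exact h1
  exfalso
  have hm : h ∈ {h : ℝ | μT {ω | (levelComp Gt h ω w).Infinite} = 0} :=
    (zero_iff hn ht hq h hμT).2 h1.symm
  have hb : BddBelow {h : ℝ | μT {ω | (levelComp Gt h ω w).Infinite} = 0} := by
    obtain ⟨hz, c, hc, hcr⟩ := Pr_low hn
    refine ⟨hz, fun h' hh' => ?_⟩
    by_contra hlt
    have e := (zero_iff hn ht hq h' hμT).1 hh'
    have : c ≤ etaPlus Gt w q μT h' := ge_of_tendsto' (eta_tendsto hn ht hq h' hμT)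
      fun r => (hcr r).trans (Pr_level (not_le.1 hlt).le zero_le_one le_rfl r)
    linarith
  have := csInf_le hb hm
  exact absurd hh (not_lt.2 this)

/-- uniform survival -/
lemma unif_delta (hn : 2 ≤ n) {h h1 ε0 : ℝ} (hε : 0 < ε0) (hε1 : ∀ r, ε0 ≤ Pr n 1 r h1) :
    ∃ δ : ℝ, 0 < δ ∧ δ ≤ 1 ∧ ∀ r h' a, h ≤ h' → h' ≤ h1 → h' ≤ a →
      δ ≤ ∫ x, vit n (gaussianReal 0 (sxi n)) h' 1 r (a / n + x) ∂(gaussianReal 0 (sxi n)) := by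
  set ν := gaussianReal 0 (sxi n) with hν
  obtain ⟨M, hM⟩ := exists_Iic (gaussianReal 0 (sig n)) (half_pos hε)
  have hp := gauss_Ici_pos (sxi_pos hn) (M - h / n)
  have hle : (gaussianReal 0 (sxi n)).real (Ici (M - h / n)) ≤ 1 := measureReal_le_one
  have hε2 : ε0 ≤ 1 := (hε1 0).trans (Pr_le_one zero_le_one le_rfl 0)
  refine ⟨ε0 / 2 * ν.real (Ici (M - h / n)), mul_pos (half_pos hε) hp,
    mul_le_one₀ (by linarith) hp.le hle, ?_⟩
  intro r h' a hh' hh1 ha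
  have hv := vit_nice (n := n) (ν := ν) h' zero_le_one le_rfl r
  have hv1 := vit_nice (n := n) (ν := ν) h1 zero_le_one le_rfl r
  have h2 : ε0 / 2 ≤ vit n ν h1 1 r M := by
    have h3 := hv1.int_le (ν := gaussianReal 0 (sig n)) M
    have h4 := hε1 r
    unfold Pr at h4
    linarith
  have h3 : ε0 / 2 ≤ vit n ν h' 1 r M := h2.trans (vit_level hh1 zero_le_one le_rfl r M)
  refine le_trans ?_ (hv.int_ge h3 (a / n))
  have hn' : (2 : ℝ) ≤ n := by exact_mod_cast hn
  have : h / n ≤ a / n := by gcongr; linarith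
  refine mul_le_mul_of_nonneg_left (measureReal_mono (Ici_subset_Ici.2 (by linarith))) (by linarith)

/-- growth -/
lemma growth (hn : 2 ≤ n) {h δ : ℝ} (hδ0 : 0 < δ) (hδ1 : δ ≤ 1)
    (hδ : ∀ r a, h ≤ a →
      δ ≤ ∫ x, vit n (gaussianReal 0 (sxi n)) h 1 r (a / n + x) ∂(gaussianReal 0 (sxi n)))
    (r : ℕ) {t x : ℝ} (ht0 : 0 < t) (ht1 : t ≤ 1) (hx : 0 ≤ x) :
    Pr n 1 r h - 1 / (t * (1 + δ ^ 2) ^ r) - t * x ≤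
      ((law n (sig n) (sxi n) r) {f | x ≤ Z h r f}).toReal := by
  haveI := (law_isG n (sig n) (sxi n) r).prob
  have h1 : ∀ a, (1 - 1 / (t * (1 + δ ^ 2) ^ r)) * vit n (gaussianReal 0 (sxi n)) h 1 r a ≤
      vit n (gaussianReal 0 (sxi n)) h t r a := by
    intro a
    refine iter_compare hn (fun k => vit n (gaussianReal 0 (sxi n)) h t k)
      (fun k => vit n (gaussianReal 0 (sxi n)) h 1 k) (fun k => vit_nice h ht0.le ht1 k)
      (fun k => vit_nice h zero_le_one le_rfl k) (fun _ => rfl) (fun _ => rfl) hδ0.le hδ1 ht0 ht1 hδ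
      ?_ r a
    intro a
    simp only [vit]
    split_ifs <;> simp
  have h2 : (1 - 1 / (t * (1 + δ ^ 2) ^ r)) * Pr n 1 r h ≤ Pr n t r h := by
    unfold Pr
    rw [← integral_const_mul]
    exact integral_mono ((vit_nice h zero_le_one le_rfl r).integrable0.const_mul _)
      (vit_nice h ht0.le ht1 r).integrable0 h1
  have h3 : Pr n 1 r h - 1 / (t * (1 + δ ^ 2) ^ r) ≤ Pr n t r h := by
    have := Pr_le_one (n := n) (h := h) zero_le_one le_rfl r
    have h4 : 0 ≤ 1 / (t * (1 + δ ^ 2) ^ r) := by positivity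
    nlinarith
  have hm : MeasurableSet {f : Idx n r → ℝ | x ≤ Z h r f} :=
    measurableSet_le measurable_const ((measurable_of_countable (fun m : ℕ => (m : ℝ))).comp
      (measurable_Z h r))
  have hmp : Measurable (fun f : Idx n r → ℝ => (1 - t) ^ (Z h r f)) :=
    (measurable_of_countable (fun m : ℕ => (1 - t) ^ m)).comp (measurable_Z h r)
  have h4 := law_gen (n := n) (by omega) (sig n) (sxi n) h ht0.le ht1 r
  have h5 : ∫ f, (1 - t * x - ({f | x ≤ Z h r f} : Set (Idx n r → ℝ)).indicator (fun _ => (1:ℝ)) f)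
      ∂(law n (sig n) (sxi n) r) ≤ ∫ f, (1 - t) ^ (Z h r f) ∂(law n (sig n) (sxi n) r) := by
    refine integral_mono ((integrable_const _).sub ((integrable_const _).indicator hm)) ?_ ?_
    · refine Integrable.of_bound hmp.aestronglyMeasurable 1 (Eventually.of_forall fun f => ?_)
      rw [Real.norm_eq_abs, abs_of_nonneg (pow_nonneg (by linarith) _)]
      exact pow_le_one₀ (by linarith) (by linarith)
    intro f
    simp only
    by_cases hf : f ∈ {f : Idx n r → ℝ | x ≤ Z h r f}
    · rw [Set.indicator_of_mem hf]
      have : 0 ≤ (1 - t) ^ (Z h r f) := pow_nonneg (by linarith) _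
      have : 0 ≤ t * x := by positivity
      linarith
    · rw [Set.indicator_of_notMem hf]
      have hlt : (Z h r f : ℝ) < x := not_le.1 hf
      have := one_add_mul_le_pow (a := -t) (by linarith) (Z h r f)
      rw [show 1 + -t = 1 - t by ring] at this
      nlinarith
  rw [integral_sub (integrable_const _) ((integrable_const _).indicator hm),
    integral_indicator_const _ hm, h4] at h5
  simp [Measure.real] at h5
  unfold Pr at h3 ⊢
  linarith

/-- finite depth approximation of η -/
lemma Pr_deep (hn : 2 ≤ n) {h δ : ℝ} (hδ0 : 0 < δ) (hδ1 : δ ≤ 1)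
    (hδ : ∀ r a, h ≤ a →
      δ ≤ ∫ x, vit n (gaussianReal 0 (sxi n)) h 1 r (a / n + x) ∂(gaussianReal 0 (sxi n)))
    (r l : ℕ) : Pr n 1 r h - 1 / (δ * (1 + δ ^ 2) ^ r) ≤ Pr n 1 (l + r) h := by
  set ν := gaussianReal 0 (sxi n) with hν
  have h1 : ∀ a, (1 - 1 / (δ * (1 + δ ^ 2) ^ r)) * vit n ν h 1 r a ≤ vit n ν h 1 (l + r) a := by
    intro a
    refine iter_compare hn (fun k => vit n ν h 1 (l + k))
      (fun k => vit n ν h 1 k) (fun k => vit_nice h zero_le_one le_rfl _)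
      (fun k => vit_nice h zero_le_one le_rfl k) (fun _ => rfl) (fun _ => rfl) hδ0.le hδ1 hδ0 hδ1 hδ
      ?_ r a
    intro a
    by_cases ha : h ≤ a
    swap
    · simp only [vit]; rw [if_neg ha, mul_zero]; exact (vit_nice h zero_le_one le_rfl _).nonneg a
    cases l with
    | zero => simp only [vit]; rw [if_pos ha]; simpa using hδ1
    | succ l =>
      simp only [vit, add_zero, bop]
      rw [if_pos ha, if_pos ha, mul_one]
      have hv := vit_nice (n := n) (ν := ν) h zero_le_one le_rfl l
      have h3 := hv.int_le_one (ν := ν) (a / n)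
      have h4 := hv.int_nonneg (ν := ν) (a / n)
      have h5 := hδ l a ha
      have h6 : (1 - ∫ x, vit n ν h 1 l (a / n + x) ∂ν) ^ n ≤
          (1 - ∫ x, vit n ν h 1 l (a / n + x) ∂ν) ^ 1 :=
        pow_le_pow_of_le_one (by linarith) (by linarith) (by omega)
      linarith
  have h2 : (1 - 1 / (δ * (1 + δ ^ 2) ^ r)) * Pr n 1 r h ≤ Pr n 1 (l + r) h := by
    unfold Pr
    rw [← integral_const_mul]
    exact integral_mono ((vit_nice h zero_le_one le_rfl r).integrable0.const_mul _)
      (vit_nice h zero_le_one le_rfl _).integrable0 h1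
  have := Pr_le_one (n := n) (h := h) zero_le_one le_rfl r
  have h4 : 0 ≤ 1 / (δ * (1 + δ ^ 2) ^ r) := by positivity
  nlinarith

lemma gauss_ae_ne {v : ℝ≥0} (hv : v ≠ 0) (b : ℝ) : ∀ᵐ x ∂(gaussianReal 0 v), x ≠ b := by
  haveI := noAtoms_gaussianReal (μ := 0) hv
  rw [ae_iff]; simp

lemma vit_right (hn : 2 ≤ n) (h : ℝ) (r : ℕ) : ∀ a, a ≠ h →
    Tendsto (fun h' => vit n (gaussianReal 0 (sxi n)) h' 1 r a) (nhdsWithin h (Ioi h))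
      (nhds (vit n (gaussianReal 0 (sxi n)) h 1 r a)) := by
  set ν := gaussianReal 0 (sxi n) with hν
  have hlt : ∀ a, h < a → ∀ᶠ h' in nhdsWithin h (Ioi h), h' ≤ a := by
    intro a ha
    exact (eventually_le_nhds ha).filter_mono nhdsWithin_le_nhds
  have hgt : ∀ a, a < h → ∀ᶠ h' in nhdsWithin h (Ioi h), ¬ h' ≤ a := by
    intro a ha
    filter_upwards [self_mem_nhdsWithin] with h' hh'
    have : h < h' := hh'
    linarith
  induction r with
  | zero =>
    intro a ha
    refine tendsto_const_nhds.congr' ?_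
    rcases lt_or_gt_of_ne ha with h1 | h1
    · filter_upwards [hgt a h1] with h' hh'
      simp only [vit]; rw [if_neg hh', if_neg (not_le.2 h1)]
    · filter_upwards [hlt a h1] with h' hh'
      simp only [vit]; rw [if_pos hh', if_pos h1.le]
  | succ r ih =>
    intro a ha
    rcases lt_or_gt_of_ne ha with h1 | h1
    · refine tendsto_const_nhds.congr' ?_
      filter_upwards [hgt a h1] with h' hh'
      simp only [vit, bop]; rw [if_neg hh', if_neg (not_le.2 h1)]
    · have hi : Tendsto (fun h' => ∫ x, vit n ν h' 1 r (a / n + x) ∂ν) (nhdsWithin h (Ioi h))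
          (nhds (∫ x, vit n ν h 1 r (a / n + x) ∂ν)) := by
        refine tendsto_integral_filter_of_dominated_convergence (fun _ => 1) ?_ ?_ (integrable_const _) ?_
        · exact Eventually.of_forall fun h' =>
            ((vit_nice h' zero_le_one le_rfl r).integrable _).aestronglyMeasurable
        · refine Eventually.of_forall fun h' => Eventually.of_forall fun x => ?_
          have hv := vit_nice (n := n) (ν := ν) h' zero_le_one le_rfl r
          rw [Real.norm_eq_abs, abs_of_nonneg (hv.nonneg _)]; exact hv.le_one _
        · filter_upwards [gauss_ae_ne (sxi_pos hn) (h - a / n)] with x hx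
          exact ih _ (fun e => hx (by linarith))
      have h2 := ((tendsto_const_nhds (x := (1:ℝ))).sub hi).pow n
      have h3 := (tendsto_const_nhds (x := (1:ℝ))).sub h2
      have e : vit n ν h 1 (r+1) a = 1 - (1 - ∫ x, vit n ν h 1 r (a / n + x) ∂ν) ^ n := by
        simp only [vit, bop]; rw [if_pos h1.le]
      rw [e]
      refine h3.congr' ?_
      filter_upwards [hlt a h1] with h' hh'
      simp only [vit, bop]; rw [if_pos hh']

lemma Pr_right (hn : 2 ≤ n) (h : ℝ) (r : ℕ) :
    Tendsto (fun h' => Pr n 1 r h') (nhdsWithin h (Ioi h)) (nhds (Pr n 1 r h)) := by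
  refine tendsto_integral_filter_of_dominated_convergence (fun _ => 1) ?_ ?_ (integrable_const _) ?_
  · exact Eventually.of_forall fun h' =>
      (vit_nice h' zero_le_one le_rfl r).integrable0.aestronglyMeasurable
  · refine Eventually.of_forall fun h' => Eventually.of_forall fun x => ?_
    have hv := vit_nice (n := n) (ν := gaussianReal 0 (sxi n)) h' zero_le_one le_rfl r
    rw [Real.norm_eq_abs, abs_of_nonneg (hv.nonneg _)]; exact hv.le_one _
  · filter_upwards [gauss_ae_ne (sig_pos hn) h] with x hx
    exact vit_right hn h r x hx

/-- summary of the tree analysis -/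
lemma tree_summary (hn : 2 ≤ n) (ht : IsRegTree Gt (n+1)) {q w : T} (hq : Gt.Adj w q) {h : ℝ}
    {μT : Measure (T → ℝ)} (hμT : IsGaussianField μT (treeGreen Gt (n+1)))
    (hh : h < hstar Gt w μT) :
    ∃ δ : ℝ, 0 < δ ∧ δ ≤ 1 ∧
      (∀ h', h ≤ h' → h' ≤ (h + hstar Gt w μT) / 2 → ∀ (r : ℕ) (t x : ℝ), 0 < t → t ≤ 1 → 0 ≤ x →
        etaPlus Gt w q μT h' - 1 / (t * (1 + δ ^ 2) ^ r) - t * x ≤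
          ((law n (sig n) (sxi n) r) {f | x ≤ Z h' r f}).toReal) ∧
      (∀ ζ : ℝ, 0 < ζ → ∀ᶠ h' in nhdsWithin h (Ioi h),
        etaPlus Gt w q μT h - ζ ≤ etaPlus Gt w q μT h') := by
  set h1 := (h + hstar Gt w μT) / 2 with hh1
  have hlt : h1 < hstar Gt w μT := by rw [hh1]; linarith
  have hlt' : h < h1 := by rw [hh1]; linarith
  have hpos := eta_pos hn ht hq hμT hlt
  obtain ⟨δ, hδ0, hδ1, hδ⟩ := unif_delta (h := h) hn hpos (fun r => eta_le_Pr hn ht hq h1 hμT r)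
  refine ⟨δ, hδ0, hδ1, ?_, ?_⟩
  · intro h' hh' hh2 r t x ht0 ht1 hx
    have := growth hn hδ0 hδ1 (fun r a ha => hδ r h' a hh' hh2 ha) r ht0 ht1 hx
    have h2 := eta_le_Pr hn ht hq h' hμT r
    linarith
  · intro ζ hζ
    have hdecay : Tendsto (fun r : ℕ => 1 / (δ * (1 + δ ^ 2) ^ r)) atTop (nhds 0) := by
      have h2 : Tendsto (fun r : ℕ => (1 + δ ^ 2) ^ r) atTop atTop :=
        tendsto_pow_atTop_atTop_of_one_lt (by nlinarith [pow_pos hδ0 2])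
      have := (h2.const_mul_atTop hδ0).inv_tendsto_atTop
      refine this.congr fun r => ?_
      simp [one_div]
    obtain ⟨r, hr⟩ := (hdecay.eventually_lt_const (half_pos hζ)).exists
    have hR := (Pr_right hn h r).eventually_const_lt (show Pr n 1 r h - ζ / 2 < Pr n 1 r h by linarith)
    have hle : ∀ᶠ h' in nhdsWithin h (Ioi h), h' ≤ h1 :=
      (eventually_le_nhds hlt').filter_mono nhdsWithin_le_nhds
    filter_upwards [hR, hle, self_mem_nhdsWithin] with h' e1 e2 e3
    have e3' : h < h' := e3
    have e4 : Pr n 1 r h' - 1 / (δ * (1 + δ ^ 2) ^ r) ≤ etaPlus Gt w q μT h' := by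
      have := (eta_tendsto hn ht hq h' hμT).comp (tendsto_add_atTop_nat r)
      refine ge_of_tendsto' this fun l => ?_
      exact Pr_deep hn hδ0 hδ1 (fun r a ha => hδ r h' a e3'.le e2 ha) r l
    have e5 := eta_le_Pr hn ht hq h hμT r
    linarith
end
end GFFP

namespace GFFP
open GFF

section
variable {I : Type} [Fintype I]

def thick (E : Set (I → ℝ)) (ε : ℝ) : Set (I → ℝ) := {g | ∃ f ∈ E, ∀ j, |f j - g j| < ε}

lemma thick_open (E : Set (I → ℝ)) (ε : ℝ) : IsOpen (thick E ε) := by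
  have : thick E ε = ⋃ f ∈ E, ⋂ j, {g : I → ℝ | |f j - g j| < ε} := by
    ext g; simp [thick]
  rw [this]
  refine isOpen_biUnion fun f _ => isOpen_iInter_of_finite fun j => ?_
  exact isOpen_lt (by fun_prop) continuous_const

lemma conv_lower (A B : Measure (I → ℝ)) [IsProbabilityMeasure A] [IsProbabilityMeasure B]
    (E : Set (I → ℝ)) {ε : ℝ} :
    A E ≤ (A.conv B) (thick E ε) + B {w | ∃ j, ε ≤ |w j|} := by
  have e1 : (A.conv B) (thick E ε) = (A.prod B) {p | p.1 + p.2 ∈ thick E ε} := by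
    rw [Measure.conv, Measure.map_apply (by fun_prop) (thick_open E ε).measurableSet]; rfl
  have e2 : B {w | ∃ j, ε ≤ |w j|} = (A.prod B) (univ ×ˢ {w | ∃ j, ε ≤ |w j|}) := by
    rw [Measure.prod_prod, measure_univ, one_mul]
  have e3 : A E = (A.prod B) (E ×ˢ univ) := by
    rw [Measure.prod_prod, measure_univ, mul_one]
  rw [e1, e2, e3]
  refine le_trans (measure_mono ?_) (measure_union_le _ _)
  rintro ⟨f, w⟩ ⟨hf, -⟩
  by_cases hw : ∃ j, ε ≤ |w j|
  · right; exact ⟨trivial, hw⟩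
  · left
    push Not at hw
    refine ⟨f, hf, fun j => ?_⟩
    simpa using hw j

lemma conv_upper (A B : Measure (I → ℝ)) [IsProbabilityMeasure A] [IsProbabilityMeasure B]
    (E E' : Set (I → ℝ)) {ε : ℝ}
    (hE : ∀ f g, f ∈ E → (∀ j, |f j - g j| < 2 * ε) → g ∈ E') :
    (A.conv B) (thick E ε) ≤ A E' + B {w | ∃ j, ε ≤ |w j|} := by
  have e1 : (A.conv B) (thick E ε) = (A.prod B) {p | p.1 + p.2 ∈ thick E ε} := by
    rw [Measure.conv, Measure.map_apply (by fun_prop) (thick_open E ε).measurableSet]; rfl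
  have e2 : B {w | ∃ j, ε ≤ |w j|} = (A.prod B) (univ ×ˢ {w | ∃ j, ε ≤ |w j|}) := by
    rw [Measure.prod_prod, measure_univ, one_mul]
  have e3 : A E' = (A.prod B) (E' ×ˢ univ) := by
    rw [Measure.prod_prod, measure_univ, mul_one]
  rw [e1, e2, e3]
  refine le_trans (measure_mono ?_) (measure_union_le _ _)
  rintro ⟨g, w⟩ ⟨f, hf, hfg⟩
  by_cases hw : ∃ j, ε ≤ |w j|
  · right; exact ⟨trivial, hw⟩
  · left
    push Not at hw
    refine ⟨hE f g hf fun j => ?_, trivial⟩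
    have h1 := hfg j
    have h2 := hw j
    simp only [Pi.add_apply] at h1
    have : f j - g j = (f j - (g j + w j)) + w j := by ring
    rw [this]
    exact lt_of_le_of_lt (abs_add_le _ _) (by linarith)

lemma quad_bound (M : I → I → ℝ) {δ : ℝ} (hδ : ∀ i j, |M i j| ≤ δ) (c : I → ℝ) :
    |∑ i, ∑ j, c i * c j * M i j| ≤ Fintype.card I * δ * ∑ i, c i ^ 2 := by
  rcases isEmpty_or_nonempty I with hI | ⟨⟨i0⟩⟩
  · simp
  have hδ0 : 0 ≤ δ := (abs_nonneg _).trans (hδ i0 i0)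
  calc |∑ i, ∑ j, c i * c j * M i j| ≤ ∑ i, ∑ j, |c i * c j * M i j| :=
        (Finset.abs_sum_le_sum_abs _ _).trans (Finset.sum_le_sum fun i _ => Finset.abs_sum_le_sum_abs _ _)
    _ ≤ ∑ i, ∑ j, (c i ^ 2 + c j ^ 2) / 2 * δ := by
        refine Finset.sum_le_sum fun i _ => Finset.sum_le_sum fun j _ => ?_
        rw [abs_mul]
        refine mul_le_mul ?_ (hδ i j) (abs_nonneg _) (by positivity)
        rw [abs_mul]
        nlinarith [sq_nonneg (|c i| - |c j|), sq_abs (c i), sq_abs (c j)]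
    _ = Fintype.card I * δ * ∑ i, c i ^ 2 := by
        simp only [← Finset.sum_mul, ← Finset.sum_div, Finset.sum_add_distrib, Finset.sum_const,
          Finset.card_univ, nsmul_eq_mul, ← Finset.mul_sum]
        ring

lemma gauss_compare {P1 P2 : Measure (I → ℝ)} {K1 K2 : I → I → ℝ}
    (h1 : IsG P1 (fun c => ∑ i, ∑ j, c i * c j * K1 i j))
    (h2 : IsG P2 (fun c => ∑ i, ∑ j, c i * c j * K2 i j))
    (s1 : ∀ i j, K1 i j = K1 j i) (s2 : ∀ i j, K2 i j = K2 j i)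
    {δ : ℝ} (hδ0 : 0 ≤ δ) (hδ : ∀ i j, |K1 i j - K2 i j| ≤ δ)
    (E E' : Set (I → ℝ)) {ε : ℝ} (hε : 0 < ε)
    (hE : ∀ f g, f ∈ E → (∀ j, |f j - g j| < 2 * ε) → g ∈ E') :
    P2 E ≤ P1 E' + ENNReal.ofReal (2 * (Fintype.card I * ((Fintype.card I + 1) * δ / ε ^ 2))) := by
  set D : ℝ := (Fintype.card I : ℝ) with hD
  have hD0 : 0 ≤ D := Nat.cast_nonneg _
  have hdiag : ∀ (c : I → ℝ) (a : ℝ), ∑ i, ∑ j, c i * c j * (if i = j then a else 0) = a * ∑ i, c i ^ 2 := by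
    intro c a
    simp only [mul_ite, mul_zero, Finset.sum_ite_eq, Finset.mem_univ, if_true, Finset.mul_sum]
    exact Finset.sum_congr rfl fun i _ => by ring
  -- noise matrices
  let B : Matrix I I ℝ := Matrix.of fun i j => if i = j then D * δ else 0
  let C : Matrix I I ℝ := Matrix.of fun i j => K2 i j - K1 i j + if i = j then D * δ else 0
  have hsum : ∀ c : I → ℝ, ∑ i, ∑ j, c i * c j * C i j =
      (∑ i, ∑ j, c i * c j * (K2 i j - K1 i j)) + D * δ * ∑ i, c i ^ 2 := by
    intro c
    rw [← hdiag, ← Finset.sum_add_distrib]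
    refine Finset.sum_congr rfl fun i _ => ?_
    rw [← Finset.sum_add_distrib]
    refine Finset.sum_congr rfl fun j _ => ?_
    simp only [C, Matrix.of_apply]; ring
  have hpsd : ∀ M : Matrix I I ℝ, (∀ i j, M i j = M j i) → (∀ c : I → ℝ, 0 ≤ ∑ i, ∑ j, c i * c j * M i j) →
      M.PosSemidef := by
    intro M hs hp
    refine Matrix.PosSemidef.of_dotProduct_mulVec_nonneg ?_ fun x => ?_
    · ext i j; simp [hs i j]
    · have := hp x
      refine le_of_le_of_eq this ?_
      simp only [dotProduct, Matrix.mulVec, star_trivial, Finset.mul_sum]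
      exact Finset.sum_congr rfl fun i _ => Finset.sum_congr rfl fun j _ => by ring
  have hB : B.PosSemidef := by
    refine hpsd _ (fun i j => by simp [B, eq_comm]) fun c => ?_
    simp only [B, Matrix.of_apply]
    rw [hdiag]
    exact mul_nonneg (mul_nonneg hD0 hδ0) (Finset.sum_nonneg fun i _ => sq_nonneg _)
  have hC : C.PosSemidef := by
    refine hpsd _ (fun i j => by simp [C, eq_comm, s1 i j, s2 i j]) fun c => ?_
    rw [hsum]
    have := quad_bound (fun i j => K2 i j - K1 i j) (δ := δ) (fun i j => by
      rw [abs_sub_comm]; exact hδ i j) c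
    have := neg_abs_le (∑ i, ∑ j, c i * c j * (K2 i j - K1 i j))
    linarith
  obtain ⟨PB, hPB⟩ := exists_isG B hB
  obtain ⟨PC, hPC⟩ := exists_isG C hC
  have heq : P2.conv PB = P1.conv PC := by
    refine (h2.conv hPB).ext (h1.conv hPC) fun c => ?_
    rw [hsum]
    simp only [B, Matrix.of_apply]
    rw [hdiag, ← add_assoc, ← Finset.sum_add_distrib]
    congr 1
    refine Finset.sum_congr rfl fun i _ => ?_
    rw [← Finset.sum_add_distrib]
    exact Finset.sum_congr rfl fun j _ => by ring
  haveI := h1.prob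
  haveI := h2.prob
  haveI := hPB.prob
  haveI := hPC.prob
  have hsingle : ∀ (M : Matrix I I ℝ) (j : I) (s : ℝ),
      ∑ a, ∑ b, (Pi.single j s : I → ℝ) a * (Pi.single j s : I → ℝ) b * M a b = M j j * s ^ 2 := by
    intro M j s
    rw [Finset.sum_eq_single j]
    · rw [Finset.sum_eq_single j]
      · simp; ring
      · intro b _ hb; simp [hb]
      · simp
    · intro b _ hb; simp [hb]
    · simp
  have tB : PB {w | ∃ j, ε ≤ |w j|} ≤ ENNReal.ofReal (D * ((D + 1) * δ / ε ^ 2)) := by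
    refine hPB.union_tail (v := fun j => B j j) ?_ ?_ (fun j s => hsingle B j s) hε
    · intro j; simp [B]; positivity
    · intro j; simp [B]; nlinarith
  have tC : PC {w | ∃ j, ε ≤ |w j|} ≤ ENNReal.ofReal (D * ((D + 1) * δ / ε ^ 2)) := by
    refine hPC.union_tail (v := fun j => C j j) ?_ ?_ (fun j s => hsingle C j s) hε
    · intro j; exact hC.diag_nonneg
    · intro j; simp [C]; have := hδ j j; have := neg_abs_le (K1 j j - K2 j j); nlinarith
  have hx : 0 ≤ D * ((D + 1) * δ / ε ^ 2) := by positivity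
  calc P2 E ≤ (P2.conv PB) (thick E ε) + PB {w | ∃ j, ε ≤ |w j|} := conv_lower _ _ _
    _ ≤ (P1 E' + PC {w | ∃ j, ε ≤ |w j|}) + PB {w | ∃ j, ε ≤ |w j|} := by
        rw [heq]; gcongr; exact conv_upper _ _ _ _ hE
    _ ≤ (P1 E' + ENNReal.ofReal (D * ((D + 1) * δ / ε ^ 2))) + ENNReal.ofReal (D * ((D + 1) * δ / ε ^ 2)) := by
        gcongr
    _ = _ := by
        rw [add_assoc, ← ENNReal.ofReal_add hx hx]; congr 2; ring
end

end GFFP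

namespace GFFP
open GFF

section spec
variable {V : Type} [Fintype V] {G : SimpleGraph V} {d : ℕ} {β : ℝ}

structure Spec (G : SimpleGraph V) (d : ℕ) (β : ℝ) (v : V → V → ℝ) (m : V → ℝ) : Prop where
  compl : ∀ x y, ∑ i, v i x * v i y = if x = y then 1 else 0
  orth : ∀ i j, ∑ x, v i x * v j x = if i = j then 1 else 0
  eig : ∀ i x, ∑ y, transP G d x y * v i y = (1 - m i) * v i x
  gap : ∀ i, m i = 0 ∨ β ≤ m i
  const : ∀ i, m i = 0 → ∀ x y, v i x = v i y

lemma transP_symm (x y : V) : transP G d x y = transP G d y x := by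
  simp [transP, SimpleGraph.adj_comm]

lemma exists_spec (hd : 1 ≤ d) (hc : G.Connected) (hreg : IsReg G d) (hgap : SpectralGapLB G d β) :
    ∃ v m, Spec G d β v m := by
  have hH : (transP G d).IsHermitian := by
    ext i j; simp [transP_symm (G := G) (d := d) i j]
  let b := hH.eigenvectorBasis
  have hmul : ∀ i, (transP G d).mulVec (fun x => b i x) = hH.eigenvalues i • (fun x => b i x) := by
    intro i
    exact hH.mulVec_eigenvectorBasis i
  have orth : ∀ i j, ∑ x, b i x * b j x = if i = j then 1 else 0 := by
    intro i j
    have := orthonormal_iff_ite.1 b.orthonormal i j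
    rw [← this, PiLp.inner_apply]
    refine Finset.sum_congr rfl fun x _ => ?_
    simp [mul_comm]
  have hU : (Matrix.of fun i x => b i x) * (Matrix.of fun i x => b i x).transpose = (1 : Matrix V V ℝ) := by
    ext i j
    simp only [Matrix.mul_apply, Matrix.transpose_apply, Matrix.of_apply, Matrix.one_apply]
    exact orth i j
  have hU2 := mul_eq_one_comm.1 hU
  have compl : ∀ x y, ∑ i, b i x * b i y = if x = y then 1 else 0 := by
    intro x y
    have := congrFun (congrFun hU2 x) y
    simpa only [Matrix.mul_apply, Matrix.transpose_apply, Matrix.of_apply, Matrix.one_apply] using this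
  have eig : ∀ i x, ∑ y, transP G d x y * b i y = hH.eigenvalues i * b i x := by
    intro i x
    have := congrFun (hmul i) x
    simpa [Matrix.mulVec, dotProduct] using this
  have hb0 : ∀ i, (fun x => b i x) ≠ 0 := by
    intro i h0
    have := orth i i
    have h1 : ∀ x, b i x = 0 := fun x => congrFun h0 x
    simp [h1] at this
  refine ⟨fun i x => b i x, fun i => 1 - hH.eigenvalues i, compl, orth, ?_, ?_, ?_⟩
  · intro i x; rw [eig]; ring
  · intro i
    refine hgap (fun x => b i x) _ ?_ (hb0 i)
    rw [Matrix.sub_mulVec, hmul, Matrix.one_mulVec]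
    ext x; simp; ring
  · intro i hi x y
    have h1 : hH.eigenvalues i = 1 := by linarith
    have hd0 : (d : ℝ) ≠ 0 := by positivity
    have hL : (G.lapMatrix ℝ).mulVec (fun x => b i x) = 0 := by
      ext x
      rw [SimpleGraph.lapMatrix_mulVec_apply]
      have hdeg : G.degree x = d := by
        rw [← hreg x, Nat.card_eq_fintype_card, SimpleGraph.card_neighborSet_eq_degree]
      have h2 := eig i x
      rw [h1, one_mul] at h2
      rw [hdeg]
      have h3 : ∑ y, transP G d x y * b i y = (d:ℝ)⁻¹ * ∑ u ∈ G.neighborFinset x, b i u := by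
        rw [Finset.mul_sum, SimpleGraph.neighborFinset_eq_filter, Finset.sum_filter]
        refine Finset.sum_congr rfl fun y _ => ?_
        simp [transP]
      rw [h3] at h2
      rw [← h2, ← mul_assoc, mul_inv_cancel₀ hd0]
      simp
    exact (SimpleGraph.lapMatrix_mulVec_eq_zero_iff_forall_reachable G).1 hL x y (hc.preconnected x y)

variable {v : V → V → ℝ} {m : V → ℝ}

lemma Spec.pow (S : Spec G d β v m) (k : ℕ) (x y : V) :
    ((transP G d) ^ k) x y = ∑ i, (1 - m i) ^ k * (v i x * v i y) := by
  induction k generalizing x with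
  | zero => simp [Matrix.one_apply, S.compl]
  | succ k ih =>
    rw [pow_succ', Matrix.mul_apply]
    simp_rw [ih, Finset.mul_sum]
    rw [Finset.sum_comm]
    refine Finset.sum_congr rfl fun i _ => ?_
    have := S.eig i x
    calc _ = ∑ z, (transP G d x z * v i z) * ((1 - m i) ^ k * v i y) :=
          Finset.sum_congr rfl fun z _ => by ring
      _ = _ := by rw [← Finset.sum_mul, this]; ring

lemma Spec.heat (S : Spec G d β v m) (t : ℝ) (x y : V) :
    heatK G d t x y = ∑ i, Real.exp (-(m i) * t) * (v i x * v i y) := by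
  have h1 : ∀ i, HasSum (fun k : ℕ => Real.exp (-t) * t ^ k / (Nat.factorial k) * ((1 - m i) ^ k * (v i x * v i y)))
      (Real.exp (-(m i) * t) * (v i x * v i y)) := by
    intro i
    have h2 := NormedSpace.expSeries_div_hasSum_exp (t * (1 - m i))
    rw [← Real.exp_eq_exp_ℝ] at h2
    have h3 := h2.mul_left (Real.exp (-t) * (v i x * v i y))
    have e : Real.exp (-t) * (v i x * v i y) * Real.exp (t * (1 - m i)) = Real.exp (-(m i) * t) * (v i x * v i y) := by
      rw [show -(m i) * t = -t + t * (1 - m i) by ring, Real.exp_add]; ring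
    rw [e] at h3
    have e2 : (fun k : ℕ => Real.exp (-t) * t ^ k / (Nat.factorial k) * ((1 - m i) ^ k * (v i x * v i y))) =
        fun k : ℕ => Real.exp (-t) * (v i x * v i y) * ((t * (1 - m i)) ^ k / (Nat.factorial k)) := by
      funext k
      rw [mul_pow]; ring
    rw [e2]
    exact h3
  have h4 := hasSum_sum (s := Finset.univ) (fun i _ => h1 i)
  rw [heatK, ← h4.tsum_eq]
  congr 1
  ext k
  rw [S.pow, Finset.mul_sum]

lemma Spec.zsum (hd : 1 ≤ d) (hreg : IsReg G d) (S : Spec G d β v m) (x y : V) :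
    ∑ i, (if m i = 0 then v i x * v i y else 0) = 1 / (Fintype.card V : ℝ) := by
  have hN : (Fintype.card V : ℝ) ≠ 0 := by
    haveI : Nonempty V := ⟨x⟩
    exact_mod_cast Fintype.card_ne_zero
  have hd0 : (d : ℝ) ≠ 0 := by positivity
  have hrow : ∀ z : V, ∑ u, transP G d u z = 1 := by
    intro z
    have hdeg : (G.degree z : ℝ) = d := by
      rw [← hreg z, Nat.card_eq_fintype_card, SimpleGraph.card_neighborSet_eq_degree]
    have : ∑ u, transP G d u z = (d:ℝ)⁻¹ * ∑ u : V, if G.Adj z u then (1:ℝ) else 0 := by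
      rw [Finset.mul_sum]
      refine Finset.sum_congr rfl fun u _ => ?_
      simp [transP, SimpleGraph.adj_comm]
    rw [this, ← SimpleGraph.degree_eq_sum_if_adj, hdeg, inv_mul_cancel₀ hd0]
  have hz : ∀ i, m i ≠ 0 → ∑ u, v i u = 0 := by
    intro i hi
    have h1 : ∑ u, ∑ z, transP G d u z * v i z = ∑ z, v i z := by
      rw [Finset.sum_comm]
      refine Finset.sum_congr rfl fun z _ => ?_
      rw [← Finset.sum_mul, hrow, one_mul]
    simp_rw [S.eig] at h1
    rw [← Finset.mul_sum] at h1
    have : m i * ∑ u, v i u = 0 := by linarith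
    exact (mul_eq_zero.1 this).resolve_left hi
  have h1 : ∑ u, ∑ i, v i x * v i u = 1 := by
    simp [S.compl]
  rw [Finset.sum_comm] at h1
  have h2 : ∑ i, ∑ u, v i x * v i u = Fintype.card V * ∑ i, (if m i = 0 then v i x * v i y else 0) := by
    rw [Finset.mul_sum]
    refine Finset.sum_congr rfl fun i _ => ?_
    rw [← Finset.mul_sum]
    by_cases hi : m i = 0
    · rw [if_pos hi]
      have : ∑ u, v i u = Fintype.card V * v i y := by
        rw [Finset.sum_congr rfl fun u _ => S.const i hi u y]; simp
      rw [this]; ring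
    · rw [if_neg hi, hz i hi]; simp
  rw [h2] at h1
  field_simp
  linarith

lemma Spec.green (hβ : 0 < β) (hd : 1 ≤ d) (hreg : IsReg G d) (S : Spec G d β v m) (x y : V) :
    zGreen G d (Fintype.card V) x y = ∑ i, (if m i = 0 then 0 else v i x * v i y / m i) := by
  have e : ∀ t : ℝ, heatK G d t x y - 1 / (Fintype.card V : ℝ) =
      ∑ i, (if m i = 0 then 0 else Real.exp (-(m i) * t) * (v i x * v i y)) := by
    intro t
    rw [S.heat, ← S.zsum hd hreg x y, ← Finset.sum_sub_distrib]
    refine Finset.sum_congr rfl fun i _ => ?_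
    by_cases hi : m i = 0 <;> simp [hi]
  rw [zGreen]
  simp_rw [e]
  have hpos : ∀ i, m i ≠ 0 → 0 < m i := fun i hi => hβ.trans_le ((S.gap i).resolve_left hi)
  rw [integral_finset_sum]
  · refine Finset.sum_congr rfl fun i _ => ?_
    by_cases hi : m i = 0
    · simp [hi]
    · simp only [hi, if_false]
      rw [integral_mul_const, integral_exp_mul_Ioi (by linarith [hpos i hi])]
      simp; field_simp
  · intro i _
    by_cases hi : m i = 0
    · simp [hi]
    · simp only [hi, if_false]
      exact (integrableOn_exp_mul_Ioi (by linarith [hpos i hi]) 0).mul_const _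

lemma Spec.green_est (hβ : 0 < β) (hd : 1 ≤ d) (hreg : IsReg G d) (S : Spec G d β v m) (y z : V)
    (A ν : V → ℝ) (hA : ∀ (f : V → ℝ) (lam : ℝ), (∀ x, ∑ y, transP G d x y * f y = (1 - lam) * f x) →
      lam * ∑ u, A u * f u = f z - ∑ u, ν u * f u) :
    |zGreen G d (Fintype.card V) y z - A y| ≤ β⁻¹ * Real.sqrt (∑ u, ν u ^ 2) +
      |∑ u, A u| / (Fintype.card V : ℝ) := by
  have hpos : ∀ i, m i ≠ 0 → β ≤ m i := fun i hi => ((S.gap i).resolve_left hi)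
  set N : ℝ := (Fintype.card V : ℝ)
  let w : V → ℝ := fun i => if m i = 0 then 0 else v i y / m i
  let c : V → ℝ := fun i => ∑ u, ν u * v i u
  have e1 : zGreen G d (Fintype.card V) y z = A y - (∑ u, A u) * (1 / N) + ∑ i, w i * c i := by
    rw [S.green hβ hd hreg]
    have h1 : A y = ∑ i, v i y * ∑ u, A u * v i u := by
      simp_rw [Finset.mul_sum]
      rw [Finset.sum_comm]
      have : ∀ u, ∑ i, v i y * (A u * v i u) = if y = u then A u else 0 := by
        intro u
        have : ∑ i, v i y * (A u * v i u) = A u * ∑ i, v i y * v i u := by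
          rw [Finset.mul_sum]; exact Finset.sum_congr rfl fun i _ => by ring
        rw [this, S.compl]; simp
      simp [this]
    have h2 : (∑ u, A u) * (1 / N) = ∑ i, if m i = 0 then v i y * ∑ u, A u * v i u else 0 := by
      have : (∑ u, A u) * (1 / N) = ∑ u, A u * ∑ i, (if m i = 0 then v i y * v i u else 0) := by
        rw [Finset.sum_mul]
        refine Finset.sum_congr rfl fun u _ => ?_
        rw [S.zsum hd hreg]
      rw [this]
      simp_rw [Finset.mul_sum]
      rw [Finset.sum_comm]
      refine Finset.sum_congr rfl fun i _ => ?_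
      by_cases hi : m i = 0
      · simp only [hi, if_true]; exact Finset.sum_congr rfl fun u _ => by ring
      · simp [hi]
    rw [h2]
    conv_rhs => rw [h1]
    rw [← Finset.sum_sub_distrib, ← Finset.sum_add_distrib]
    refine Finset.sum_congr rfl fun i _ => ?_
    by_cases hi : m i = 0
    · simp [hi, w]
    · simp only [hi, if_false, w, c]
      have := hA (v i) (m i) (S.eig i)
      have h3 : v i z = m i * ∑ u, A u * v i u + ∑ u, ν u * v i u := by linarith
      rw [h3]
      field_simp
      ring
  have hw : ∑ i, w i ^ 2 ≤ (β⁻¹) ^ 2 := by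
    have : ∀ i, w i ^ 2 ≤ (β⁻¹) ^ 2 * (v i y * v i y) := by
      intro i
      by_cases hi : m i = 0
      · simp only [w, hi, if_true]; nlinarith [mul_nonneg (sq_nonneg β⁻¹) (mul_self_nonneg (v i y))]
      · simp only [w, hi, if_false]
        have h5 : (m i)⁻¹ ≤ β⁻¹ := inv_anti₀ hβ (hpos i hi)
        have h6 : 0 ≤ (m i)⁻¹ := inv_nonneg.2 (hβ.le.trans (hpos i hi))
        have h7 : (m i)⁻¹ ^ 2 ≤ β⁻¹ ^ 2 := by gcongr
        rw [div_eq_mul_inv, mul_pow, mul_comm, sq (v i y)]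
        exact mul_le_mul_of_nonneg_right h7 (mul_self_nonneg _)
    calc _ ≤ ∑ i, (β⁻¹) ^ 2 * (v i y * v i y) := Finset.sum_le_sum fun i _ => this i
      _ = _ := by rw [← Finset.mul_sum, S.compl]; simp
  have hcs : ∑ i, c i ^ 2 = ∑ u, ν u ^ 2 := by
    have : ∀ i, c i ^ 2 = ∑ u, ∑ u', ν u * ν u' * (v i u * v i u') := by
      intro i
      rw [sq, Finset.sum_mul_sum]
      exact Finset.sum_congr rfl fun u _ => Finset.sum_congr rfl fun u' _ => by ring
    simp_rw [this]
    rw [Finset.sum_comm]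
    refine Finset.sum_congr rfl fun u _ => ?_
    rw [Finset.sum_comm]
    simp_rw [← Finset.mul_sum, S.compl]
    simp [sq]
  have hcauchy : |∑ i, w i * c i| ≤ β⁻¹ * Real.sqrt (∑ u, ν u ^ 2) := by
    apply Real.abs_le_sqrt (Finset.sum_mul_sq_le_sq_mul_sq _ _ _) |>.trans
    rw [hcs, Real.sqrt_mul (Finset.sum_nonneg fun i _ => sq_nonneg _)]
    gcongr
    calc _ ≤ Real.sqrt ((β⁻¹) ^ 2) := Real.sqrt_le_sqrt hw
      _ = β⁻¹ := Real.sqrt_sq (by positivity)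
  rw [e1]
  have hN : 0 ≤ N := Nat.cast_nonneg _
  calc |A y - (∑ u, A u) * (1 / N) + ∑ i, w i * c i - A y| = |∑ i, w i * c i + -((∑ u, A u) * (1 / N))| := by
        congr 1; ring
    _ ≤ |∑ i, w i * c i| + |-((∑ u, A u) * (1 / N))| := abs_add_le _ _
    _ ≤ _ := by
        rw [abs_neg, abs_mul, abs_of_nonneg (show 0 ≤ 1 / N by positivity), mul_one_div]
        linarith

lemma Spec.green_psd (hβ : 0 < β) (hd : 1 ≤ d) (hreg : IsReg G d) (S : Spec G d β v m)
    {I : Type} [Fintype I] (τ : I → V) (c : I → ℝ) :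
    0 ≤ ∑ i, ∑ j, c i * c j * zGreen G d (Fintype.card V) (τ i) (τ j) := by
  simp_rw [S.green hβ hd hreg]
  have : ∑ i, ∑ j, c i * c j * ∑ l, (if m l = 0 then 0 else v l (τ i) * v l (τ j) / m l) =
      ∑ l, (if m l = 0 then 0 else (∑ i, c i * v l (τ i)) ^ 2 / m l) := by
    simp_rw [Finset.mul_sum]
    have : ∀ i, ∑ j, ∑ l, c i * c j * (if m l = 0 then 0 else v l (τ i) * v l (τ j) / m l) =
      ∑ l, ∑ j, c i * c j * (if m l = 0 then 0 else v l (τ i) * v l (τ j) / m l) := fun i => Finset.sum_comm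
    simp_rw [this]
    rw [Finset.sum_comm]
    refine Finset.sum_congr rfl fun l _ => ?_
    by_cases hl : m l = 0
    · simp [hl]
    · simp only [hl, if_false]
      rw [sq, Finset.sum_mul_sum, Finset.sum_div]
      refine Finset.sum_congr rfl fun i _ => ?_
      rw [Finset.sum_div]
      exact Finset.sum_congr rfl fun j _ => by ring
  rw [this]
  refine Finset.sum_nonneg fun l _ => ?_
  by_cases hl : m l = 0
  · simp [hl]
  · simp only [hl, if_false]
    exact div_nonneg (sq_nonneg _) (hβ.le.trans ((S.gap l).resolve_left hl))

lemma Spec.green_symm (hβ : 0 < β) (hd : 1 ≤ d) (hreg : IsReg G d) (S : Spec G d β v m) (x y : V) :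
    zGreen G d (Fintype.card V) x y = zGreen G d (Fintype.card V) y x := by
  rw [S.green hβ hd hreg, S.green hβ hd hreg]
  exact Finset.sum_congr rfl fun i _ => by rw [mul_comm (v i x)]

lemma Spec.beta_bound [Nonempty V] (hd : 1 ≤ d) (hreg : IsReg G d) (hβ : 0 < β) (S : Spec G d β v m) :
    β * ((Fintype.card V : ℝ) - 1) ≤ Fintype.card V := by
  have hN : (Fintype.card V : ℝ) ≠ 0 := by exact_mod_cast Fintype.card_ne_zero
  have h1 : ∑ i, m i = Fintype.card V := by
    have : ∀ i, m i = ∑ x, (v i x * v i x - ∑ y, transP G d x y * (v i y * v i x)) := by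
      intro i
      have h2 : ∀ x, ∑ y, transP G d x y * (v i y * v i x) = (1 - m i) * (v i x * v i x) := by
        intro x
        have := S.eig i x
        rw [← mul_assoc, ← this, Finset.sum_mul]
        exact Finset.sum_congr rfl fun y _ => by ring
      simp_rw [h2]
      rw [Finset.sum_sub_distrib, ← Finset.mul_sum, S.orth]
      simp
    simp_rw [this]
    rw [Finset.sum_comm]
    have : ∀ x : V, ∑ i, (v i x * v i x - ∑ y, transP G d x y * (v i y * v i x)) = 1 := by
      intro x
      rw [Finset.sum_sub_distrib, S.compl, Finset.sum_comm]
      simp_rw [← Finset.mul_sum, S.compl]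
      simp [transP]
    simp [this]
  have hx : ∃ x : V, True := ⟨Classical.arbitrary V, trivial⟩
  obtain ⟨x, -⟩ := hx
  have h2 : ∑ i, (if m i = 0 then (1:ℝ) else 0) = 1 := by
    have h3 := S.zsum hd hreg x x
    have h4 : ∀ i, (if m i = 0 then v i x * v i x else 0) = (if m i = 0 then (1:ℝ) else 0) * (1 / (Fintype.card V : ℝ)) := by
      intro i
      by_cases hi : m i = 0
      · simp only [hi, if_true, one_mul]
        have := S.orth i i
        rw [Finset.sum_congr rfl fun u _ => by rw [S.const i hi u x]] at this
        simp at this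
        field_simp
        linarith
      · simp [hi]
    simp_rw [h4] at h3
    rw [← Finset.sum_mul] at h3
    field_simp at h3
    linarith
  have h5 : ∀ i, β - β * (if m i = 0 then (1:ℝ) else 0) ≤ m i := by
    intro i
    by_cases hi : m i = 0
    · simp [hi]
    · simp [hi]; exact (S.gap i).resolve_left hi
  have h6 := Finset.sum_le_sum (s := Finset.univ) fun i _ => h5 i
  rw [h1, Finset.sum_sub_distrib, ← Finset.mul_sum, h2] at h6
  simp at h6
  linarith
end spec

end GFFP

namespace GFFP
open GFF

section sph
variable {T : Type} {Gt : SimpleGraph T} {n : ℕ} {ch : T → T → Fin n → T}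

noncomputable def spP (Gt : SimpleGraph T) (q w : T) (j : ℕ) : Finset T :=
  if h : {v | Gt.dist w v = j ∧ Gt.dist q v = j + 1}.Finite then h.toFinset else ∅

noncomputable def sph (Gt : SimpleGraph T) (z : T) (j : ℕ) : Finset T :=
  if h : {v | Gt.dist z v = j}.Finite then h.toFinset else ∅

lemma mem_sph (ht : IsRegTree Gt (n+1)) {z v : T} {j : ℕ} : v ∈ sph Gt z j ↔ Gt.dist z v = j := by
  have h : {v | Gt.dist z v = j}.Finite :=
    (ball_finite ht.1 (by omega) ht.2.2 z j).subset fun v hv => le_of_eq hv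
  simp [sph, h]

lemma mem_spP (ht : IsRegTree Gt (n+1)) {q w v : T} {j : ℕ} :
    v ∈ spP Gt q w j ↔ Gt.dist w v = j ∧ Gt.dist q v = j + 1 := by
  have h : {v | Gt.dist w v = j ∧ Gt.dist q v = j + 1}.Finite :=
    (ball_finite ht.1 (by omega) ht.2.2 w j).subset fun v hv => le_of_eq hv.1
  simp [spP, h]

lemma step_toward (hc : Gt.Connected) {w v : T} {j : ℕ} (h : Gt.dist w v = j + 1) :
    ∃ c, Gt.Adj w c ∧ Gt.dist c v = j := by
  obtain ⟨p, hp⟩ := hc.exists_walk_length_eq_dist w v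
  cases p with
  | nil => simp at h
  | cons ha p =>
    rename_i c
    refine ⟨c, ha, le_antisymm ?_ ?_⟩
    · have := SimpleGraph.dist_le p
      simp at hp; omega
    · have := hc.dist_triangle (u := w) (v := c) (w := v)
      rw [SimpleGraph.dist_eq_one_iff_adj.2 ha] at this
      omega

lemma spP_zero (ht : IsRegTree Gt (n+1)) {q w : T} (hq : Gt.Adj w q) : spP Gt q w 0 = {w} := by
  ext v
  rw [mem_spP ht, Finset.mem_singleton, ht.1.dist_eq_zero_iff]
  constructor
  · rintro ⟨rfl, -⟩; rfl
  · rintro rfl; exact ⟨rfl, SimpleGraph.dist_eq_one_iff_adj.2 hq.symm⟩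

lemma sph_zero (ht : IsRegTree Gt (n+1)) (z : T) : sph Gt z 0 = {z} := by
  ext v
  rw [mem_sph ht, Finset.mem_singleton, ht.1.dist_eq_zero_iff]
  exact eq_comm

lemma tree_dist' (ht : IsRegTree Gt (n+1)) {u q w v : T} (hq : Gt.Adj w q) (hv : Gt.Adj w v) (hne : v ≠ q)
    (h : Gt.dist w u = Gt.dist q u + 1) : Gt.dist v u = Gt.dist w u + 1 := by
  rw [SimpleGraph.dist_comm (u := v), SimpleGraph.dist_comm (u := w)]
  refine tree_dist ⟨ht.1, ht.2.1⟩ u hq hv hne ?_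
  rw [SimpleGraph.dist_comm, h, SimpleGraph.dist_comm]

lemma spP_succ (ht : IsRegTree Gt (n+1)) (hch : Chd Gt ch) {q w : T} (hq : Gt.Adj w q) (j : ℕ)
    (f : T → ℝ) : ∑ v ∈ spP Gt q w (j+1), f v = ∑ i, ∑ v ∈ spP Gt w (ch q w i) j, f v := by
  have : spP Gt q w (j+1) = Finset.univ.biUnion fun i => spP Gt w (ch q w i) j := by
    ext v
    simp only [mem_spP ht, Finset.mem_biUnion, Finset.mem_univ, true_and]
    constructor
    · rintro ⟨h1, h2⟩
      obtain ⟨c, hc1, hc2⟩ := step_toward ht.1 h1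
      obtain ⟨i, hi⟩ := hch.surj q w hq c hc1 (by rintro rfl; omega)
      exact ⟨i, by rw [hi]; exact hc2, h1⟩
    · rintro ⟨i, h1, h2⟩
      refine ⟨h2, ?_⟩
      rw [tree_dist' ht (hch.adj q w hq i) hq (hch.ne q w hq i).symm (u := v) (by omega), h2]
  rw [this, Finset.sum_biUnion]
  intro i _ i' _ hii
  refine Finset.disjoint_left.2 fun v hv hv' => ?_
  rw [mem_spP ht] at hv hv'
  have := tree_dist' ht (hch.adj q w hq i) (hch.adj q w hq i') (fun h => hii (hch.inj q w hq h).symm) (u := v) (by omega)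
  omega

lemma sph_succ (ht : IsRegTree Gt (n+1)) {q z : T} (hq : Gt.Adj z q) (j : ℕ)
    (f : T → ℝ) : ∑ v ∈ sph Gt z (j+1), f v = ∑ v ∈ spP Gt q z (j+1), f v + ∑ v ∈ spP Gt z q j, f v := by
  have : sph Gt z (j+1) = spP Gt q z (j+1) ∪ spP Gt z q j := by
    ext v
    simp only [mem_spP ht, mem_sph ht, Finset.mem_union]
    constructor
    · intro h1
      obtain ⟨c, hc1, hc2⟩ := step_toward ht.1 h1
      by_cases hcq : q = c
      · subst hcq; right; exact ⟨hc2, h1⟩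
      · left; refine ⟨h1, ?_⟩
        rw [tree_dist' ht hc1 hq hcq (u := v) (by omega), h1]
    · rintro (h | h)
      · exact h.1
      · exact h.2
  rw [this, Finset.sum_union]
  refine Finset.disjoint_left.2 fun v hv hv' => ?_
  rw [mem_spP ht] at hv hv'
  omega

variable {f : T → ℝ} {K : ℝ}

lemma spP_rec (ht : IsRegTree Gt (n+1)) (hch : Chd Gt ch)
    (hf : ∀ q w, Gt.Adj w q → f q + ∑ i, f (ch q w i) = K * f w) (j : ℕ) : ∀ {q w : T}, Gt.Adj w q →
    ∑ v ∈ spP Gt q w (j+2), f v = K * ∑ v ∈ spP Gt q w (j+1), f v - n * ∑ v ∈ spP Gt q w j, f v := by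
  have h1 : ∀ {q w : T}, Gt.Adj w q → ∑ v ∈ spP Gt q w 1, f v = K * f w - f q := by
    intro q w hq
    rw [spP_succ ht hch hq, ← hf q w hq]
    rw [Finset.sum_congr rfl fun i _ => by rw [spP_zero ht (hch.adj q w hq i).symm, Finset.sum_singleton]]
    ring
  induction j with
  | zero =>
    intro q w hq
    rw [spP_succ ht hch hq, spP_succ ht hch hq 0, spP_zero ht hq]
    rw [Finset.sum_congr rfl fun i _ => h1 (hch.adj q w hq i).symm]
    have h2 : ∑ i, ∑ v ∈ spP Gt w (ch q w i) 0, f v = ∑ i, f (ch q w i) :=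
      Finset.sum_congr rfl fun i _ => by rw [spP_zero ht (hch.adj q w hq i).symm, Finset.sum_singleton]
    rw [h2, Finset.sum_sub_distrib, ← Finset.mul_sum]
    simp
  | succ j ih =>
    intro q w hq
    rw [spP_succ ht hch hq, spP_succ ht hch hq (j+1), spP_succ ht hch hq j]
    rw [Finset.sum_congr rfl fun i _ => ih (hch.adj q w hq i).symm]
    rw [Finset.sum_sub_distrib, ← Finset.mul_sum, ← Finset.mul_sum]

lemma sph_rec (ht : IsRegTree Gt (n+1)) (hch : Chd Gt ch)
    (hf : ∀ q w, Gt.Adj w q → f q + ∑ i, f (ch q w i) = K * f w) {q z : T} (hq : Gt.Adj z q) :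
    ∑ v ∈ sph Gt z 0, f v = f z ∧ ∑ v ∈ sph Gt z 1, f v = K * f z ∧
    ∑ v ∈ sph Gt z 2, f v = K * ∑ v ∈ sph Gt z 1, f v - (n+1) * f z ∧
    ∀ j, ∑ v ∈ sph Gt z (j+3), f v = K * ∑ v ∈ sph Gt z (j+2), f v - n * ∑ v ∈ sph Gt z (j+1), f v := by
  have h1 : ∀ {q w : T}, Gt.Adj w q → ∑ v ∈ spP Gt q w 1, f v = K * f w - f q := by
    intro q w hq
    rw [spP_succ ht hch hq, ← hf q w hq]
    rw [Finset.sum_congr rfl fun i _ => by rw [spP_zero ht (hch.adj q w hq i).symm, Finset.sum_singleton]]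
    ring
  have s1 : ∑ v ∈ sph Gt z 1, f v = K * f z := by
    rw [sph_succ ht hq, h1 hq, spP_zero ht hq.symm]; simp
  refine ⟨by rw [sph_zero ht]; simp, s1, ?_, fun j => ?_⟩
  · rw [s1, sph_succ ht hq, spP_rec ht hch hf 0 hq, h1 hq.symm, h1 hq, spP_zero ht hq]; simp; ring
  · rw [sph_succ ht hq, sph_succ ht hq, sph_succ ht hq, spP_rec ht hch hf _ hq, spP_rec ht hch hf _ hq.symm]
    ring

lemma spP_card (ht : IsRegTree Gt (n+1)) (hch : Chd Gt ch) (j : ℕ) : ∀ {q w : T}, Gt.Adj w q →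
    ((spP Gt q w j).card : ℝ) = n ^ j := by
  induction j with
  | zero => intro q w hq; rw [spP_zero ht hq]; simp
  | succ j ih =>
    intro q w hq
    have := spP_succ ht hch hq j (fun _ => 1)
    simp only [Finset.sum_const, nsmul_eq_mul, mul_one] at this
    rw [this, Finset.sum_congr rfl fun i _ => ih (hch.adj q w hq i).symm]
    simp; ring

lemma sph_card (ht : IsRegTree Gt (n+1)) (hch : Chd Gt ch) (j : ℕ) {q z : T} (hq : Gt.Adj z q) :
    ((sph Gt z (j+1)).card : ℝ) = (n + 1) * n ^ j := by
  have := sph_succ ht hq j (fun _ => 1)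
  simp only [Finset.sum_const, nsmul_eq_mul, mul_one] at this
  rw [this, spP_card ht hch _ hq, spP_card ht hch _ hq.symm]
  ring

/-- algebraic identity -/
lemma flux_alg (hn : 2 ≤ n) {s : ℕ → ℝ} {lam : ℝ} (h1 : s 1 = (n+1) * (1 - lam) * s 0)
    (h2 : s 2 = (n+1) * (1 - lam) * s 1 - (n+1) * s 0)
    (h3 : ∀ j, s (j+3) = (n+1) * (1 - lam) * s (j+2) - n * s (j+1)) (m : ℕ) :
    lam * ∑ j ∈ Finset.range (m+1), ((n:ℝ)/(n-1) * ((n:ℝ)⁻¹)^j - (n:ℝ)/(n-1) * ((n:ℝ)⁻¹)^(m+1)) * s j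
      = s 0 - s (m+1) / ((n+1) * n^m) := by
  have hn' : (2:ℝ) ≤ n := by exact_mod_cast hn
  have hn0 : (n:ℝ) ≠ 0 := by positivity
  have hn1 : (n:ℝ) - 1 ≠ 0 := by linarith
  have hn2 : (n:ℝ) + 1 ≠ 0 := by positivity
  have fl : ∀ m, (n+1) * (lam * ∑ j ∈ Finset.range (m+2), s j) = n * s (m+1) - s (m+2) := by
    intro m
    induction m with
    | zero => 
      rw [show 0 + 2 = 2 from rfl, Finset.sum_range_succ, Finset.sum_range_one, h2]
      simp only [zero_add]
      rw [h1]; ring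
    | succ m ih =>
      rw [Finset.sum_range_succ, mul_add, mul_add, ih, show m + 1 + 2 = m + 3 from rfl, h3]
      ring
  induction m with
  | zero =>
    simp only [zero_add, Finset.sum_range_one, pow_zero, pow_one]
    rw [h1]; field_simp; ring
  | succ m ih =>
    have e : ∑ j ∈ Finset.range (m+1+1), ((n:ℝ)/(n-1) * ((n:ℝ)⁻¹)^j - (n:ℝ)/(n-1) * ((n:ℝ)⁻¹)^(m+1+1)) * s j =
      ∑ j ∈ Finset.range (m+1), ((n:ℝ)/(n-1) * ((n:ℝ)⁻¹)^j - (n:ℝ)/(n-1) * ((n:ℝ)⁻¹)^(m+1)) * s j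
        + ((n:ℝ)⁻¹)^(m+1) * ∑ j ∈ Finset.range (m+2), s j := by
      have e1 : ∑ j ∈ Finset.range (m+1), ((n:ℝ)/(n-1) * ((n:ℝ)⁻¹)^j - (n:ℝ)/(n-1) * ((n:ℝ)⁻¹)^(m+1)) * s j
          = ∑ j ∈ Finset.range (m+1+1), ((n:ℝ)/(n-1) * ((n:ℝ)⁻¹)^j - (n:ℝ)/(n-1) * ((n:ℝ)⁻¹)^(m+1)) * s j := by
        rw [Finset.sum_range_succ _ (m+1)]; ring
      rw [e1, Finset.mul_sum, ← Finset.sum_add_distrib]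
      refine Finset.sum_congr rfl fun j _ => ?_
      have : (n:ℝ)/(n-1) * ((n:ℝ)⁻¹)^(m+1) - (n:ℝ)/(n-1) * ((n:ℝ)⁻¹)^(m+1+1) = ((n:ℝ)⁻¹)^(m+1) := by
        rw [pow_succ _ (m+1)]; field_simp
      linear_combination (s j) * this
    rw [e, mul_add, ih]
    have h4 := fl m
    have h5 : lam * ∑ j ∈ Finset.range (m+2), s j = (n * s (m+1) - s (m+2)) / (n+1) := by
      rw [eq_div_iff hn2]; linarith
    rw [mul_left_comm, h5, inv_pow]
    field_simp
    ring
end sph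

section cover
variable {T : Type} {Gt : SimpleGraph T} {n : ℕ} {ch : T → T → Fin n → T}
variable {V : Type} [Fintype V] {G : SimpleGraph V} {π : T → V}

lemma cover_inj_nbr (ht : IsRegTree Gt (n+1)) (hreg : IsReg G (n+1))
    (hπ : ∀ y : T, π '' (Gt.neighborSet y) = G.neighborSet (π y)) (w : T) :
    Set.InjOn π (Gt.neighborSet w) := by
  have h1 : (Gt.neighborSet w).ncard = n + 1 := ht.2.2 w
  have h2 : (π '' Gt.neighborSet w).ncard = n + 1 := by rw [hπ]; exact hreg (π w)
  exact Set.injOn_of_ncard_image_eq (by rw [h1, h2]) (Set.finite_of_ncard_pos (by omega))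

lemma cover_eig (ht : IsRegTree Gt (n+1)) (hch : Chd Gt ch) (hreg : IsReg G (n+1))
    (hπ : ∀ y : T, π '' (Gt.neighborSet y) = G.neighborSet (π y)) {f : V → ℝ} {lam : ℝ}
    (hf : ∀ x, ∑ y, transP G (n+1) x y * f y = (1 - lam) * f x) (q w : T) (hq : Gt.Adj w q) :
    f (π q) + ∑ i, f (π (ch q w i)) = (n+1) * (1 - lam) * f (π w) := by
  have hi := cover_inj_nbr ht hreg hπ w
  have e1 : G.neighborFinset (π w) = insert (π q) (Finset.univ.image fun i => π (ch q w i)) := by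
    ext v
    rw [SimpleGraph.mem_neighborFinset, ← SimpleGraph.mem_neighborSet, ← hπ]
    simp only [Set.mem_image, SimpleGraph.mem_neighborSet, Finset.mem_insert, Finset.mem_image, Finset.mem_univ, true_and]
    constructor
    · rintro ⟨c, hc, rfl⟩
      by_cases hcq : c = q
      · left; rw [hcq]
      · right; obtain ⟨i, hi⟩ := hch.surj q w hq c hc hcq; exact ⟨i, by rw [hi]⟩
    · rintro (rfl | ⟨i, rfl⟩)
      · exact ⟨q, hq, rfl⟩
      · exact ⟨_, hch.adj q w hq i, rfl⟩
  have e2 : ∑ v ∈ G.neighborFinset (π w), f v = f (π q) + ∑ i, f (π (ch q w i)) := by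
    rw [e1, Finset.sum_insert, Finset.sum_image]
    · intro i _ i' _ h
      exact hch.inj q w hq (hi (hch.adj q w hq i) (hch.adj q w hq i') h)
    · simp only [Finset.mem_image, Finset.mem_univ, true_and, not_exists]
      intro i h
      exact hch.ne q w hq i (hi (hch.adj q w hq i) hq h)
  rw [← e2, mul_assoc, ← hf, Finset.mul_sum, SimpleGraph.neighborFinset_eq_filter, Finset.sum_filter]
  refine Finset.sum_congr rfl fun y _ => ?_
  by_cases hy : G.Adj (π w) y
  · simp only [hy, if_true, transP, Matrix.of_apply]
    push_cast
    have : (n:ℝ) + 1 ≠ 0 := by positivity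
    field_simp
  · simp [hy, transP]

lemma green_tree {β : ℝ} {v : V → V → ℝ} {mm : V → ℝ} (hn : 2 ≤ n) (ht : IsRegTree Gt (n+1)) (hreg : IsReg G (n+1))
    (hβ : 0 < β) (S : Spec G (n+1) β v mm)
    (hπ : ∀ y : T, π '' (Gt.neighborSet y) = G.neighborSet (π y)) {o : T} {k m r : ℕ}
    (hinj : ∀ w w', Gt.dist o w ≤ k → Gt.dist o w' ≤ k → π w = π w' → w = w')
    (hm : m + 1 + r ≤ k) (hmr : 2 * r ≤ m) {y z : T} (hy : Gt.dist o y ≤ r) (hz : Gt.dist o z ≤ r) :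
    |zGreen G (n+1) (Fintype.card V) (π y) (π z) - treeGreen Gt (n+1) y z| ≤
      β⁻¹ * Real.sqrt (((n:ℝ)⁻¹)^(m+1)) + 2 * ((n:ℝ)⁻¹)^(m+1) + 4 * (m + 1) / (Fintype.card V : ℝ) := by
  obtain ⟨ch, hch⟩ := exists_chd ht.2.2
  have hn' : (2:ℝ) ≤ n := by exact_mod_cast hn
  have hn0 : (0:ℝ) < n := by positivity
  have hn1 : (0:ℝ) < (n:ℝ) - 1 := by linarith
  have hsig : (n:ℝ)/(n-1) ≤ 2 := by rw [div_le_iff₀ hn1]; linarith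
  have hsig0 : 0 ≤ (n:ℝ)/(n-1) := by positivity
  have hni : (n:ℝ)⁻¹ ≤ 1 := inv_le_one_of_one_le₀ (by linarith)
  have hni0 : 0 ≤ (n:ℝ)⁻¹ := by positivity
  obtain ⟨q, hq⟩ : ∃ q, Gt.Adj z q := by
    have : (Gt.neighborSet z).ncard = n + 1 := ht.2.2 z
    obtain ⟨q, hq⟩ := Set.nonempty_of_ncard_ne_zero (s := Gt.neighborSet z) (by omega)
    exact ⟨q, hq⟩
  have hball : ∀ j ≤ m + 1, ∀ w ∈ sph Gt z j, Gt.dist o w ≤ k := by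
    intro j hj w hw
    rw [mem_sph ht] at hw
    have := ht.1.dist_triangle (u := o) (v := z) (w := w)
    omega
  set a : ℕ → ℝ := fun j => (n:ℝ)/(n-1) * ((n:ℝ)⁻¹)^j - (n:ℝ)/(n-1) * ((n:ℝ)⁻¹)^(m+1) with ha
  let cnt : ℕ → V → ℝ := fun j u => ∑ w ∈ sph Gt z j, if π w = u then 1 else 0
  let A : V → ℝ := fun u => ∑ j ∈ Finset.range (m+1), a j * cnt j u
  let ν : V → ℝ := fun u => cnt (m+1) u / ((n+1) * n^m)
  have hcnt : ∀ j (f : V → ℝ), ∑ u, cnt j u * f u = ∑ w ∈ sph Gt z j, f (π w) := by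
    intro j f
    simp only [cnt, Finset.sum_mul]
    rw [Finset.sum_comm]
    refine Finset.sum_congr rfl fun w _ => ?_
    simp
  have hAf : ∀ f : V → ℝ, ∑ u, A u * f u = ∑ j ∈ Finset.range (m+1), a j * ∑ w ∈ sph Gt z j, f (π w) := by
    intro f
    simp only [A, Finset.sum_mul]
    rw [Finset.sum_comm]
    refine Finset.sum_congr rfl fun j _ => ?_
    rw [← hcnt, Finset.mul_sum]
    exact Finset.sum_congr rfl fun u _ => by ring
  have hνf : ∀ f : V → ℝ, ∑ u, ν u * f u = (∑ w ∈ sph Gt z (m+1), f (π w)) / ((n+1) * n^m) := by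
    intro f
    rw [← hcnt, Finset.sum_div]
    exact Finset.sum_congr rfl fun u _ => by simp only [ν]; ring
  have key := S.green_est hβ (by omega) hreg (π y) (π z) A ν (by
    intro f lam hf
    obtain ⟨s0, s1, s2, s3⟩ := sph_rec (f := fun w => f (π w)) ht hch (cover_eig ht hch hreg hπ hf) hq
    rw [hAf, hνf]
    have := flux_alg hn (s := fun j => ∑ w ∈ sph Gt z j, f (π w)) (lam := lam) (by rw [s1, s0])
      (by rw [s2, s0]) s3 m
    rw [this, s0])
  have hcard : ∀ j, ((sph Gt z j).card : ℝ) ≤ 2 * n ^ j := by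
    intro j
    cases j with
    | zero => rw [sph_zero ht]; simp
    | succ j =>
      rw [sph_card ht hch j hq, pow_succ]
      have : 0 < (n:ℝ)^j := by positivity
      nlinarith
  have hcnt1 : ∀ u, cnt (m+1) u ≤ 1 := by
    intro u
    simp only [cnt]
    rw [Finset.sum_boole]
    have : ((sph Gt z (m+1)).filter fun w => π w = u).card ≤ 1 := by
      rw [Finset.card_le_one]
      intro w hw w' hw'
      simp only [Finset.mem_filter] at hw hw'
      exact hinj _ _ (hball _ le_rfl _ hw.1) (hball _ le_rfl _ hw'.1) (hw.2.trans hw'.2.symm)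
    exact_mod_cast this
  have hcnt0 : ∀ j u, 0 ≤ cnt j u := fun j u => Finset.sum_nonneg fun w _ => by split_ifs <;> norm_num
  have hp0 : (0:ℝ) < (n+1) * n^m := by positivity
  have hν1 : ∑ u, ν u = 1 := by
    have := hνf (fun _ => 1)
    simp only [mul_one] at this
    rw [this, Finset.sum_const, nsmul_eq_mul, mul_one, sph_card ht hch m hq, div_self hp0.ne']
  have hνsq : ∑ u, ν u ^ 2 ≤ ((n:ℝ)⁻¹)^(m+1) := by
    have h1 : ∀ u, ν u ^ 2 ≤ ((n:ℝ)⁻¹)^(m+1) * ν u := by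
      intro u
      rw [sq]
      have hv0 : 0 ≤ ν u := div_nonneg (hcnt0 _ _) hp0.le
      refine mul_le_mul_of_nonneg_right ?_ hv0
      simp only [ν]
      rw [inv_pow, div_le_iff₀ hp0]
      have : (1:ℝ) ≤ ((n:ℝ)^(m+1))⁻¹ * ((n+1) * n^m) := by
        rw [pow_succ, inv_mul_eq_div, le_div_iff₀ (by positivity)]
        have : 0 < (n:ℝ)^m := by positivity
        nlinarith
      linarith [hcnt1 u]
    calc _ ≤ ∑ u, ((n:ℝ)⁻¹)^(m+1) * ν u := Finset.sum_le_sum fun u _ => h1 u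
      _ = _ := by rw [← Finset.mul_sum, hν1, mul_one]
  have ha0 : ∀ j ∈ Finset.range (m+1), 0 ≤ a j := by
    intro j hj
    have : ((n:ℝ)⁻¹)^(m+1) ≤ ((n:ℝ)⁻¹)^j := pow_le_pow_of_le_one hni0 hni (by simp at hj; omega)
    simp only [ha]
    nlinarith
  have hAsum : ∑ u, A u = ∑ j ∈ Finset.range (m+1), a j * (sph Gt z j).card := by
    have := hAf (fun _ => 1)
    simpa using this
  have hA0 : 0 ≤ ∑ u, A u := by
    rw [hAsum]; exact Finset.sum_nonneg fun j hj => mul_nonneg (ha0 j hj) (Nat.cast_nonneg _)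
  have hA1 : ∑ u, A u ≤ 4 * (m + 1) := by
    rw [hAsum]
    have : ∀ j ∈ Finset.range (m+1), a j * (sph Gt z j).card ≤ 4 := by
      intro j hj
      have h1 : a j ≤ 2 * ((n:ℝ)⁻¹)^j := by
        have : 0 ≤ (n:ℝ)/(n-1) * ((n:ℝ)⁻¹)^(m+1) := by positivity
        have : (n:ℝ)/(n-1) * ((n:ℝ)⁻¹)^j ≤ 2 * ((n:ℝ)⁻¹)^j := by gcongr
        simp only [ha]; linarith
      calc a j * (sph Gt z j).card ≤ (2 * ((n:ℝ)⁻¹)^j) * (2 * n^j) :=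
            mul_le_mul h1 (hcard j) (Nat.cast_nonneg _) (by positivity)
        _ = 4 := by rw [inv_pow]; field_simp; norm_num
    calc _ ≤ ∑ j ∈ Finset.range (m+1), (4:ℝ) := Finset.sum_le_sum this
      _ = _ := by simp; ring
  have hAy : A (π y) = (n:ℝ)/(n-1) * ((n:ℝ)⁻¹)^(Gt.dist y z) - (n:ℝ)/(n-1) * ((n:ℝ)⁻¹)^(m+1) := by
    have hdzy : Gt.dist z y ≤ m := by
      have := ht.1.dist_triangle (u := z) (v := o) (w := y)
      rw [SimpleGraph.dist_comm (u := z) (v := o)] at this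
      omega
    have h1 : ∀ j ∈ Finset.range (m+1), cnt j (π y) = if j = Gt.dist z y then 1 else 0 := by
      intro j hj
      simp only [cnt]
      have hjm : j ≤ m + 1 := by simp at hj; omega
      have : ∀ w ∈ sph Gt z j, (if π w = π y then (1:ℝ) else 0) = if w = y then 1 else 0 := by
        intro w hw
        have : π w = π y ↔ w = y :=
          ⟨fun h => hinj _ _ (hball j hjm w hw) (by omega) h, fun h => by rw [h]⟩
        simp [this]
      rw [Finset.sum_congr rfl this, Finset.sum_ite_eq']
      simp [mem_sph ht, eq_comm]
    have : A (π y) = a (Gt.dist z y) := by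
      simp only [A]
      rw [Finset.sum_congr rfl fun j hj => by rw [h1 j hj]]
      simp only [mul_ite, mul_one, mul_zero, Finset.sum_ite_eq', Finset.mem_range]
      rw [if_pos (by omega)]
    rw [this, SimpleGraph.dist_comm (u := y)]
  have htg : treeGreen Gt (n+1) y z = A (π y) + (n:ℝ)/(n-1) * ((n:ℝ)⁻¹)^(m+1) := by
    rw [hAy, treeGreen]
    push_cast
    rw [show (n : ℝ) + 1 - 1 = n by ring, show (n : ℝ) + 1 - 2 = n - 1 by ring]
    ring
  have hlast : (n:ℝ)/(n-1) * ((n:ℝ)⁻¹)^(m+1) ≤ 2 * ((n:ℝ)⁻¹)^(m+1) := by gcongr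
  have hlast0 : 0 ≤ (n:ℝ)/(n-1) * ((n:ℝ)⁻¹)^(m+1) := by positivity
  have hs : β⁻¹ * Real.sqrt (∑ u, ν u ^ 2) ≤ β⁻¹ * Real.sqrt (((n:ℝ)⁻¹)^(m+1)) := by
    gcongr
  have hN : |∑ u, A u| / (Fintype.card V : ℝ) ≤ 4 * (m + 1) / (Fintype.card V : ℝ) := by
    rw [abs_of_nonneg hA0]; gcongr
  rw [htg]
  calc _ = |(zGreen G (n+1) (Fintype.card V) (π y) (π z) - A (π y)) + -((n:ℝ)/(n-1) * ((n:ℝ)⁻¹)^(m+1))| := by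
        congr 1; ring
    _ ≤ |zGreen G (n+1) (Fintype.card V) (π y) (π z) - A (π y)| + |-((n:ℝ)/(n-1) * ((n:ℝ)⁻¹)^(m+1))| := abs_add_le _ _
    _ ≤ _ := by rw [abs_neg, abs_of_nonneg hlast0]; linarith
end cover

end GFFP

namespace GFFP
open GFF

section comb
variable {V : Type} [Fintype V] {G : SimpleGraph V}

def prs (G : SimpleGraph V) (U : Set V) : Set (V × V) :=
  {p : V × V | p.1 ∈ U ∧ p.2 ∈ U ∧ G.Adj p.1 p.2}

lemma cnt_pairs {W D : Set V} {Q : Set (V × V)} (hQ : Q ⊆ prs G W) (hD : D ⊆ W) (p : V → V)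
    (ρ : V → ℕ) (hp : ∀ v ∈ D, p v ∈ W ∧ G.Adj v (p v) ∧ ρ (p v) < ρ v)
    (hQD : ∀ v ∈ D, (v, p v) ∉ Q ∧ (p v, v) ∉ Q) : Q.ncard + 2 * D.ncard ≤ adjPairs G W := by
  let A1 : Set (V × V) := (fun v => (v, p v)) '' D
  let A2 : Set (V × V) := (fun v => (p v, v)) '' D
  have c1 : A1.ncard = D.ncard := Set.ncard_image_of_injective _ (fun a b h => (Prod.ext_iff.1 h).1)
  have c2 : A2.ncard = D.ncard := Set.ncard_image_of_injective _ (fun a b h => (Prod.ext_iff.1 h).2)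
  have d1 : Disjoint Q A1 := by
    rw [Set.disjoint_right]
    rintro _ ⟨v, hv, rfl⟩
    exact (hQD v hv).1
  have d2 : Disjoint (Q ∪ A1) A2 := by
    rw [Set.disjoint_right]
    rintro _ ⟨v, hv, rfl⟩ (h | ⟨u, hu, h⟩)
    · exact (hQD v hv).2 h
    · simp only [Prod.mk.injEq] at h
      have h1 := (hp v hv).2.2
      have h2 := (hp u hu).2.2
      rw [h.2, h.1] at h2
      omega
  have hs : Q ∪ A1 ∪ A2 ⊆ prs G W := by
    rintro _ ((h | ⟨v, hv, rfl⟩) | ⟨v, hv, rfl⟩)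
    · exact hQ h
    · exact ⟨hD hv, (hp v hv).1, (hp v hv).2.1⟩
    · exact ⟨(hp v hv).1, hD hv, (hp v hv).2.1.symm⟩
  have := Set.ncard_le_ncard hs (Set.toFinite _)
  rw [Set.ncard_union_eq d2, Set.ncard_union_eq d1, c1, c2] at this
  have e : (prs G W).ncard = adjPairs G W := rfl
  omega

lemma exists_par (hc : G.Connected) (x : V) : ∃ p : V → V, ∀ v, v ≠ x → G.Adj v (p v) ∧ G.dist x v = G.dist x (p v) + 1 := by
  have : ∀ v, ∃ u, v ≠ x → G.Adj v u ∧ G.dist x v = G.dist x u + 1 := by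
    intro v
    by_cases hv : v = x
    · exact ⟨v, fun h => absurd hv h⟩
    have h0 : G.dist v x ≠ 0 := by rw [Ne, hc.dist_eq_zero_iff]; exact hv
    obtain ⟨j, hj⟩ := Nat.exists_eq_succ_of_ne_zero h0
    obtain ⟨c, h1, h2⟩ := step_toward hc hj
    exact ⟨c, fun _ => ⟨h1, by rw [SimpleGraph.dist_comm, hj, SimpleGraph.dist_comm, h2]⟩⟩
  choose p hp using this
  exact ⟨p, hp⟩

lemma self_mem (x : V) (m : ℕ) : x ∈ gball G x m := by simp [gball]

lemma ncard_diff_self (x : V) (m : ℕ) : (gball G x m \ {x}).ncard = (gball G x m).ncard - 1 := by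
  rw [Set.ncard_diff (by simpa using self_mem x m) (Set.toFinite _)]; simp

lemma tx_unique (hc : G.Connected) {x : V} {k : ℕ} (htx : TxZero G (gball G x k)) {u v w : V}
    (hu : G.dist x u ≤ k) (huv : G.Adj u v) (huw : G.Adj u w) (hv : G.dist x v ≤ G.dist x u)
    (hw : G.dist x w ≤ G.dist x u) : v = w := by
  obtain ⟨p, hp⟩ := exists_par hc x
  have hux : u ≠ x := by
    rintro rfl
    rw [SimpleGraph.dist_self, Nat.le_zero, hc.dist_eq_zero_iff] at hv
    exact huv.ne hv
  have key : ∀ v, G.Adj u v → G.dist x v ≤ G.dist x u → v = p u := by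
    intro v huv hv
    by_contra hne
    have := cnt_pairs (G := G) (W := gball G x k) (D := gball G x k \ {x}) (Q := {(u, v), (v, u)})
      (by
        rintro _ (rfl | rfl)
        · exact ⟨hu, hv.trans hu, huv⟩
        · exact ⟨hv.trans hu, hu, huv.symm⟩) diff_subset p (G.dist x)
      (fun v hv => by
        have := hp v hv.2
        have h3 : G.dist x v ≤ k := hv.1
        exact ⟨show G.dist x (p v) ≤ k by omega, this.1, by omega⟩)
      (fun a ha => by
        have h1 := (hp a ha.2).2
        simp only [Set.mem_insert_iff, Set.mem_singleton_iff, Prod.mk.injEq]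
        constructor
        · rintro (⟨rfl, h⟩ | ⟨rfl, h⟩)
          · exact hne h.symm
          · rw [h] at h1; omega
        · rintro (⟨h, rfl⟩ | ⟨h, rfl⟩)
          · rw [h] at h1; omega
          · exact hne h.symm)
    rw [Set.ncard_pair (by simp [Prod.ext_iff, huv.ne]), ncard_diff_self, htx] at this
    omega
  rw [key v huv hv, key w huw hw]

lemma bad_excess (hc : G.Connected) {x : V} {k : ℕ} (htx : ¬ TxZero G (gball G x k)) :
    2 * (gball G x k).ncard ≤ adjPairs G (gball G x k) := by
  obtain ⟨p, hp⟩ := exists_par hc x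
  set W := gball G x k with hW
  have hb : 1 ≤ W.ncard := by
    exact (Set.ncard_pos (Set.toFinite _)).2 ⟨x, self_mem x k⟩
  have hp' : ∀ v ∈ W \ {x}, p v ∈ W ∧ G.Adj v (p v) ∧ G.dist x (p v) < G.dist x v := by
    intro v hv
    have := hp v hv.2
    have h3 : G.dist x v ≤ k := hv.1
    exact ⟨show G.dist x (p v) ≤ k by omega, this.1, by omega⟩
  by_cases hex : ∃ u v, (u, v) ∈ prs G W ∧ ∀ a ∈ W \ {x}, (u, v) ≠ (a, p a) ∧ (u, v) ≠ (p a, a)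
  · obtain ⟨u, v, huv, hne⟩ := hex
    have := cnt_pairs (G := G) (W := W) (D := W \ {x}) (Q := {(u, v), (v, u)})
      (by
        rintro _ (rfl | rfl)
        · exact huv
        · exact ⟨huv.2.1, huv.1, huv.2.2.symm⟩) diff_subset p (G.dist x) hp'
      (fun a ha => by
        have h1 := hne a ha
        simp only [Set.mem_insert_iff, Set.mem_singleton_iff, Prod.mk.injEq, ne_eq] at h1 ⊢
        grind)
    rw [Set.ncard_pair (by simp [Prod.ext_iff, huv.2.2.ne]), ncard_diff_self, ← hW] at this
    omega
  · push Not at hex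
    exfalso
    apply htx
    have h1 := cnt_pairs (G := G) (W := W) (D := W \ {x}) (Q := ∅) (by simp) diff_subset p (G.dist x) hp' (by simp)
    rw [ncard_diff_self, Set.ncard_empty] at h1
    have h2 : prs G W ⊆ (fun v => (v, p v)) '' (W \ {x}) ∪ (fun v => (p v, v)) '' (W \ {x}) := by
      rintro ⟨u, v⟩ huv
      obtain ⟨a, ha, h⟩ := hex u v huv
      by_cases h' : (u, v) = (a, p a)
      · left; exact ⟨a, ha, h'.symm⟩
      · right; exact ⟨a, ha, (h h').symm⟩
    have h3 := (Set.ncard_le_ncard h2 (Set.toFinite _)).trans (Set.ncard_union_le _ _)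
    have h4 := Set.ncard_image_le (f := fun v => (v, p v)) (Set.toFinite (W \ {x}))
    have h5 := Set.ncard_image_le (f := fun v => (p v, v)) (Set.toFinite (W \ {x}))
    rw [ncard_diff_self] at h4 h5
    have e : (prs G W).ncard = adjPairs G W := rfl
    unfold TxZero
    rw [← hW] at *
    omega

lemma gball_mono {x : V} {m m' : ℕ} (h : m ≤ m') : gball G x m ⊆ gball G x m' :=
  fun v (hv : G.dist x v ≤ m) => show G.dist x v ≤ m' from hv.trans h

lemma two_bad (hc : G.Connected) {x y : V} {k ρ : ℕ} (hx : ¬ TxZero G (gball G x k))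
    (hy : ¬ TxZero G (gball G y k)) (hρ : adjPairs G (gball G x ρ) ≤ 2 * (gball G x ρ).ncard)
    (h1 : 2 * k < G.dist x y) (h2 : G.dist x y + k ≤ ρ) : False := by
  obtain ⟨p, hp⟩ := exists_par hc x
  set W := gball G x ρ with hW
  have sx : gball G x k ⊆ W := gball_mono (by omega)
  have sy : gball G y k ⊆ W := by
    intro v hv
    have hv' : G.dist y v ≤ k := hv
    have := hc.dist_triangle (u := x) (v := y) (w := v)
    exact show G.dist x v ≤ ρ by omega
  have hdis : ∀ v, v ∈ gball G x k → v ∈ gball G y k → False := by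
    intro v hv hv'
    have a1 : G.dist x v ≤ k := hv
    have a2 : G.dist y v ≤ k := hv'
    have := hc.dist_triangle (u := x) (v := v) (w := y)
    rw [SimpleGraph.dist_comm (u := v)] at this
    omega
  obtain ⟨v, hv, hmin⟩ := Set.exists_min_image (gball G y k) (G.dist x) (Set.toFinite _) ⟨y, self_mem y k⟩
  have hvx : v ≠ x := by
    rintro rfl; exact hdis v (self_mem v k) hv
  have hpv := hp v hvx
  have hpvy : p v ∉ gball G y k := fun h => by have := hmin _ h; omega
  have hvx' : v ∉ gball G x k := fun h => hdis v h hv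
  have hvW : v ∈ W := sy hv
  have hpvW : p v ∈ W := by
    have : G.dist x v ≤ ρ := hvW
    exact show G.dist x (p v) ≤ ρ by omega
  let Q : Set (V × V) := (prs G (gball G x k) ∪ prs G (gball G y k)) ∪ {(v, p v), (p v, v)}
  let D := W \ (gball G x k ∪ gball G y k)
  have hQ : Q.ncard = (prs G (gball G x k)).ncard + (prs G (gball G y k)).ncard + 2 := by
    simp only [Q]
    rw [Set.ncard_union_eq, Set.ncard_union_eq, Set.ncard_pair (by simp [Prod.ext_iff, hpv.1.ne])]
    · rw [Set.disjoint_left]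
      rintro ⟨a, b⟩ h h'
      exact hdis a h.1 h'.1
    · rw [Set.disjoint_right]
      rintro _ (rfl | rfl) (h | h)
      · exact hvx' h.1
      · exact hpvy h.2.1
      · exact hvx' h.2.1
      · exact hpvy h.1
  have hc1 := cnt_pairs (G := G) (W := W) (D := D) (Q := Q) (by
      rintro ⟨a, b⟩ ((h | h) | (h | h))
      · exact ⟨sx h.1, sx h.2.1, h.2.2⟩
      · exact ⟨sy h.1, sy h.2.1, h.2.2⟩
      · rw [h]; exact ⟨hvW, hpvW, hpv.1⟩
      · rw [Set.mem_singleton_iff.1 h]; exact ⟨hpvW, hvW, hpv.1.symm⟩) diff_subset p (G.dist x) (by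
      intro a ha
      have hax : a ≠ x := by rintro rfl; exact ha.2 (Or.inl (self_mem a k))
      have := hp a hax
      have h3 : G.dist x a ≤ ρ := ha.1
      exact ⟨show G.dist x (p a) ≤ ρ by omega, this.1, by omega⟩) (by
      intro a ha
      have hax : a ≠ x := by rintro rfl; exact ha.2 (Or.inl (self_mem a k))
      have hpa := hp a hax
      constructor
      · rintro ((h | h) | (h | h))
        · exact ha.2 (Or.inl h.1)
        · exact ha.2 (Or.inr h.1)
        · have : a = v := (Prod.ext_iff.1 h).1
          rw [this] at ha; exact ha.2 (Or.inr hv)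
        · have := Prod.ext_iff.1 (Set.mem_singleton_iff.1 h)
          simp only at this
          rw [this.2, this.1] at hpa
          omega
      · rintro ((h | h) | (h | h))
        · exact ha.2 (Or.inl h.2.1)
        · exact ha.2 (Or.inr h.2.1)
        · have := Prod.ext_iff.1 h
          simp only at this
          rw [this.1, this.2] at hpa
          omega
        · have : a = v := (Prod.ext_iff.1 (Set.mem_singleton_iff.1 h)).2
          rw [this] at ha; exact ha.2 (Or.inr hv))
  have hD : D.ncard + ((gball G x k).ncard + (gball G y k).ncard) = W.ncard := by
    rw [← Set.ncard_union_eq (Set.disjoint_left.2 fun v => hdis v)]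
    exact Set.ncard_diff_add_ncard_of_subset (Set.union_subset sx sy)
  have e1 : (prs G (gball G x k)).ncard = adjPairs G (gball G x k) := rfl
  have e2 : (prs G (gball G y k)).ncard = adjPairs G (gball G y k) := rfl
  have b1 := bad_excess hc hx
  have b2 := bad_excess hc hy
  omega

lemma growth_step (hc : G.Connected) {n : ℕ} (hreg : IsReg G (n+1)) {x : V} {m ρ : ℕ} (hm : m + 1 ≤ ρ)
    (hρ : adjPairs G (gball G x ρ) ≤ 2 * (gball G x ρ).ncard) :
    n * (gball G x m).ncard ≤ (gball G x (m+1)).ncard := by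
  obtain ⟨p, hp⟩ := exists_par hc x
  have h1 : adjPairs G (gball G x (m+1)) ≤ 2 * (gball G x (m+1)).ncard := by
    have := cnt_pairs (G := G) (W := gball G x ρ) (D := gball G x ρ \ gball G x (m+1)) (Q := prs G (gball G x (m+1)))
      (fun a ha => ⟨gball_mono hm ha.1, gball_mono hm ha.2.1, ha.2.2⟩) diff_subset p (G.dist x) (by
      intro a ha
      have hax : a ≠ x := by rintro rfl; exact ha.2 (self_mem a _)
      have := hp a hax
      have h3 : G.dist x a ≤ ρ := ha.1
      exact ⟨show G.dist x (p a) ≤ ρ by omega, this.1, by omega⟩)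
      (fun a ha => ⟨fun h => ha.2 h.1, fun h => ha.2 h.2.1⟩)
    have h2 : _ = (gball G x ρ).ncard := Set.ncard_diff_add_ncard_of_subset (gball_mono (G := G) (x := x) hm)
    have e1 : (prs G (gball G x (m+1))).ncard = adjPairs G (gball G x (m+1)) := rfl
    omega
  let Q : Set (V × V) := {a | a.1 ∈ gball G x m ∧ G.Adj a.1 a.2}
  let A : Set (V × V) := (fun v => (v, p v)) '' (gball G x (m+1) \ gball G x m)
  have hQ : Q.ncard = (n+1) * (gball G x m).ncard := by
    have e : Q = ((gball G x m).toFinset.sigma fun v => G.neighborFinset v).image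
        (fun s => (s.1, s.2)) := by
      ext ⟨a, b⟩
      simp [Q]
    rw [e, Set.ncard_coe_finset, Finset.card_image_of_injective, Finset.card_sigma]
    · have : ∀ v ∈ (gball G x m).toFinset, (G.neighborFinset v).card = n + 1 := by
        intro v _
        rw [SimpleGraph.card_neighborFinset_eq_degree, ← hreg v, Nat.card_eq_fintype_card, SimpleGraph.card_neighborSet_eq_degree]
      rw [Finset.sum_congr rfl this, Finset.sum_const, Set.ncard_eq_toFinset_card', smul_eq_mul, mul_comm]
    · rintro ⟨a, b⟩ ⟨a', b'⟩ h
      simp only [Prod.mk.injEq] at h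
      obtain ⟨rfl, rfl⟩ := h
      rfl
  have hA : A.ncard = (gball G x (m+1) \ gball G x m).ncard :=
    Set.ncard_image_of_injective _ (fun a b h => (Prod.ext_iff.1 h).1)
  have hd : Disjoint Q A := by
    rw [Set.disjoint_right]
    rintro _ ⟨v, hv, rfl⟩ h
    exact hv.2 h.1
  have hs : Q ∪ A ⊆ prs G (gball G x (m+1)) := by
    rintro ⟨a, b⟩ (h | ⟨v, hv, h⟩)
    · refine ⟨gball_mono (Nat.le_succ _) h.1, ?_, h.2⟩
      have h1 : G.dist x a ≤ m := h.1
      have h2 : G.dist a b = 1 := SimpleGraph.dist_eq_one_iff_adj.2 h.2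
      have := hc.dist_triangle (u := x) (v := a) (w := b)
      exact show G.dist x b ≤ m + 1 by omega
    · rw [← h]
      have hvx : v ≠ x := by rintro rfl; exact hv.2 (self_mem v m)
      have := hp v hvx
      have h3 : G.dist x v ≤ m + 1 := hv.1
      exact ⟨hv.1, show G.dist x (p v) ≤ m + 1 by omega, this.1⟩
  have h2 := Set.ncard_le_ncard hs (Set.toFinite _)
  rw [Set.ncard_union_eq hd, hQ, hA] at h2
  have h3 : _ = (gball G x (m+1)).ncard := Set.ncard_diff_add_ncard_of_subset (gball_mono (G := G) (x := x) (Nat.le_succ m))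
  have e1 : (prs G (gball G x (m+1))).ncard = adjPairs G (gball G x (m+1)) := rfl
  have h4 : (n+1) * (gball G x m).ncard = n * (gball G x m).ncard + (gball G x m).ncard := by ring
  omega

lemma ball_growth (hc : G.Connected) {n : ℕ} (hreg : IsReg G (n+1)) {x : V} {m t ρ : ℕ} (hm : m + t ≤ ρ)
    (hρ : adjPairs G (gball G x ρ) ≤ 2 * (gball G x ρ).ncard) :
    n ^ t * (gball G x m).ncard ≤ (gball G x (m+t)).ncard := by
  induction t with
  | zero => simp
  | succ t ih =>
    have h1 := ih (by omega)
    have h2 := growth_step hc hreg (x := x) (m := m + t) (ρ := ρ) (by omega) hρ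
    calc n ^ (t+1) * (gball G x m).ncard = n * (n ^ t * (gball G x m).ncard) := by ring
      _ ≤ n * (gball G x (m+t)).ncard := Nat.mul_le_mul_left _ h1
      _ ≤ _ := h2

lemma bad_bound (hc : G.Connected) {n : ℕ} (hreg : IsReg G (n+1)) {k t ρ : ℕ} (hk : 5 * k + 2 * t ≤ ρ)
    (hρ : ∀ x, adjPairs G (gball G x ρ) ≤ 2 * (gball G x ρ).ncard) :
    n ^ t * (Finset.univ.filter fun x => ¬ TxZero G (gball G x k)).card ≤ Fintype.card V := by
  set Bad := Finset.univ.filter fun x => ¬ TxZero G (gball G x k) with hBad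
  let good : Finset V → Prop := fun S => S ⊆ Bad ∧ ∀ x ∈ S, ∀ y ∈ S, x ≠ y → 2 * k < G.dist x y
  obtain ⟨S, hS, hmax⟩ : ∃ S, good S ∧ ∀ S', good S' → S'.card ≤ S.card := by
    obtain ⟨S, hS, hm⟩ := Finset.exists_max_image (Finset.univ.filter good) Finset.card
      ⟨∅, by simp [good]⟩
    refine ⟨S, (Finset.mem_filter.1 hS).2, fun S' hS' => hm S' (by simp [hS'])⟩
  have hcov : Bad ⊆ S.biUnion fun s => (gball G s (2*k)).toFinset := by
    intro b hb
    by_contra hn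
    simp only [Finset.mem_biUnion, Set.mem_toFinset, not_exists, not_and] at hn
    have hnS : b ∉ S := fun h => hn b h (self_mem b _)
    have hlt : ∀ s ∈ S, 2 * k < G.dist s b := fun s hs => by
      have := hn s hs
      exact not_le.1 this
    have := hmax (insert b S) ⟨Finset.insert_subset hb hS.1, by
      intro x hx y hy hxy
      rw [Finset.mem_insert] at hx hy
      rcases hx with rfl | hx <;> rcases hy with rfl | hy
      · exact absurd rfl hxy
      · rw [SimpleGraph.dist_comm]; exact hlt y hy
      · exact hlt x hx
      · exact hS.2 x hx y hy hxy⟩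
    rw [Finset.card_insert_of_notMem hnS] at this
    omega
  have hfar : ∀ x ∈ S, ∀ y ∈ S, x ≠ y → ρ < G.dist x y + k := by
    intro x hx y hy hxy
    by_contra hle
    exact two_bad hc (Finset.mem_filter.1 (hS.1 hx)).2 (Finset.mem_filter.1 (hS.1 hy)).2 (hρ x) (hS.2 x hx y hy hxy)
      (not_lt.1 hle)
  have h1 : Bad.card ≤ ∑ s ∈ S, (gball G s (2*k)).ncard := by
    refine (Finset.card_le_card hcov).trans (Finset.card_biUnion_le.trans (le_of_eq ?_))
    exact Finset.sum_congr rfl fun s _ => by rw [Set.ncard_eq_toFinset_card']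
  have h2 : ∑ s ∈ S, (gball G s (2*k+t)).ncard ≤ Fintype.card V := by
    have : ∑ s ∈ S, (gball G s (2*k+t)).ncard = (S.biUnion fun s => (gball G s (2*k+t)).toFinset).card := by
      rw [Finset.card_biUnion]
      · exact Finset.sum_congr rfl fun s _ => by rw [Set.ncard_eq_toFinset_card']
      · intro x hx y hy hxy
        refine Finset.disjoint_left.2 fun v hv hv' => ?_
        rw [Set.mem_toFinset] at hv hv'
        have a1 : G.dist x v ≤ 2*k+t := hv
        have a2 : G.dist y v ≤ 2*k+t := hv'
        have := hc.dist_triangle (u := x) (v := v) (w := y)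
        rw [SimpleGraph.dist_comm (u := v)] at this
        have := hfar x hx y hy hxy
        omega
    rw [this]
    exact Finset.card_le_univ _
  calc n ^ t * Bad.card ≤ n ^ t * ∑ s ∈ S, (gball G s (2*k)).ncard := Nat.mul_le_mul_left _ h1
    _ = ∑ s ∈ S, n ^ t * (gball G s (2*k)).ncard := Finset.mul_sum _ _ _
    _ ≤ ∑ s ∈ S, (gball G s (2*k+t)).ncard :=
        Finset.sum_le_sum fun s _ => ball_growth hc hreg (by omega) (hρ s)
    _ ≤ _ := h2

variable {T : Type} {Gt : SimpleGraph T} {n : ℕ} {π : T → V} {o : T} {x : V}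

lemma cover_dist (ht : IsRegTree Gt (n+1)) (hc : G.Connected) (hreg : IsReg G (n+1)) (hπ : IsCoverMap Gt G o x π)
    {k : ℕ} (htx : TxZero G (gball G x k)) : ∀ j ≤ k, ∀ w, Gt.dist o w = j → G.dist x (π w) = j := by
  intro j
  induction j using Nat.strong_induction_on with
  | _ j ih =>
    intro hj w hw
    have hadj : ∀ {a b}, Gt.Adj a b → G.Adj (π a) (π b) := by
      intro a b hab
      have : π b ∈ π '' Gt.neighborSet a := ⟨b, hab, rfl⟩
      rw [hπ.2.2 a] at this
      exact this
    cases j with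
    | zero =>
      rw [ht.1.dist_eq_zero_iff] at hw
      rw [← hw, hπ.1, SimpleGraph.dist_self]
    | succ j =>
      rw [SimpleGraph.dist_comm] at hw
      obtain ⟨c, hc1, hc2⟩ := step_toward ht.1 hw
      rw [SimpleGraph.dist_comm] at hw hc2
      have h1 := ih j (by omega) (by omega) c hc2
      have hup : G.dist x (π w) ≤ j + 1 := by
        have := hc.dist_triangle (u := x) (v := π c) (w := π w)
        rw [SimpleGraph.dist_eq_one_iff_adj.2 (hadj hc1.symm)] at this
        omega
      by_contra hne
      have hle : G.dist x (π w) ≤ j := by omega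
      cases j with
      | zero =>
        rw [ht.1.dist_eq_zero_iff] at hc2
        rw [Nat.le_zero, hc.dist_eq_zero_iff] at hle
        have := hadj hc1
        rw [← hc2, hπ.1, ← hle] at this
        exact this.ne rfl
      | succ j =>
        rw [SimpleGraph.dist_comm] at hc2
        obtain ⟨e, he1, he2⟩ := step_toward ht.1 hc2
        rw [SimpleGraph.dist_comm] at hc2 he2
        have h2 := ih j (by omega) (by omega) e he2
        have := tx_unique hc htx (u := π c) (v := π w) (w := π e) (by omega) (hadj hc1.symm) (hadj he1) (by omega) (by omega)
        have := cover_inj_nbr ht hreg hπ.2.2 c hc1.symm he1 this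
        rw [this] at hw
        omega

lemma cover_inj (ht : IsRegTree Gt (n+1)) (hc : G.Connected) (hreg : IsReg G (n+1)) (hπ : IsCoverMap Gt G o x π)
    {k : ℕ} (htx : TxZero G (gball G x k)) : ∀ w w', Gt.dist o w ≤ k → Gt.dist o w' ≤ k → π w = π w' → w = w' := by
  have hadj : ∀ {a b}, Gt.Adj a b → G.Adj (π a) (π b) := by
    intro a b hab
    have : π b ∈ π '' Gt.neighborSet a := ⟨b, hab, rfl⟩
    rw [hπ.2.2 a] at this
    exact this
  have hd := cover_dist ht hc hreg hπ htx
  have key : ∀ j ≤ k, ∀ w w', Gt.dist o w = j → Gt.dist o w' = j → π w = π w' → w = w' := by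
    intro j
    induction j with
    | zero =>
      intro _ w w' hw hw' _
      rw [ht.1.dist_eq_zero_iff] at hw hw'
      rw [← hw, hw']
    | succ j ih =>
      intro hj w w' hw hw' heq
      have hw0 := hw
      have hw0' := hw'
      rw [SimpleGraph.dist_comm] at hw hw'
      obtain ⟨c, hc1, hc2⟩ := step_toward ht.1 hw
      obtain ⟨c', hc1', hc2'⟩ := step_toward ht.1 hw'
      rw [SimpleGraph.dist_comm] at hc2 hc2'
      have e1 := hd j (by omega) c hc2
      have e2 := hd j (by omega) c' hc2'
      have e3 := hd (j+1) hj w hw0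
      have h1 : G.Adj (π w) (π c') := by rw [heq]; exact hadj hc1'
      have := tx_unique hc htx (u := π w) (v := π c) (w := π c') (by omega) (hadj hc1) h1 (by omega) (by omega)
      have hcc := ih (by omega) c c' hc2 hc2' this
      rw [← hcc] at hc1'
      exact cover_inj_nbr ht hreg hπ.2.2 c hc1.symm hc1'.symm heq
  intro w w' hw hw' heq
  have h1 := hd _ hw w rfl
  have h2 := hd _ hw' w' rfl
  rw [heq] at h1
  exact key _ hw w w' rfl (by omega) heq
end comb

end GFFP

namespace GFFP
open GFF

section single
variable {T : Type} {Gt : SimpleGraph T} {n : ℕ} {V : Type} [Fintype V] {G : SimpleGraph V} {π : T → V}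
  {o obar : T} {x : V}

lemma dep_le {n : ℕ} : ∀ l (j : Idx n l), dep l j ≤ l
  | 0, _ => by simp [dep]
  | l + 1, none => by simp [dep]
  | l + 1, some (i, j) => by
      have := dep_le l j
      simp only [dep]; omega

lemma cover_levelComp (hπ : IsCoverMap Gt G o x π) {h : ℝ} {ω : V → ℝ} {z : T}
    (hz : z ∈ levelComp Gt h (fun y => ω (π y)) o) : π z ∈ levelComp G h ω x := by
  have hadj : ∀ {a b}, Gt.Adj a b → G.Adj (π a) (π b) := by
    intro a b hab
    have : π b ∈ π '' Gt.neighborSet a := ⟨b, hab, rfl⟩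
    rw [hπ.2.2 a] at this
    exact this
  obtain ⟨p, hp⟩ := hz
  let φ : Gt →g G := ⟨π, hadj⟩
  have hx : π o = x := hπ.1
  subst hx
  refine ⟨p.map φ, ?_⟩
  intro v hv
  rw [SimpleGraph.Walk.support_map, List.mem_map] at hv
  obtain ⟨y, hy, rfl⟩ := hv
  exact hp y hy

lemma Z_le_ncard {ch : T → T → Fin n → T} (ht : IsRegTree Gt (n+1)) (hch : Chd Gt ch)
    (hq : Gt.Adj o obar) (hπ : IsCoverMap Gt G o x π) {k r : ℕ} (hkr : r ≤ k)
    (hinj : ∀ w w', Gt.dist o w ≤ k → Gt.dist o w' ≤ k → π w = π w' → w = w') (h : ℝ) (ω : V → ℝ) :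
    Z h r (fun j => ω (π (emb ch r obar o j))) ≤
      (levelComp G h ω x ∩ π '' spherePlus Gt o obar r).ncard := by
  have hG : Gt.IsTree := ⟨ht.1, ht.2.1⟩
  rw [Z_card]
  refine Set.ncard_le_ncard_of_injOn (fun j => π (emb ch r obar o j)) ?_ ?_ (Set.toFinite _)
  · intro j hj
    have := alv_levelComp (h := h) (ω := fun y => ω (π y)) hch r obar o hq j hj
    refine ⟨cover_levelComp hπ this.1, _, ⟨?_, ?_⟩, rfl⟩
    · change Gt.dist _ _ = Gt.dist _ _ + 1
      rw [SimpleGraph.dist_comm, emb_D1 hG hch r obar o hq, SimpleGraph.dist_comm, emb_D0 hG hch r obar o hq]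
    · rw [emb_D0 hG hch r obar o hq, this.2]
  · intro j _ j' _ hjj
    apply emb_inj hG hch r obar o hq
    apply hinj _ _ _ _ hjj
    · rw [emb_D0 hG hch r obar o hq]; exact (dep_le r j).trans hkr
    · rw [emb_D0 hG hch r obar o hq]; exact (dep_le r j').trans hkr

noncomputable def err (n : ℕ) (β ε : ℝ) (r : ℕ) : ℝ :=
  32 / ε ^ 2 * (β⁻¹ * (Real.sqrt (n:ℝ)⁻¹) ^ r + 2 * ((n:ℝ)⁻¹) ^ r + 20 * (r * ((n:ℝ)⁻¹) ^ r))

lemma err_tendsto (hn : 2 ≤ n) (β ε : ℝ) : Tendsto (err n β ε) atTop (nhds 0) := by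
  have hn' : (2:ℝ) ≤ n := by exact_mod_cast hn
  have h0 : (0:ℝ) ≤ (n:ℝ)⁻¹ := by positivity
  have h1 : (n:ℝ)⁻¹ < 1 := inv_lt_one_of_one_lt₀ (by linarith)
  have a1 := tendsto_pow_atTop_nhds_zero_of_lt_one h0 h1
  have a2 := tendsto_pow_atTop_nhds_zero_of_lt_one (Real.sqrt_nonneg (n:ℝ)⁻¹)
    ((Real.sqrt_lt' one_pos).2 (by simpa using h1))
  have a3 := tendsto_self_mul_const_pow_of_lt_one h0 h1
  have := (((a2.const_mul β⁻¹).add (a1.const_mul 2)).add (a3.const_mul 20)).const_mul (32 / ε ^ 2)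
  have e : err n β ε = fun r : ℕ => 32 / ε ^ 2 * (β⁻¹ * (Real.sqrt (n:ℝ)⁻¹) ^ r + 2 * ((n:ℝ)⁻¹) ^ r + 20 * (r * ((n:ℝ)⁻¹) ^ r)) := by funext r; rw [err]
  rw [e]
  simpa only [mul_zero, add_zero] using this

lemma single_x {β : ℝ} (hn : 2 ≤ n) (ht : IsRegTree Gt (n+1)) (hq : Gt.Adj o obar)
    (hc : G.Connected) (hreg : IsReg G (n+1)) (hβ : 0 < β) (hgap : SpectralGapLB G (n+1) β)
    {μ : Measure (V → ℝ)} (hμ : IsGaussianField μ (zGreen G (n+1) (Fintype.card V)))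
    (hπ : IsCoverMap Gt G o x π) {k r : ℕ} (htx : TxZero G (gball G x k)) (hr : 1 ≤ r) (hk : 6 * r ≤ k)
    (hN : (n:ℝ) ^ (3 * r) ≤ Fintype.card V) (h : ℝ) {ε : ℝ} (hε : 0 < ε) (X : ℝ) :
    law n (sig n) (sxi n) r {f | X ≤ Z (h + ε) r f} ≤
      μ {ω | X ≤ ((levelComp G h ω x ∩ π '' spherePlus Gt o obar r).ncard : ℝ)} + ENNReal.ofReal (err n β ε r) := by
  obtain ⟨ch, hch⟩ := exists_chd ht.2.2
  have hG : Gt.IsTree := ⟨ht.1, ht.2.1⟩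
  obtain ⟨v, mm, S⟩ := exists_spec (by omega) hc hreg hgap
  have hinj := cover_inj ht hc hreg hπ htx
  have hn' : (2:ℝ) ≤ n := by exact_mod_cast hn
  have hn0 : (0:ℝ) < n := by linarith
  set τ : Idx n r → V := fun j => π (emb ch r obar o j) with hτ
  have g1 := isG_of_field hμ τ (fun c => S.green_psd hβ (by omega) hreg τ c)
  have g2 : IsG (law n (sig n) (sxi n) r) (fun c => ∑ i, ∑ j, c i * c j *
      treeGreen Gt (n+1) (emb ch r obar o i) (emb ch r obar o j)) := by
    have := law_isG n (sig n) (sxi n) r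
    simpa only [quad_emb hn hG hch r obar o hq] using this
  have hd : ∀ j, Gt.dist o (emb ch r obar o j) ≤ r := fun j => by
    rw [emb_D0 hG hch r obar o hq]; exact dep_le r j
  set δ : ℝ := β⁻¹ * Real.sqrt (((n:ℝ)⁻¹)^(5*r)) + 2 * ((n:ℝ)⁻¹)^(5*r) + 20 * r / (Fintype.card V : ℝ) with hδd
  have hδ0 : 0 ≤ δ := by positivity
  have hδ : ∀ i j, |zGreen G (n+1) (Fintype.card V) (τ i) (τ j) -
      treeGreen Gt (n+1) (emb ch r obar o i) (emb ch r obar o j)| ≤ δ := by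
    intro i j
    have := green_tree hn ht hreg hβ S hπ.2.2 hinj (m := 5*r-1) (r := r) (by omega) (by omega) (hd i) (hd j)
    refine this.trans (le_of_eq ?_)
    have e : 5 * r - 1 + 1 = 5 * r := by omega
    have e2 : (((5*r-1 : ℕ) : ℝ) + 1) = 5 * r := by exact_mod_cast e
    rw [e, e2, hδd]; ring
  have cmp := gauss_compare g1 g2 (fun i j => S.green_symm hβ (by omega) hreg _ _)
    (fun i j => by simp only [treeGreen, SimpleGraph.dist_comm]) hδ0 hδ
    {f | X ≤ Z (h + ε) r f} {f | X ≤ Z h r f} (half_pos hε) (by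
      intro f g hf hfg
      have hf' : X ≤ (Z (h + ε) r f : ℝ) := hf
      refine hf'.trans ?_
      have := Z_mono (h := h + ε) (h' := h) r f g (fun j hj => by
        have := abs_lt.1 (hfg j); linarith [this.2])
      exact_mod_cast this)
  refine cmp.trans (add_le_add ?_ (ENNReal.ofReal_le_ofReal ?_))
  · rw [Measure.map_apply (by fun_prop)]
    · refine measure_mono fun ω hω => ?_
      have hω' : X ≤ (Z h r (fun j => ω (τ j)) : ℝ) := hω
      refine hω'.trans ?_
      exact_mod_cast Z_le_ncard ht hch hq hπ (by omega : r ≤ k) hinj h ω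
    · exact measurableSet_le measurable_const ((measurable_from_top (f := fun m : ℕ => (m:ℝ))).comp (measurable_Z h r))
  · have hD : ((Fintype.card (Idx n r) : ℝ) + 1) ≤ 2 * (n:ℝ) ^ r := by exact_mod_cast card_idx_le hn r
    set D : ℝ := (Fintype.card (Idx n r) : ℝ) with hDd
    have hD0 : 0 ≤ D := Nat.cast_nonneg _
    have s1 : 2 * (D * ((D + 1) * δ / (ε / 2) ^ 2)) ≤ 2 * ((2 * (n:ℝ)^r) * ((2 * (n:ℝ)^r) * δ / (ε / 2) ^ 2)) := by
      gcongr; linarith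
    refine s1.trans ?_
    have s2 : 2 * ((2 * (n:ℝ)^r) * ((2 * (n:ℝ)^r) * δ / (ε / 2) ^ 2)) = 32 / ε ^ 2 * ((n:ℝ)^(2*r) * δ) := by
      rw [pow_mul' (n:ℝ) 2 r]; field_simp; ring
    rw [s2, err]
    have hs : Real.sqrt (((n:ℝ)⁻¹)^(5*r)) = (Real.sqrt (n:ℝ)⁻¹)^(5*r) := by
      rw [Real.sqrt_eq_iff_mul_self_eq (by positivity) (by positivity), ← mul_pow, Real.mul_self_sqrt (by positivity)]
    have hnn : (n:ℝ)^(2*r) = ((Real.sqrt (n:ℝ)⁻¹)^(4*r))⁻¹ := by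
      rw [show 4*r = 2*(2*r) by ring, pow_mul (Real.sqrt _), Real.sq_sqrt (by positivity), inv_pow, inv_inv]
    have hsp : 0 < Real.sqrt (n:ℝ)⁻¹ := Real.sqrt_pos.2 (by positivity)
    gcongr
    rw [hδd, mul_add, mul_add]
    refine add_le_add (add_le_add (le_of_eq ?_) ?_) ?_
    · rw [hs, hnn, show 5*r = 4*r+r by ring, pow_add]; field_simp
    · have : (n:ℝ)^(2*r) * (2 * ((n:ℝ)⁻¹)^(5*r)) = 2 * ((n:ℝ)⁻¹)^(3*r) := by
        rw [show 5*r = 2*r+3*r by ring, pow_add, inv_pow, inv_pow]; field_simp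
      rw [this]
      have : ((n:ℝ)⁻¹)^(3*r) ≤ ((n:ℝ)⁻¹)^r := pow_le_pow_of_le_one (by positivity) (inv_le_one_of_one_le₀ (by linarith)) (by omega)
      linarith
    · have hp : (0:ℝ) < (n:ℝ)^(3*r) := by positivity
      calc (n:ℝ)^(2*r) * (20 * r / (Fintype.card V : ℝ)) ≤ (n:ℝ)^(2*r) * (20 * r / (n:ℝ)^(3*r)) := by gcongr
        _ = _ := by
          rw [show 3*r = 2*r+r by ring, pow_add, inv_pow]; field_simp

end single
end GFFP

namespace GFFP
open GFF

lemma rn_facts {b N : ℕ} (hb : 2 ≤ b) {α β : ℝ} (hc0 : 0 < c0 (b+1) α β) (hc1 : c0 (b+1) α β ≤ 1)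
    (hL : 18 ≤ c0 (b+1) α β * Real.logb b N) (hN : 1 ≤ N) :
    1 ≤ rn (b+1) α β N ∧ 6 * rn (b+1) α β N ≤ 2 * Rn (b+1) α β N ∧ (b:ℝ)^(3 * rn (b+1) α β N) ≤ N ∧
    c0 (b+1) α β / 18 * Real.logb b N < rn (b+1) α β N + 1 ∧
    (Rn (b+1) α β N : ℝ) ≤ c0 (b+1) α β / 6 * Real.logb b N := by
  have hb' : (2:ℝ) ≤ b := by exact_mod_cast hb
  have hN' : (1:ℝ) ≤ N := by exact_mod_cast hN
  have e : ((b+1 : ℕ) : ℝ) - 1 = b := by push_cast; ring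
  rw [rn, Rn, e]
  set c := c0 (b+1) α β with hc
  set L := Real.logb b N with hLd
  have hL0 : 0 ≤ L := Real.logb_nonneg (by linarith) hN'
  have f1 : 1 ≤ ⌊c/18*L⌋₊ := Nat.le_floor (by push_cast; linarith)
  have f2 : 3 * ⌊c/18*L⌋₊ ≤ ⌊c/6*L⌋₊ := by
    apply Nat.le_floor
    have := Nat.floor_le (a := c/18*L) (by positivity)
    push_cast; linarith
  rw [max_eq_right f1, max_eq_right (by omega : 1 ≤ ⌊c/6*L⌋₊)]
  refine ⟨f1, by omega, ?_, Nat.lt_floor_add_one _, Nat.floor_le (by positivity)⟩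
  have g := Nat.floor_le (a := c/18*L) (by positivity)
  have h3 : ((3 * ⌊c/18*L⌋₊ : ℕ) : ℝ) ≤ L := by
    push_cast
    have : c * L ≤ 1 * L := by gcongr
    nlinarith
  calc (b:ℝ)^(3 * ⌊c/18*L⌋₊) = (b:ℝ)^((3 * ⌊c/18*L⌋₊ : ℕ) : ℝ) := (Real.rpow_natCast _ _).symm
    _ ≤ (b:ℝ)^L := Real.rpow_le_rpow_of_exponent_le (by linarith) h3
    _ = N := Real.rpow_logb (by linarith) (by linarith) (by linarith)

lemma liminf_step {ι : ℕ → Type} [∀ n, Fintype (ι n)] (N : ℕ → ℕ) (hN : ∀ n, 1 ≤ N n)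
    (hcard : ∀ n, Fintype.card (ι n) = N n) (p : ∀ n, ι n → ℝ) (hp0 : ∀ n x, 0 ≤ p n x) (hp1 : ∀ n x, p n x ≤ 1)
    (good : ∀ n, ι n → Prop) (B : ℕ → ℝ) (hB : Tendsto B atTop (nhds 0))
    (hbad : ∀ᶠ n in atTop, ((Finset.univ.filter fun x => ¬ good n x).card : ℝ) ≤ B n * N n)
    (η : ℝ) (hη : η ≤ 1) (hg : ∀ ζ > 0, ∀ᶠ n in atTop, ∀ x, good n x → η - ζ ≤ p n x) :
    η ≤ Filter.liminf (fun n => (N n : ℝ)⁻¹ * ∑ x : ι n, p n x) atTop := by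
  have hle1 : ∀ n, (N n : ℝ)⁻¹ * ∑ x : ι n, p n x ≤ 1 := by
    intro n
    have h1 : ∑ x : ι n, p n x ≤ N n := by
      calc ∑ x : ι n, p n x ≤ ∑ x : ι n, (1:ℝ) := Finset.sum_le_sum fun x _ => hp1 n x
        _ = N n := by simp [hcard]
    have h2 : (0:ℝ) < N n := by exact_mod_cast hN n
    rw [inv_mul_le_iff₀ h2]; linarith
  refine le_of_forall_pos_le_add fun ζ hζ => ?_
  rw [← sub_le_iff_le_add]
  apply le_liminf_of_le
  · exact (isBoundedUnder_of ⟨1, hle1⟩ : IsBoundedUnder (· ≤ ·) atTop _).isCoboundedUnder_ge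
  filter_upwards [hbad, hg (ζ/2) (half_pos hζ), hB.eventually (gt_mem_nhds (half_pos hζ))] with n h1 h2 h3
  have hN0 : (0:ℝ) < N n := by exact_mod_cast hN n
  rw [le_inv_mul_iff₀ hN0]
  have key : ∑ x : ι n, ((η - ζ/2) - if good n x then 0 else 1) ≤ ∑ x : ι n, p n x := by
    refine Finset.sum_le_sum fun x _ => ?_
    split_ifs with hx
    · linarith [h2 x hx]
    · linarith [hp0 n x]
  rw [Finset.sum_sub_distrib] at key
  have e1 : ∑ x : ι n, (if good n x then (0:ℝ) else 1) = ((Finset.univ.filter fun x => ¬ good n x).card : ℝ) := by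
    rw [Finset.card_filter]; push_cast
    exact Finset.sum_congr rfl fun x _ => by by_cases hx : good n x <;> simp [hx]
  rw [e1, Finset.sum_const, Finset.card_univ, hcard, nsmul_eq_mul] at key
  nlinarith

theorem main
    (b : ℕ) (hb : 2 ≤ b)
    (V : ℕ → Type) [∀ n, Fintype (V n)]
    (G : ∀ n, SimpleGraph (V n)) (N : ℕ → ℕ) (α β : ℝ)
    (hα : 0 < α ∧ α ≤ 1) (hβ : 0 < β ∧ β ≤ 2)
    (hNmono : StrictMono N) (hNpos : ∀ n, 1 ≤ N n)
    (hcard : ∀ n, Fintype.card (V n) = N n)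
    (hconn : ∀ n, (G n).Connected)
    (hreg : ∀ n, GFF.IsReg (G n) (b+1))
    (hcyc : ∀ n (x : V n),
      GFF.adjPairs (G n) (GFF.gball (G n) x ⌊α * Real.logb b (N n : ℝ)⌋₊) ≤
        2 * (GFF.gball (G n) x ⌊α * Real.logb b (N n : ℝ)⌋₊).ncard)
    (hgap : ∀ n, GFF.SpectralGapLB (G n) (b+1) β)
    (μ : ∀ n, Measure (V n → ℝ))
    (hμ : ∀ n, GFF.IsGaussianField (μ n) (GFF.zGreen (G n) (b+1) (N n)))
    (T : Type) (Gt : SimpleGraph T) (o obar : T) (hobar : Gt.Adj o obar)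
    (htree : GFF.IsRegTree Gt (b+1))
    (μT : Measure (T → ℝ)) (hμT : GFF.IsGaussianField μT (GFF.treeGreen Gt (b+1)))
    (cov : ∀ n, V n → T → V n) (hcov : ∀ n x, GFF.IsCoverMap Gt (G n) o x (cov n x))
    (h : ℝ) (hh : h < GFF.hstar Gt o μT) :
    ∃ c : ℝ, 0 < c ∧
      (∀ ε ζ : ℝ, 0 < ε → ε < (GFF.hstar Gt o μT - h) / 2 → 0 < ζ →
        ∃ n₀ : ℕ, ∀ n ≥ n₀, ∀ x : V n,
          GFF.TxZero (G n) (GFF.gball (G n) x (2 * GFF.Rn (b+1) α β (N n))) →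
          ENNReal.ofReal (GFF.etaPlus Gt o obar μT (h + ε) - ζ) ≤
            μ n {ω | (N n : ℝ) ^ c ≤
              ((GFF.levelComp (G n) h ω x ∩
                cov n x '' GFF.spherePlus Gt o obar (GFF.rn (b+1) α β (N n))).ncard : ℝ)}) ∧
      (GFF.etaPlus Gt o obar μT h ≤
          Filter.liminf
            (fun n => (N n : ℝ)⁻¹ * ∑ x : V n,
              (μ n {ω | (N n : ℝ) ^ c ≤
                ((GFF.levelComp (G n) h ω x ∩
                  cov n x '' GFF.spherePlus Gt o obar (GFF.rn (b+1) α β (N n))).ncard : ℝ)}).toReal)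
            Filter.atTop ∧
        0 < GFF.etaPlus Gt o obar μT h) := by
  have hb' : (2:ℝ) ≤ b := by exact_mod_cast hb
  have hNtop : Tendsto (fun n => (N n : ℝ)) atTop atTop :=
    tendsto_natCast_atTop_atTop.comp hNmono.tendsto_atTop
  have hLtop : Tendsto (fun n => Real.logb b (N n)) atTop atTop :=
    (Real.tendsto_logb_atTop (by linarith)).comp hNtop
  have hβ1 : β ≤ 1 := by
    by_contra hcon
    push Not at hcon
    have : Tendsto (fun n => (β - 1) * (N n : ℝ)) atTop atTop := hNtop.const_mul_atTop (by linarith)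
    obtain ⟨n, hn⟩ := (this.eventually_gt_atTop β).exists
    obtain ⟨v, mm, S⟩ := exists_spec (by omega) (hconn n) (hreg n) (hgap n)
    haveI := (hconn n).nonempty
    have := S.beta_bound (by omega) (hreg n) hβ.1
    rw [hcard] at this
    linarith
  have hcdef : c0 (b+1) α β = α * β / b := by rw [c0]; push_cast; ring_nf
  have hc0 : 0 < c0 (b+1) α β := by
    rw [hcdef]; have := hα.1; have := hβ.1; positivity
  have hcα : c0 (b+1) α β ≤ α / 2 := by
    rw [hcdef, div_le_div_iff₀ (by linarith) (by norm_num)]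
    have h1 : α * β ≤ α * 1 := mul_le_mul_of_nonneg_left hβ1 hα.1.le
    have h2 : α * 2 ≤ α * b := mul_le_mul_of_nonneg_left hb' hα.1.le
    linarith
  have hc1 : c0 (b+1) α β ≤ 1 := by linarith [hα.2]
  have hev : ∀ᶠ n in atTop, 18 ≤ c0 (b+1) α β * Real.logb b (N n) :=
    (hLtop.const_mul_atTop hc0).eventually_ge_atTop 18
  have hrtop : Tendsto (fun n => rn (b+1) α β (N n)) atTop atTop := by
    rw [← tendsto_natCast_atTop_iff (R := ℝ)]
    have h1 : Tendsto (fun n => c0 (b+1) α β / 18 * Real.logb b (N n) - 1) atTop atTop :=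
      tendsto_atTop_add_const_right _ _ (hLtop.const_mul_atTop (by positivity))
    refine tendsto_atTop_mono' _ ?_ h1
    filter_upwards [hev] with n hn
    have := (rn_facts hb hc0 hc1 hn (hNpos n)).2.2.2.1
    linarith
  obtain ⟨δ, hδ0, hδ1, hsum, hcont⟩ := tree_summary hb htree hobar hμT hh
  set q : ℝ := Real.sqrt (Real.sqrt (1 + δ^2)) with hqd
  have hq4 : q ^ 4 = 1 + δ^2 := by
    rw [show (4:ℕ) = 2*2 by rfl, pow_mul, hqd, Real.sq_sqrt (Real.sqrt_nonneg _), Real.sq_sqrt (by positivity)]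
  have hq1 : 1 < q := by
    rw [hqd, Real.lt_sqrt zero_le_one, Real.lt_sqrt (by norm_num)]
    have : 0 < δ^2 := by positivity
    linarith
  have hq0 : 0 < q := by linarith
  have hlogb : 0 < Real.log b := Real.log_pos (by linarith)
  have hlogq : 0 < Real.log q := Real.log_pos hq1
  set c : ℝ := c0 (b+1) α β / 18 * Real.log q / Real.log b with hcd
  have hc : 0 < c := by positivity
  have part1 : ∀ ε ζ : ℝ, 0 < ε → ε < (GFF.hstar Gt o μT - h) / 2 → 0 < ζ →
        ∃ n₀ : ℕ, ∀ n ≥ n₀, ∀ x : V n,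
          GFF.TxZero (G n) (GFF.gball (G n) x (2 * GFF.Rn (b+1) α β (N n))) →
          ENNReal.ofReal (GFF.etaPlus Gt o obar μT (h + ε) - ζ) ≤
            μ n {ω | (N n : ℝ) ^ c ≤
              ((GFF.levelComp (G n) h ω x ∩
                cov n x '' GFF.spherePlus Gt o obar (GFF.rn (b+1) α β (N n))).ncard : ℝ)} := by
    intro ε ζ hε hεh hζ
    rw [← eventually_atTop]
    have hqi0 : 0 ≤ q⁻¹ := by positivity
    have hqi1 : q⁻¹ < 1 := inv_lt_one_of_one_lt₀ hq1
    have t1 := tendsto_pow_atTop_nhds_zero_of_lt_one hqi0 hqi1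
    have t2 : Tendsto (fun r : ℕ => q⁻¹ ^ r * q⁻¹ ^ r + q * q⁻¹ ^ r + err b β ε r) atTop (nhds 0) := by
      have := ((t1.mul t1).add (t1.const_mul q)).add (err_tendsto hb β ε)
      simpa only [mul_zero, add_zero] using this
    filter_upwards [hev, (t2.comp hrtop).eventually (gt_mem_nhds hζ)] with n hn hsmall x htx
    obtain ⟨r1, r2, r3, r4, r5⟩ := rn_facts hb hc0 hc1 hn (hNpos n)
    simp only [Function.comp] at hsmall
    set r := rn (b+1) α β (N n) with hr
    have hN0 : (1:ℝ) ≤ N n := by exact_mod_cast hNpos n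
    have hX : (N n : ℝ) ^ c ≤ q ^ (r+1) := by
      rw [← Real.log_le_log_iff (by positivity) (by positivity), Real.log_rpow (by linarith), Real.log_pow]
      have : c * Real.log (N n) = c0 (b+1) α β / 18 * Real.logb b (N n) * Real.log q := by
        rw [hcd, Real.logb]; field_simp
      rw [this]
      push_cast
      exact mul_le_mul_of_nonneg_right r4.le hlogq.le
    have hcardn := hcard n
    have hμn := hμ n
    rw [← hcardn] at hμn
    have hsx := single_x hb htree hobar (hconn n) (hreg n) hβ.1 (hgap n) hμn (hcov n x) htx r1 r2
      (by rw [hcardn]; exact r3) h hε ((N n : ℝ)^c)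
    have hsm := hsum (h+ε) (by linarith) (by linarith) r (q⁻¹ ^ (2*r)) ((N n : ℝ)^c) (by positivity)
      (pow_le_one₀ hqi0 hqi1.le) (by positivity)
    have e1 : 1 / (q⁻¹ ^ (2*r) * (1+δ^2)^r) = q⁻¹ ^ r * q⁻¹ ^ r := by
      rw [← hq4, ← pow_mul, show 4*r = 2*r+(r+r) by ring, pow_add, pow_add, inv_pow, inv_pow]
      field_simp
    have e2 : q⁻¹ ^ (2*r) * (N n : ℝ)^c ≤ q * q⁻¹ ^ r := by
      calc q⁻¹ ^ (2*r) * (N n : ℝ)^c ≤ q⁻¹ ^ (2*r) * q^(r+1) := by gcongr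
        _ = q * q⁻¹ ^ r := by
          rw [two_mul, pow_add, pow_succ, inv_pow]; field_simp
    rw [e1] at hsm
    haveI := (hμ n).1
    haveI := (law_isG b (sig b) (sxi b) r).prob
    have herr : 0 ≤ err b β ε r := by
      unfold err; have := hβ.1; positivity
    have hsx' := ENNReal.toReal_mono (by finiteness) hsx
    rw [ENNReal.toReal_add (by finiteness) (by finiteness), ENNReal.toReal_ofReal herr] at hsx'
    rw [ENNReal.ofReal_le_iff_le_toReal (by finiteness)]
    linarith
  have hηpos := eta_pos hb htree hobar hμT hh
  refine ⟨c, hc, part1, ?_, hηpos⟩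
  haveI : ∀ n, IsProbabilityMeasure (μ n) := fun n => (hμ n).1
  haveI := hμT.1
  set t : ℕ → ℕ := fun n => ⌊α / 24 * Real.logb b (N n)⌋₊ with ht
  have httop : Tendsto t atTop atTop :=
    tendsto_nat_floor_atTop.comp (hLtop.const_mul_atTop (by have := hα.1; positivity))
  have hbi0 : (0:ℝ) ≤ (b:ℝ)⁻¹ := by positivity
  have hbi1 : (b:ℝ)⁻¹ < 1 := inv_lt_one_of_one_lt₀ (by linarith)
  refine liminf_step N hNpos hcard (fun n x => (μ n {ω | (N n : ℝ) ^ c ≤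
                ((GFF.levelComp (G n) h ω x ∩
                  cov n x '' GFF.spherePlus Gt o obar (GFF.rn (b+1) α β (N n))).ncard : ℝ)}).toReal)
    (fun n x => ENNReal.toReal_nonneg) (fun n x => by
      have := ENNReal.toReal_mono ENNReal.one_ne_top (prob_le_one (μ := μ n) (s := {ω | (N n : ℝ) ^ c ≤
                ((GFF.levelComp (G n) h ω x ∩
                  cov n x '' GFF.spherePlus Gt o obar (GFF.rn (b+1) α β (N n))).ncard : ℝ)}))
      simpa using this)
    (fun n x => TxZero (G n) (gball (G n) x (2 * Rn (b+1) α β (N n))))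
    (fun n => (b:ℝ)⁻¹ ^ t n) ((tendsto_pow_atTop_nhds_zero_of_lt_one hbi0 hbi1).comp httop) ?_ _ ?_ ?_
  · filter_upwards [hev] with n hn
    obtain ⟨r1, r2, r3, r4, r5⟩ := rn_facts hb hc0 hc1 hn (hNpos n)
    have hL0 : 0 ≤ Real.logb b (N n) := Real.logb_nonneg (by linarith) (by exact_mod_cast hNpos n)
    have hbb := bad_bound (hconn n) (hreg n) (k := 2 * Rn (b+1) α β (N n)) (t := t n)
      (ρ := ⌊α * Real.logb b (N n : ℝ)⌋₊) (by
        apply Nat.le_floor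
        have h1 : (t n : ℝ) ≤ α / 24 * Real.logb b (N n) :=
          Nat.floor_le (by have := hα.1; positivity)
        have h2 : c0 (b+1) α β * Real.logb b (N n) ≤ α / 2 * Real.logb b (N n) := by gcongr
        have h3 : 0 ≤ α * Real.logb b (N n) := mul_nonneg hα.1.le hL0
        push_cast
        linarith) (hcyc n)
    rw [hcard] at hbb
    have hbb' : (b:ℝ)^(t n) * ((Finset.univ.filter fun x => ¬ TxZero (G n) (gball (G n) x (2 * Rn (b+1) α β (N n)))).card : ℝ) ≤ N n := by
      exact_mod_cast hbb
    rw [inv_pow, le_inv_mul_iff₀ (by positivity)]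
    exact hbb'
  · have := ENNReal.toReal_mono ENNReal.one_ne_top (prob_le_one (μ := μT) (s := {ω | (levelComp Gt h ω o ∩ treePlus Gt o obar).Infinite}))
    simpa [etaPlus] using this
  · intro ζ hζ
    have hlt : h < h + (hstar Gt o μT - h) / 2 := by linarith
    obtain ⟨h', hh'1, hh'2⟩ := ((hcont (ζ/2) (half_pos hζ)).and (Ioo_mem_nhdsGT hlt)).exists
    obtain ⟨n₀, hn₀⟩ := part1 (h' - h) (ζ/2) (by linarith [hh'2.1]) (by linarith [hh'2.2]) (half_pos hζ)
    filter_upwards [eventually_ge_atTop n₀] with n hn x hx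
    have := hn₀ n hn x hx
    rw [ENNReal.ofReal_le_iff_le_toReal (by finiteness), add_sub_cancel] at this
    linarith

end GFFP
/-- lower bound on the probability of the mesoscopic event
`A_x^{G_n,h,c_h}` in the supercritical phase, and the resulting first-moment bound. -/
theorem supercritical_event_probability_lower_bound
    (d : ℕ) (hd : 3 ≤ d)
    (V : ℕ → Type) [∀ n, Fintype (V n)]
    (G : ∀ n, SimpleGraph (V n)) (N : ℕ → ℕ) (α β : ℝ)
    (hα : 0 < α ∧ α ≤ 1) (hβ : 0 < β ∧ β ≤ 2)
    (hNmono : StrictMono N) (hNpos : ∀ n, 1 ≤ N n)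
    (hcard : ∀ n, Nat.card (V n) = N n)
    (hconn : ∀ n, (G n).Connected)
    (hreg : ∀ n, GFF.IsReg (G n) d)
    (hcyc : ∀ n (x : V n),
      GFF.adjPairs (G n) (GFF.gball (G n) x ⌊α * Real.logb ((d : ℝ) - 1) (N n : ℝ)⌋₊) ≤
        2 * (GFF.gball (G n) x ⌊α * Real.logb ((d : ℝ) - 1) (N n : ℝ)⌋₊).ncard)
    (hgap : ∀ n, GFF.SpectralGapLB (G n) d β)
    (μ : ∀ n, Measure (V n → ℝ))
    (hμ : ∀ n, GFF.IsGaussianField (μ n) (GFF.zGreen (G n) d (N n)))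
    (T : Type) (Gt : SimpleGraph T) (o obar : T) (hobar : Gt.Adj o obar)
    (htree : GFF.IsRegTree Gt d)
    (μT : Measure (T → ℝ)) (hμT : GFF.IsGaussianField μT (GFF.treeGreen Gt d))
    (cov : ∀ n, V n → T → V n) (hcov : ∀ n x, GFF.IsCoverMap Gt (G n) o x (cov n x))
    (h : ℝ) (hh : h < GFF.hstar Gt o μT) :
    ∃ c : ℝ, 0 < c ∧
      (∀ ε ζ : ℝ, 0 < ε → ε < (GFF.hstar Gt o μT - h) / 2 → 0 < ζ →
        ∃ n₀ : ℕ, ∀ n ≥ n₀, ∀ x : V n,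
          GFF.TxZero (G n) (GFF.gball (G n) x (2 * GFF.Rn d α β (N n))) →
          ENNReal.ofReal (GFF.etaPlus Gt o obar μT (h + ε) - ζ) ≤
            μ n {ω | (N n : ℝ) ^ c ≤
              ((GFF.levelComp (G n) h ω x ∩
                cov n x '' GFF.spherePlus Gt o obar (GFF.rn d α β (N n))).ncard : ℝ)}) ∧
      (GFF.etaPlus Gt o obar μT h ≤
          Filter.liminf
            (fun n => (N n : ℝ)⁻¹ * ∑ x : V n,
              (μ n {ω | (N n : ℝ) ^ c ≤
                ((GFF.levelComp (G n) h ω x ∩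
                  cov n x '' GFF.spherePlus Gt o obar (GFF.rn d α β (N n))).ncard : ℝ)}).toReal)
            Filter.atTop ∧
        0 < GFF.etaPlus Gt o obar μT h) := by
  obtain ⟨b, rfl⟩ : ∃ b, d = b + 1 := ⟨d - 1, by omega⟩
  have e : ((b + 1 : ℕ) : ℝ) - 1 = b := by push_cast; ring
  rw [e] at hcyc
  exact GFFP.main b (by omega) V G N α β hα hβ hNmono hNpos
    (fun n => by rw [← hcard n, Nat.card_eq_fintype_card]) hconn hreg hcyc hgap μ hμ T Gt o obar hobar
    htree μT hμT cov hcov h hh
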